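/- Let 1 ≤ ℓ < k be integers, set t₄ = ⌈(3k−ℓ−2)/(k−ℓ)⌉ and t₅ = t₄(k−ℓ), and suppose 0 < ε ≤ ℓ/(3t₅) and 1/n ≪ β ≪ η, α, 1/k, 1/t₅. Let V be a set of n vertices and let V′, U ⊆ V with |U| ≤ ηn/3. Let H be a k-graph on V such that deg_H(v) ≥ α·n^{k−1} for all v ∈ V′, and for every ℓ-set S ⊆ V either deg_H(S) = 0 or deg_H(S) ≥ η·n^{k−ℓ}. Suppose G = 𝔾^{(k)}(n,p) on V with p ≥ n^{−(k−ℓ)−ε} if ℓ ≥ 2 and p ≥ C·n^{−(k−1)} if ℓ = 1 (for a suitable constant C with 1/n ≪ 1/C). Then H ∪ G a.a.s. contains a family 𝒜 of at most βn pairwise vertex-disjoint copies of the ℓ-path P_{t₅−1}, each with both ℓ-ends in ∂_ℓ H, such that V(𝒜) ⊆ V ∖ U and every (k−ℓ)-set W ⊆ V′ has at least β³n W-absorbers in 𝒜. -/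

import Mathlib

open Finset
open scoped Classical

/-- All `k`-subsets of `Fin n` (the possible edges of a `k`-graph on `n` vertices). -/
def kSets (n k : ℕ) : Finset (Finset (Fin n)) := Finset.univ.powersetCard k

/-- The probability that the binomial random `k`-graph `G^{(k)}(n,p)` (each `k`-set is an
edge independently with probability `p`) has an edge set satisfying the property `A`. -/
noncomputable def gProb (n k : ℕ) (p : ℝ) (A : Finset (Finset (Fin n)) → Prop) : ℝ :=
  ∑ E ∈ (kSets n k).powerset.filter (fun E => A E),
    p ^ E.card * (1 - p) ^ ((kSets n k).card - E.card)

/-- Expectation of a random variable `f` of the random `k`-graph `G^{(k)}(n,p)`. -/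
noncomputable def gExpect (n k : ℕ) (p : ℝ) (f : Finset (Finset (Fin n)) → ℝ) : ℝ :=
  ∑ E ∈ (kSets n k).powerset,
    p ^ E.card * (1 - p) ^ ((kSets n k).card - E.card) * f E

/-- The degree of a vertex set `S` in the `k`-graph with edge set `E`: the number of edges
containing `S` (equivalently, the number of `(k-|S|)`-sets `T` with `S ∪ T ∈ E`). -/
def degOf {n : ℕ} (E : Finset (Finset (Fin n))) (S : Finset (Fin n)) : ℕ :=
  (E.filter (fun e => S ⊆ e)).card

/-- The minimum vertex degree (minimum 1-degree) of a `k`-graph. -/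
noncomputable def minVertexDeg {n : ℕ} (E : Finset (Finset (Fin n))) : ℕ :=
  sInf {d : ℕ | ∃ v : Fin n, degOf E {v} = d}

/-- The index set of the `i`-th edge of the path `P_{a,x}`:
`{x + i*d, x + i*d + 1, …, x + i*d + k - 1}` (here `d = k - ℓ`). -/
def edgeIdx (k d x i : ℕ) : Finset ℕ := (Finset.range k).image (fun j => x + i * d + j)

/-- The ordered `b`-tuple `w` spans a labeled copy of `P_{a,x}` (the `k`-uniform `ℓ`-path
with `a` edges, preceded and followed by `x` isolated vertices) in the edge set `E`. -/
def SpansPax {n : ℕ} (k ℓ a x : ℕ) (E : Finset (Finset (Fin n))) {b : ℕ}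
    (w : Fin b → Fin n) : Prop :=
  Function.Injective w ∧
  ∀ i < a,
    ((Finset.univ.filter (fun m : Fin b => (m : ℕ) ∈ edgeIdx k (k - ℓ) x i)).image w) ∈ E

/-- The ordered tuple `w` spans a labeled copy of the `ℓ`-path `P_a` of length `a` in `E`. -/
def SpansPath {n : ℕ} (k ℓ a : ℕ) (E : Finset (Finset (Fin n))) {b : ℕ}
    (w : Fin b → Fin n) : Prop :=
  SpansPax k ℓ a 0 E w

/-- The first `ℓ`-end of the ordered tuple `w` (its first `ℓ` vertices, as a set). -/
def firstEnd {n b : ℕ} (ℓ : ℕ) (w : Fin b → Fin n) : Finset (Fin n) :=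
  (Finset.univ.filter (fun m : Fin b => (m : ℕ) < ℓ)).image w

/-- The last `ℓ`-end of the ordered tuple `w` (its last `ℓ` vertices, as a set). -/
def lastEnd {n b : ℕ} (ℓ : ℕ) (w : Fin b → Fin n) : Finset (Fin n) :=
  (Finset.univ.filter (fun m : Fin b => b - ℓ ≤ (m : ℕ))).image w

/-- The `k`-graph with edge set `E` on vertex set `Fin n` contains a Hamiltonian `ℓ`-cycle:
there is a cyclic ordering of all `n` vertices such that each of the `n/(k-ℓ)` edges
consists of `k` consecutive vertices, consecutive edges overlapping in `ℓ` vertices. -/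
def IsHamCycle (n k ℓ : ℕ) (E : Finset (Finset (Fin n))) : Prop :=
  ∃ f : ZMod n → Fin n, Function.Bijective f ∧
    ∀ i < n / (k - ℓ),
      ((Finset.range k).image (fun j => f (((i * (k - ℓ) + j : ℕ) : ZMod n)))) ∈ E

/-- The `ℓ`-shadow of a `k`-graph: all `ℓ`-sets contained in some edge. -/
def shadowL {n : ℕ} (ℓ : ℕ) (E : Finset (Finset (Fin n))) : Finset (Finset (Fin n)) :=
  (Finset.univ.powersetCard ℓ).filter (fun S => ∃ e ∈ E, S ⊆ e)

/-- The list `v` of vertices spans a copy of the `ℓ`-path `P_a` of length `a` in `E`. -/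
def ListSpans {n : ℕ} (k ℓ a : ℕ) (E : Finset (Finset (Fin n))) (v : List (Fin n)) : Prop :=
  v.Nodup ∧ v.length = a * (k - ℓ) + ℓ ∧
    ∀ i < a, ((v.drop (i * (k - ℓ))).take k).toFinset ∈ E

/-- `Φ_F(n,p) = min { n^{v_H} p^{e_H} : H ⊆ F, e_H > 0 }`, where the subgraph `H` is given
by a nonempty edge set `E' ⊆ F` together with a vertex set `W` containing all its edges. -/
noncomputable def Phi {V : Type*} (n : ℕ) (p : ℝ) (F : Finset (Finset V)) : ℝ :=
  sInf {r : ℝ | ∃ (W : Finset V) (E' : Finset (Finset V)),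
    E' ⊆ F ∧ E'.Nonempty ∧ (∀ e ∈ E', e ⊆ W) ∧ r = (n : ℝ) ^ W.card * p ^ E'.card}

/-- The ordered tuple `w` spans a labeled copy of the `k`-graph `F` (given by its edge set
`Fe` on vertex set `Fin s`) in the edge set `E`. -/
def SpansCopy {n s : ℕ} (Fe : Finset (Finset (Fin s))) (E : Finset (Finset (Fin n)))
    (w : Fin s → Fin n) : Prop :=
  ∀ e ∈ Fe, e.image w ∈ E

/-- Concatenation of three ordered tuples. -/
def concat3 {n p q r : ℕ} (A : Fin p → Fin n) (C : Fin q → Fin n) (B : Fin r → Fin n)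
    (m : Fin (p + q + r)) : Fin n :=
  if h : (m : ℕ) < p then A ⟨(m : ℕ), h⟩
  else if h2 : (m : ℕ) < p + q then C ⟨(m : ℕ) - p, by omega⟩
  else B ⟨(m : ℕ) - (p + q), by have := m.isLt; omega⟩

/-- `w`, spanning an `ℓ`-path of length `a`, is a `W`-absorber in `E`: it avoids `W`, and
its vertex set together with `W` spans an `ℓ`-path (of length `a+1` when `|W| = k - ℓ`)
with the same two `ℓ`-ends. -/
def IsAbsorber {n : ℕ} (k ℓ a : ℕ) (E : Finset (Finset (Fin n))) {b : ℕ}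
    (w : Fin b → Fin n) (W : Finset (Fin n)) : Prop :=
  (∀ m, w m ∉ W) ∧
  ∃ w' : Fin (b + W.card) → Fin n, SpansPath k ℓ (a + 1) E w' ∧
    Finset.image w' Finset.univ = Finset.image w Finset.univ ∪ W ∧
    firstEnd ℓ w' = firstEnd ℓ w ∧ lastEnd ℓ w' = lastEnd ℓ w

/-!
For a `(k - ℓ)`-set `W`, cut an `ℓ`-path into `k - ℓ` blocks. In each block the vertex at the pivot
position is exchanged for a vertex of `W`, and the exchanged vertices are reinserted in the last
block; this turns the path into one that has also absorbed `W`. The edges at the beginning of a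
block, with the vertex of `W` in place, are found in `H`; the random `k`-graph provides the same
edges with the original pivot, the edges that link consecutive blocks and those at the gap where the
exchanged vertices are reinserted. By the degree conditions a positive proportion of all tuples can
serve a given `W ⊆ V'` once the random edges are present.

A set of `j ≥ 1` of the random edges covers at least `j (k - ℓ) + ℓ` vertices, so that
`n ^ v * p ^ e ≥ C n` for every subgraph of the random part, with `v` vertices and `e` edges.
Janson's inequality and a union bound then show that every dense family of candidates which avoids
a small set contains an actual path. Selecting paths greedily in groups of logarithmic size, and
halving a weight on the at most `n ^ (k - ℓ)` sets `W` with each group, serves all `W` at once.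
-/

section RandomSubset

variable {α ι : Type*}

/-- The expectation, as a linear functional, over the random subset of `X` that contains each
element independently with probability `p`. -/
noncomputable def randExpect (X : Finset α) (p : ℝ) : (Finset α → ℝ) →ₗ[ℝ] ℝ :=
  ∑ E ∈ X.powerset, (p ^ #E * (1 - p) ^ (#X - #E)) • LinearMap.proj E

lemma randExpect_apply (X : Finset α) (p : ℝ) (f : Finset α → ℝ) :
    randExpect X p f = ∑ E ∈ X.powerset, p ^ #E * (1 - p) ^ (#X - #E) * f E := by
  simp [randExpect]

lemma randExpect_mono {X : Finset α} {p : ℝ} (hp0 : 0 ≤ p) (hp1 : p ≤ 1) {f g : Finset α → ℝ}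
    (hfg : ∀ E ⊆ X, f E ≤ g E) : randExpect X p f ≤ randExpect X p g := by
  have : 0 ≤ 1 - p := sub_nonneg.2 hp1
  rw [randExpect_apply, randExpect_apply]
  gcongr with E hE
  exact hfg E (mem_powerset.1 hE)

lemma randExpect_const (X : Finset α) (p c : ℝ) : randExpect X p (fun _ => c) = c := by
  rw [randExpect_apply, ← Finset.sum_mul, Finset.sum_pow_mul_eq_add_pow]
  simp

lemma exists_le_of_le_randExpect {X : Finset α} {p c : ℝ} (hp0 : 0 ≤ p) (hp1 : p ≤ 1)
    {f : Finset α → ℝ} (hc : c ≤ randExpect X p f) : ∃ E ⊆ X, c ≤ f E := by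
  obtain ⟨E, hE, hmax⟩ := X.powerset.exists_max_image f (powerset_nonempty X)
  refine ⟨E, mem_powerset.1 hE, hc.trans ?_⟩
  rw [← randExpect_const X p (f E)]
  exact randExpect_mono hp0 hp1 fun F hF => hmax F (mem_powerset.2 hF)

variable [DecidableEq α]

lemma randExpect_insert {X : Finset α} {a : α} (ha : a ∉ X) (p : ℝ) (f : Finset α → ℝ) :
    randExpect (insert a X) p f =
      (1 - p) * randExpect X p f + p * randExpect X p (fun E => f (insert a E)) := by
  simp only [randExpect_apply, sum_powerset_insert ha, mul_sum]
  congr 1 <;> refine sum_congr rfl fun E hE => ?_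
  · have hEX := card_le_card (mem_powerset.1 hE)
    rw [card_insert_of_notMem ha, Nat.succ_sub hEX, pow_succ]
    ring
  · rw [card_insert_of_notMem ha,
      card_insert_of_notMem fun h => ha (mem_powerset.1 hE h), Nat.add_sub_add_right, pow_succ]
    ring

lemma randExpect_ite_mem {X : Finset α} {a : α} (ha : a ∈ X) (p : ℝ) (f : Finset α → ℝ) :
    randExpect X p (fun E => if a ∈ E then f E else 0) =
      p * randExpect X p (fun E => f (insert a E)) := by
  have hX : insert a (X.erase a) = X := insert_erase ha
  have hzero : randExpect (X.erase a) p (fun E => if a ∈ E then f E else 0) = 0 := by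
    rw [randExpect_apply]
    refine sum_eq_zero fun E hE => ?_
    rw [if_neg fun h => notMem_erase a X (mem_powerset.1 hE h), mul_zero]
  rw [← hX, randExpect_insert (notMem_erase a X), randExpect_insert (notMem_erase a X), hzero]
  simp only [mem_insert_self, if_true, insert_idem]
  ring

lemma randExpect_ite_subset {X R : Finset α} (hR : R ⊆ X) (p : ℝ) (f : Finset α → ℝ) :
    randExpect X p (fun E => if R ⊆ E then f E else 0) =
      p ^ #R * randExpect X p (fun E => f (E ∪ R)) := by
  induction R using Finset.induction_on generalizing f with
  | empty => simp
  | insert a R ha ih =>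
    rw [insert_subset_iff] at hR
    have hsplit : (fun E => if insert a R ⊆ E then f E else 0) =
        fun E => if a ∈ E then (if R ⊆ E then f E else 0) else 0 := by
      funext E
      simp only [insert_subset_iff, ite_and]
    simp only [hsplit, randExpect_ite_mem hR.1, subset_insert_iff_of_notMem ha,
      ih hR.2 fun E => f (insert a E), card_insert_of_notMem ha, union_insert, pow_succ]
    ring

lemma randExpect_ite_subset_le {X R : Finset α} (hR : R ⊆ X) {p : ℝ} (hp0 : 0 ≤ p) (hp1 : p ≤ 1)
    {f : Finset α → ℝ} (hf : Antitone f) :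
    randExpect X p (fun E => if R ⊆ E then f E else 0) ≤ p ^ #R * randExpect X p f := by
  rw [randExpect_ite_subset hR]
  gcongr
  exact randExpect_mono hp0 hp1 fun E _ => hf subset_union_left

lemma randExpect_sum_mem (S : Finset ι) (t : ℝ) (a : ι → ℝ) :
    randExpect S t (fun F => ∑ i ∈ F, a i) = t * ∑ i ∈ S, a i := by
  classical
  calc randExpect S t (fun F => ∑ i ∈ F, a i)
      = randExpect S t (∑ i ∈ S, fun F => if {i} ⊆ F then a i else 0) := by
        simp only [randExpect_apply]
        refine sum_congr rfl fun F hF => ?_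
        simp only [Finset.sum_apply, singleton_subset_iff, sum_ite_mem,
          inter_eq_right.2 (mem_powerset.1 hF)]
    _ = t * ∑ i ∈ S, a i := by
        rw [map_sum, mul_sum]
        refine sum_congr rfl fun i hi => ?_
        rw [randExpect_ite_subset (singleton_subset_iff.2 hi), randExpect_const]
        simp

lemma randExpect_sum_offDiag (S : Finset ι) (t : ℝ) (a : ι × ι → ℝ) :
    randExpect S t (fun F => ∑ x ∈ F.offDiag, a x) = t ^ 2 * ∑ x ∈ S.offDiag, a x := by
  classical
  calc randExpect S t (fun F => ∑ x ∈ F.offDiag, a x)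
      = randExpect S t (∑ x ∈ S.offDiag, fun F => if {x.1, x.2} ⊆ F then a x else 0) := by
        simp only [randExpect_apply]
        refine sum_congr rfl fun F hF => ?_
        have hFS : S.offDiag.filter (fun x => {x.1, x.2} ⊆ F) = F.offDiag := by
          ext x
          have := fun i (hi : i ∈ F) => mem_powerset.1 hF hi
          simp only [mem_filter, mem_offDiag, insert_subset_iff, singleton_subset_iff]
          tauto
        rw [Finset.sum_apply, ← sum_filter, hFS]
    _ = t ^ 2 * ∑ x ∈ S.offDiag, a x := by
        rw [map_sum, mul_sum]
        refine sum_congr rfl fun x hx => ?_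
        obtain ⟨hx1, hx2, hne⟩ := mem_offDiag.1 hx
        rw [randExpect_ite_subset (insert_subset_iff.2 ⟨hx1, singleton_subset_iff.2 hx2⟩),
          randExpect_const, card_pair hne]

end RandomSubset

section Janson

variable {α ι : Type*} [DecidableEq α] (R : ι → Finset α)

/-- The indicator, as a function of `E`, of the event that `E` contains none of the sets `R i`
with `i ∈ S`. -/
noncomputable def avoidInd (S : Finset ι) (E : Finset α) : ℝ :=
  if ∀ i ∈ S, ¬ R i ⊆ E then 1 else 0

lemma avoidInd_nonneg (S : Finset ι) (E : Finset α) : 0 ≤ avoidInd R S E := by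
  unfold avoidInd
  split_ifs <;> norm_num

lemma avoidInd_eq_one {S : Finset ι} {E : Finset α} (h : ∀ i ∈ S, ¬ R i ⊆ E) :
    avoidInd R S E = 1 :=
  if_pos h

lemma avoidInd_eq_zero {S : Finset ι} {E : Finset α} {i : ι} (hi : i ∈ S) (hE : R i ⊆ E) :
    avoidInd R S E = 0 :=
  if_neg fun h => h i hi hE

lemma avoidInd_antitone_left {S S' : Finset ι} (h : S ⊆ S') (E : Finset α) :
    avoidInd R S' E ≤ avoidInd R S E := by
  by_cases hE : ∀ i ∈ S, ¬ R i ⊆ E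
  · rw [avoidInd_eq_one R hE]
    unfold avoidInd
    split_ifs <;> norm_num
  · obtain ⟨i, hi, hiE⟩ : ∃ i ∈ S, R i ⊆ E := by simpa using hE
    rw [avoidInd_eq_zero R hi hiE, avoidInd_eq_zero R (h hi) hiE]

lemma avoidInd_antitone (S : Finset ι) : Antitone (avoidInd R S) := by
  intro E E' hEE'
  by_cases hE : ∀ i ∈ S, ¬ R i ⊆ E
  · rw [avoidInd_eq_one R hE]
    unfold avoidInd
    split_ifs <;> norm_num
  · obtain ⟨i, hi, hiE⟩ : ∃ i ∈ S, R i ⊆ E := by simpa using hE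
    rw [avoidInd_eq_zero R hi hiE, avoidInd_eq_zero R hi (hiE.trans hEE')]

/-- Janson's correlation sum `Δ` over the ordered pairs of distinct dependent members of the
family `R`. -/
noncomputable def overlapSum (p : ℝ) (S : Finset ι) : ℝ :=
  ∑ x ∈ S.offDiag, if Disjoint (R x.1) (R x.2) then 0 else p ^ #(R x.1 ∪ R x.2)

variable {R}

lemma overlapSum_insert_ge [DecidableEq ι] {p : ℝ} (hp0 : 0 ≤ p) {S : Finset ι} {m : ι}
    (hm : m ∉ S) :
    overlapSum R p S + ∑ j ∈ S with ¬ Disjoint (R m) (R j), p ^ #(R m ∪ R j) ≤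
      overlapSum R p (insert m S) := by
  have hdisj : Disjoint S.offDiag ({m} ×ˢ S) :=
    disjoint_left.2 fun x hx hx' => hm <|
      mem_singleton.1 (mem_product.1 hx').1 ▸ (mem_offDiag.1 hx).1
  calc overlapSum R p S + ∑ j ∈ S with ¬ Disjoint (R m) (R j), p ^ #(R m ∪ R j)
      = ∑ x ∈ S.offDiag ∪ {m} ×ˢ S,
          if Disjoint (R x.1) (R x.2) then 0 else p ^ #(R x.1 ∪ R x.2) := by
        rw [sum_union hdisj, sum_product, sum_singleton, sum_filter, overlapSum]
        simp only [ite_not]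
    _ ≤ overlapSum R p (insert m S) := by
        rw [overlapSum, offDiag_insert hm]
        refine sum_le_sum_of_subset_of_nonneg subset_union_left fun x _ _ => ?_
        split_ifs <;> positivity

/-- Conditionally on `R m ⊆ E`, only the members of the family meeting `R m` can spoil the
independence of `avoidInd R {m}` and `avoidInd R S`. -/
lemma avoidInd_insert_le [DecidableEq ι] (S : Finset ι) (m : ι) (E : Finset α) :
    let S₀ := S.filter fun j => Disjoint (R m) (R j)
    avoidInd R (insert m S) E ≤ avoidInd R S E -
      ((if R m ⊆ E then avoidInd R S₀ E else 0) -
        ∑ j ∈ S with ¬ Disjoint (R m) (R j), if R m ∪ R j ⊆ E then avoidInd R S₀ E else 0) := by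
  intro S₀
  have hterm : ∀ j, 0 ≤ if R m ∪ R j ⊆ E then avoidInd R S₀ E else 0 := fun j => by
    split_ifs
    exacts [avoidInd_nonneg R S₀ E, le_rfl]
  have hsum := sum_nonneg fun j (_ : j ∈ S.filter fun j => ¬ Disjoint (R m) (R j)) => hterm j
  by_cases hm : R m ⊆ E
  · rw [avoidInd_eq_zero R (mem_insert_self m S) hm, if_pos hm]
    by_cases hS : ∀ i ∈ S, ¬ R i ⊆ E
    · have hS₀ := avoidInd_eq_one R (S := S₀) fun i hi => hS i (mem_filter.1 hi).1
      linarith [avoidInd_eq_one R hS]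
    obtain ⟨i, hi, hiE⟩ : ∃ i ∈ S, R i ⊆ E := by simpa using hS
    rw [avoidInd_eq_zero R hi hiE]
    by_cases hdisj : Disjoint (R m) (R i)
    · rw [avoidInd_eq_zero R (S := S₀) (mem_filter.2 ⟨hi, hdisj⟩) hiE]
      simp
    · have hle := single_le_sum (fun j _ => hterm j)
        (mem_filter (p := fun j => ¬ Disjoint (R m) (R j)).2 ⟨hi, hdisj⟩)
      rw [if_pos (union_subset hm hiE)] at hle
      linarith
  · rw [if_neg hm]
    linarith [avoidInd_antitone_left R (subset_insert m S) E]

lemma randExpect_ite_subset_avoidInd {X D : Finset α} (hD : D ⊆ X) (p : ℝ) {S : Finset ι}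
    (hS : ∀ i ∈ S, Disjoint D (R i)) :
    randExpect X p (fun E => if D ⊆ E then avoidInd R S E else 0) =
      p ^ #D * randExpect X p (avoidInd R S) := by
  rw [randExpect_ite_subset hD]
  congr 2
  funext E
  unfold avoidInd
  congr 1
  refine propext <| forall₂_congr fun i hi => not_congr ?_
  exact ⟨fun h => (hS i hi).symm.left_le_of_le_sup_right h, fun h => h.trans subset_union_left⟩

lemma randExpect_avoidInd_insert_le [DecidableEq ι] {X : Finset α} {p : ℝ} (hp0 : 0 ≤ p)
    (hp1 : p ≤ 1) {S : Finset ι} {m : ι} (hm : R m ⊆ X) (hS : ∀ i ∈ S, R i ⊆ X) :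
    randExpect X p (avoidInd R (insert m S)) ≤ randExpect X p (avoidInd R S) *
      Real.exp (-(p ^ #(R m) - ∑ j ∈ S with ¬ Disjoint (R m) (R j), p ^ #(R m ∪ R j))) := by
  set S₀ := S.filter fun j => Disjoint (R m) (R j)
  set S₁ := S.filter fun j => ¬ Disjoint (R m) (R j)
  set σ := ∑ j ∈ S₁, p ^ #(R m ∪ R j)
  set q := randExpect X p (avoidInd R S)
  set q₀ := randExpect X p (avoidInd R S₀)
  have hq : 0 ≤ q := by
    rw [← map_zero (randExpect X p)]
    exact randExpect_mono hp0 hp1 fun E _ => avoidInd_nonneg R S E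
  have hqq₀ : q ≤ q₀ :=
    randExpect_mono hp0 hp1 fun E _ => avoidInd_antitone_left R (filter_subset _ _) E
  have hindep : randExpect X p (fun E => if R m ⊆ E then avoidInd R S₀ E else 0) =
      p ^ #(R m) * q₀ :=
    randExpect_ite_subset_avoidInd hm p fun i hi => (mem_filter.1 hi).2
  have hoverlap : randExpect X p
      (∑ j ∈ S₁, fun E => if R m ∪ R j ⊆ E then avoidInd R S₀ E else 0) ≤ σ * q₀ := by
    rw [map_sum, sum_mul]
    refine sum_le_sum fun j hj => ?_
    exact randExpect_ite_subset_le (union_subset hm (hS j (mem_filter.1 hj).1)) hp0 hp1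
      (avoidInd_antitone R S₀)
  have hstep : randExpect X p (avoidInd R (insert m S)) ≤ q - (p ^ #(R m) * q₀ - σ * q₀) := by
    refine (randExpect_mono hp0 hp1 (g := avoidInd R S -
      ((fun E => if R m ⊆ E then avoidInd R S₀ E else 0) -
        ∑ j ∈ S₁, fun E => if R m ∪ R j ⊆ E then avoidInd R S₀ E else 0)) fun E _ => ?_).trans ?_
    · simpa only [Pi.sub_apply, Finset.sum_apply] using avoidInd_insert_le S m E
    · rw [map_sub, map_sub, hindep]
      linarith
  have hexp := Real.add_one_le_exp (-(p ^ #(R m) - σ))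
  rcases le_total σ (p ^ #(R m)) with hσ | hσ
  · nlinarith [mul_le_mul_of_nonneg_left hqq₀ (sub_nonneg.2 hσ)]
  · have hmono : randExpect X p (avoidInd R (insert m S)) ≤ q :=
      randExpect_mono hp0 hp1 fun E _ => avoidInd_antitone_left R (subset_insert m S) E
    nlinarith

/-- Janson's inequality, up to the constant in front of `Δ`. -/
lemma randExpect_avoidInd_le_exp {X : Finset α} {p : ℝ} (hp0 : 0 ≤ p) (hp1 : p ≤ 1)
    {S : Finset ι} (hS : ∀ i ∈ S, R i ⊆ X) :
    randExpect X p (avoidInd R S) ≤ Real.exp (-(∑ i ∈ S, p ^ #(R i)) + overlapSum R p S) := by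
  classical
  induction S using Finset.induction_on with
  | empty =>
    have hone : avoidInd R ∅ = fun _ => 1 := by
      funext E
      exact avoidInd_eq_one R (by simp)
    rw [hone, randExpect_const]
    simp [overlapSum]
  | insert m S hm ih =>
    rw [forall_mem_insert] at hS
    refine (randExpect_avoidInd_insert_le hp0 hp1 hS.1 hS.2).trans ?_
    refine (mul_le_mul_of_nonneg_right (ih hS.2) (Real.exp_pos _).le).trans ?_
    rw [← Real.exp_add, Real.exp_le_exp, sum_insert hm]
    linarith [overlapSum_insert_ge (R := R) hp0 hm]

/-- The extended Janson inequality, obtained by applying the basic one to a random subfamily. -/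
lemma randExpect_avoidInd_le_exp_sq {X : Finset α} {p : ℝ} (hp0 : 0 ≤ p) (hp1 : p ≤ 1)
    {S : Finset ι} (hS : ∀ i ∈ S, R i ⊆ X) {D : ℝ} (hD : 0 < D) (hΔ : overlapSum R p S ≤ D)
    (hμ : ∑ i ∈ S, p ^ #(R i) ≤ 2 * D) :
    randExpect X p (avoidInd R S) ≤ Real.exp (-((∑ i ∈ S, p ^ #(R i)) ^ 2 / (4 * D))) := by
  set μ := ∑ i ∈ S, p ^ #(R i)
  set t := μ / (2 * D) with ht
  have : 0 ≤ μ := sum_nonneg fun i _ => by positivity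
  have hmean : μ ^ 2 / (4 * D) ≤
      randExpect S t ((fun F => ∑ i ∈ F, p ^ #(R i)) - overlapSum R p) := by
    have hpairs : randExpect S t (overlapSum R p) = t ^ 2 * overlapSum R p S :=
      randExpect_sum_offDiag S t _
    rw [map_sub, randExpect_sum_mem, hpairs]
    calc μ ^ 2 / (4 * D) = t * μ - t ^ 2 * D := by rw [ht]; field_simp; ring
      _ ≤ t * μ - t ^ 2 * overlapSum R p S := by gcongr
  obtain ⟨F, hFS, hF⟩ := exists_le_of_le_randExpect (by positivity)
    ((div_le_one (by positivity)).2 hμ) hmean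
  rw [Pi.sub_apply] at hF
  calc randExpect X p (avoidInd R S) ≤ randExpect X p (avoidInd R F) :=
        randExpect_mono hp0 hp1 fun E _ => avoidInd_antitone_left R hFS E
    _ ≤ Real.exp (-(∑ i ∈ F, p ^ #(R i)) + overlapSum R p F) :=
        randExpect_avoidInd_le_exp hp0 hp1 fun i hi => hS i (hFS hi)
    _ ≤ Real.exp (-(μ ^ 2 / (4 * D))) := Real.exp_le_exp.2 (by linarith)

end Janson

lemma card_filter_forall_mem {β V : Type*} [DecidableEq β] [Fintype β] [Fintype V]
    (Y : Finset β) (A : Finset V) [DecidablePred fun w : β → V => ∀ y ∈ Y, w y ∈ A] :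
    #{w : β → V | ∀ y ∈ Y, w y ∈ A} =
      #A ^ #Y * Fintype.card V ^ (Fintype.card β - #Y) := by
  have hpi : ({w : β → V | ∀ y ∈ Y, w y ∈ A} : Finset (β → V)) =
      Fintype.piFinset fun y => if y ∈ Y then A else univ := by
    ext w
    simp only [mem_filter, mem_univ, true_and, Fintype.mem_piFinset]
    refine forall_congr' fun y => ?_
    split_ifs with hy <;> simp [hy]
  rw [hpi, Fintype.card_piFinset]
  simp only [apply_ite card, prod_ite, prod_const, card_univ, filter_mem_eq_inter, univ_inter]
  rw [filter_notMem_eq_sdiff, ← compl_eq_univ_sdiff, card_compl]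

section Copies

variable {β V : Type*} [DecidableEq V]

/-- The edges that have to be present for the map `w` to embed the hypergraph `𝓕`. -/
def copyEdges (𝓕 : Finset (Finset β)) (w : β → V) : Finset (Finset V) := 𝓕.image (·.image w)

lemma card_copyEdges (𝓕 : Finset (Finset β)) {w : β → V} (hw : Function.Injective w) :
    #(copyEdges 𝓕 w) = #𝓕 :=
  card_image_of_injective _ (image_injective hw)

/-- The edges of `𝓕` whose copy under `w'` is also an edge of the copy under `w`. -/
def sharedEdges (𝓕 : Finset (Finset β)) (w w' : β → V) : Finset (Finset β) :=
  𝓕.filter fun f => f.image w' ∈ copyEdges 𝓕 w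

lemma copyEdges_inter_copyEdges (𝓕 : Finset (Finset β)) (w w' : β → V) :
    copyEdges 𝓕 w ∩ copyEdges 𝓕 w' = (sharedEdges 𝓕 w w').image (·.image w') := by
  ext e
  simp only [sharedEdges, copyEdges, mem_inter, mem_image, mem_filter]
  constructor
  · rintro ⟨hew, f, hf, rfl⟩
    exact ⟨f, ⟨hf, hew⟩, rfl⟩
  · rintro ⟨f, ⟨hf, hew⟩, rfl⟩
    exact ⟨hew, f, hf, rfl⟩

lemma sharedEdges_nonempty {𝓕 : Finset (Finset β)} {w w' : β → V}
    (h : ¬ Disjoint (copyEdges 𝓕 w) (copyEdges 𝓕 w')) : (sharedEdges 𝓕 w w').Nonempty := by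
  rwa [disjoint_iff_inter_eq_empty, copyEdges_inter_copyEdges, image_eq_empty,
    ← ne_eq, ← nonempty_iff_ne_empty] at h

lemma card_copyEdges_union_copyEdges (𝓕 : Finset (Finset β)) {w w' : β → V}
    (hw : Function.Injective w) (hw' : Function.Injective w') :
    #(copyEdges 𝓕 w ∪ copyEdges 𝓕 w') = 2 * #𝓕 - #(sharedEdges 𝓕 w w') := by
  rw [card_union, copyEdges_inter_copyEdges, card_image_of_injective _ (image_injective hw'),
    card_copyEdges _ hw, card_copyEdges _ hw', two_mul]

variable [Fintype β]

lemma one_le_pow_self_cast (b : ℕ) : (1 : ℝ) ≤ (b : ℝ) ^ b := mod_cast Nat.pow_self_pos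

/-- The constant in the exponent of Janson's inequality for a family of potential copies of `𝓕`
of density `c`. -/
noncomputable def jansonRate (𝓕 : Finset (Finset β)) (c : ℝ) : ℝ :=
  c ^ 2 / (4 * 2 ^ #𝓕 * (Fintype.card β : ℝ) ^ Fintype.card β)

lemma jansonRate_pos (𝓕 : Finset (Finset β)) {c : ℝ} (hc : 0 < c) : 0 < jansonRate 𝓕 c := by
  have := one_le_pow_self_cast (Fintype.card β)
  unfold jansonRate
  positivity

variable [DecidableEq β] [Fintype V]

lemma card_filter_sharedEdges_eq_le (𝓕 K : Finset (Finset β)) (w : β → V) :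
    #{w' : β → V | sharedEdges 𝓕 w w' = K} ≤ Fintype.card β ^ Fintype.card β *
      Fintype.card V ^ (Fintype.card β - #(K.biUnion id)) := by
  set Y := K.biUnion id
  have hcard : #(univ.image w) ^ #Y ≤ Fintype.card β ^ Fintype.card β := by
    refine (Nat.pow_le_pow_left card_image_le _).trans ?_
    rcases Nat.eq_zero_or_pos (Fintype.card β) with h0 | h0
    · simp [h0, Nat.le_zero.1 (h0 ▸ card_le_univ Y)]
    · exact Nat.pow_le_pow_right h0 (card_le_univ Y)
  calc #{w' : β → V | sharedEdges 𝓕 w w' = K}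
      ≤ #{w' : β → V | ∀ y ∈ Y, w' y ∈ univ.image w} := by
        refine card_le_card fun w' hw' => mem_filter.2 ⟨mem_univ _, fun y hy => ?_⟩
        obtain ⟨f, hf, hyf⟩ := mem_biUnion.1 hy
        obtain ⟨-, rfl⟩ := mem_filter.1 hw'
        obtain ⟨g, -, hg⟩ := mem_image.1 (mem_filter.1 hf).2
        exact image_subset_image (subset_univ g) (hg ▸ mem_image_of_mem w' hyf)
    _ = #(univ.image w) ^ #Y * Fintype.card V ^ (Fintype.card β - #Y) :=
        card_filter_forall_mem Y _
    _ ≤ _ := Nat.mul_le_mul_right _ hcard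

lemma sum_sharedEdges_eq_pow_card_copyEdges_union_le {𝓕 K : Finset (Finset β)} (hK : K ⊆ 𝓕)
    {p Φ : ℝ} (hp0 : 0 ≤ p) (hΦ0 : 0 < Φ)
    (hΦ : Φ ≤ (Fintype.card V : ℝ) ^ #(K.biUnion id) * p ^ #K) {Λ : Finset (β → V)}
    (hΛ : ∀ w ∈ Λ, Function.Injective w) {w : β → V} (hw : Function.Injective w) :
    ∑ w' ∈ Λ with sharedEdges 𝓕 w w' = K, p ^ #(copyEdges 𝓕 w ∪ copyEdges 𝓕 w') ≤
      (Fintype.card β : ℝ) ^ Fintype.card β *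
        ((Fintype.card V : ℝ) ^ Fintype.card β * p ^ (2 * #𝓕) / Φ) := by
  set b := Fintype.card β
  set N := (Fintype.card V : ℝ)
  set v := #(K.biUnion id)
  have hv : v ≤ b := card_le_univ _
  have hKle := card_le_card hK
  have hpow : ∀ w' ∈ Λ.filter (fun w' => sharedEdges 𝓕 w w' = K),
      p ^ #(copyEdges 𝓕 w ∪ copyEdges 𝓕 w') = p ^ (2 * #𝓕 - #K) := fun w' hw' => by
    rw [card_copyEdges_union_copyEdges 𝓕 hw (hΛ w' (mem_filter.1 hw').1), (mem_filter.1 hw').2]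
  have hcount : (#{w' ∈ Λ | sharedEdges 𝓕 w w' = K} : ℝ) ≤ b ^ b * N ^ (b - v) := by
    have := (card_le_card (filter_subset_filter _ (subset_univ Λ))).trans
      (card_filter_sharedEdges_eq_le 𝓕 K w)
    simp only [N]
    exact_mod_cast this
  have hdensity : N ^ (b - v) * p ^ (2 * #𝓕 - #K) ≤ N ^ b * p ^ (2 * #𝓕) / Φ := by
    rw [le_div_iff₀ hΦ0]
    calc N ^ (b - v) * p ^ (2 * #𝓕 - #K) * Φ
        ≤ N ^ (b - v) * p ^ (2 * #𝓕 - #K) * (N ^ v * p ^ #K) := by gcongr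
      _ = N ^ (b - v + v) * p ^ (2 * #𝓕 - #K + #K) := by rw [pow_add, pow_add]; ring
      _ = N ^ b * p ^ (2 * #𝓕) := by
          rw [Nat.sub_add_cancel hv, Nat.sub_add_cancel (by omega)]
  rw [sum_congr rfl hpow, sum_const, nsmul_eq_mul]
  calc (#{w' ∈ Λ | sharedEdges 𝓕 w w' = K} : ℝ) * p ^ (2 * #𝓕 - #K)
      ≤ (b ^ b * N ^ (b - v)) * p ^ (2 * #𝓕 - #K) := by gcongr
    _ = b ^ b * (N ^ (b - v) * p ^ (2 * #𝓕 - #K)) := mul_assoc _ _ _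
    _ ≤ b ^ b * (N ^ b * p ^ (2 * #𝓕) / Φ) := by gcongr

/-- Classifying the second copy by the set `K` of its edges shared with the first one. -/
lemma sum_pow_card_copyEdges_union_le {𝓕 : Finset (Finset β)} {p Φ : ℝ} (hp0 : 0 ≤ p)
    (hΦ0 : 0 < Φ)
    (hΦ : ∀ K ⊆ 𝓕, K.Nonempty → Φ ≤ (Fintype.card V : ℝ) ^ #(K.biUnion id) * p ^ #K)
    {Λ : Finset (β → V)} (hΛ : ∀ w ∈ Λ, Function.Injective w) {w : β → V} (hw : w ∈ Λ) :
    ∑ w' ∈ Λ with ¬ Disjoint (copyEdges 𝓕 w) (copyEdges 𝓕 w'),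
        p ^ #(copyEdges 𝓕 w ∪ copyEdges 𝓕 w') ≤
      2 ^ #𝓕 * ((Fintype.card β : ℝ) ^ Fintype.card β *
        ((Fintype.card V : ℝ) ^ Fintype.card β * p ^ (2 * #𝓕) / Φ)) := by
  set Λ' := Λ.filter fun w' => ¬ Disjoint (copyEdges 𝓕 w) (copyEdges 𝓕 w')
  have hmaps : ∀ w' ∈ Λ', sharedEdges 𝓕 w w' ∈ 𝓕.powerset.erase ∅ := fun w' hw' =>
    mem_erase.2 ⟨(sharedEdges_nonempty (mem_filter.1 hw').2).ne_empty,
      mem_powerset.2 (filter_subset _ _)⟩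
  rw [← sum_fiberwise_of_maps_to hmaps]
  refine (sum_le_card_nsmul _ _ ((Fintype.card β : ℝ) ^ Fintype.card β *
    ((Fintype.card V : ℝ) ^ Fintype.card β * p ^ (2 * #𝓕) / Φ)) fun K hK => ?_).trans ?_
  · have hK𝓕 := mem_powerset.1 (mem_erase.1 hK).2
    exact sum_sharedEdges_eq_pow_card_copyEdges_union_le hK𝓕 hp0 hΦ0
      (hΦ K hK𝓕 (nonempty_iff_ne_empty.2 (mem_erase.1 hK).1))
      (fun w' hw' => hΛ w' (mem_filter.1 hw').1) (hΛ w hw)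
  · rw [nsmul_eq_mul]
    gcongr
    exact_mod_cast card_erase_le.trans (card_powerset 𝓕).le

lemma overlapSum_copyEdges_le {𝓕 : Finset (Finset β)} {p Φ : ℝ} (hp0 : 0 ≤ p) (hΦ0 : 0 < Φ)
    (hΦ : ∀ K ⊆ 𝓕, K.Nonempty → Φ ≤ (Fintype.card V : ℝ) ^ #(K.biUnion id) * p ^ #K)
    {Λ : Finset (β → V)} (hΛ : ∀ w ∈ Λ, Function.Injective w) :
    overlapSum (copyEdges 𝓕) p Λ ≤ (Fintype.card V : ℝ) ^ Fintype.card β *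
      (2 ^ #𝓕 * ((Fintype.card β : ℝ) ^ Fintype.card β *
        ((Fintype.card V : ℝ) ^ Fintype.card β * p ^ (2 * #𝓕) / Φ))) := by
  calc overlapSum (copyEdges 𝓕) p Λ
      ≤ ∑ w ∈ Λ, ∑ w' ∈ Λ with ¬ Disjoint (copyEdges 𝓕 w) (copyEdges 𝓕 w'),
          p ^ #(copyEdges 𝓕 w ∪ copyEdges 𝓕 w') := by
        simp only [sum_filter, ite_not]
        rw [overlapSum, ← sum_product']
        refine sum_le_sum_of_subset_of_nonneg (fun x hx =>
          mem_product.2 ⟨(mem_offDiag.1 hx).1, (mem_offDiag.1 hx).2.1⟩) fun x _ _ => ?_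
        split_ifs <;> positivity
    _ ≤ _ := by
        refine (sum_le_card_nsmul _ _ _ fun w hw =>
          sum_pow_card_copyEdges_union_le hp0 hΦ0 hΦ hΛ hw).trans ?_
        rw [nsmul_eq_mul]
        gcongr
        exact_mod_cast (card_le_univ Λ).trans_eq Fintype.card_fun

lemma randExpect_avoidInd_copyEdges_le_exp [Nonempty V] {X : Finset (Finset V)}
    {𝓕 : Finset (Finset β)} (h𝓕 : 𝓕.Nonempty) {p Φ c : ℝ} (hp0 : 0 < p) (hp1 : p ≤ 1)
    (hΦ0 : 0 < Φ)
    (hΦ : ∀ K ⊆ 𝓕, K.Nonempty → Φ ≤ (Fintype.card V : ℝ) ^ #(K.biUnion id) * p ^ #K)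
    {Λ : Finset (β → V)} (hΛ : ∀ w ∈ Λ, Function.Injective w)
    (hX : ∀ w ∈ Λ, copyEdges 𝓕 w ⊆ X) (hc : 0 < c)
    (hcΛ : c * (Fintype.card V : ℝ) ^ Fintype.card β ≤ #Λ) :
    randExpect X p (avoidInd (copyEdges 𝓕) Λ) ≤ Real.exp (-(jansonRate 𝓕 c * Φ)) := by
  set b := Fintype.card β
  set N := (Fintype.card V : ℝ)
  have hμ : ∑ w ∈ Λ, p ^ #(copyEdges 𝓕 w) = #Λ * p ^ #𝓕 := by
    rw [sum_congr rfl fun w hw => by rw [card_copyEdges 𝓕 (hΛ w hw)], sum_const, nsmul_eq_mul]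
  have hbb : (1 : ℝ) ≤ (b : ℝ) ^ b := one_le_pow_self_cast b
  have hN0 : 0 < N := Nat.cast_pos.2 Fintype.card_pos
  have hN1 : 1 ≤ N := Nat.one_le_cast.2 Fintype.card_pos
  have hΛN : (#Λ : ℝ) ≤ N ^ b := by
    simp only [N]
    exact_mod_cast (card_le_univ Λ).trans_eq Fintype.card_fun
  have hΦle : Φ ≤ N ^ b * p ^ #𝓕 := (hΦ 𝓕 subset_rfl h𝓕).trans <| by
    gcongr
    exact card_le_univ _
  set D := N ^ b * (2 ^ #𝓕 * ((b : ℝ) ^ b * (N ^ b * p ^ (2 * #𝓕) / Φ))) with hD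
  have hμD : #Λ * p ^ #𝓕 ≤ D := by
    have hquot : p ^ #𝓕 ≤ N ^ b * p ^ (2 * #𝓕) / Φ := by
      rw [le_div_iff₀ hΦ0, two_mul, pow_add]
      nlinarith [mul_le_mul_of_nonneg_left hΦle (pow_pos hp0 #𝓕).le]
    have h2 : (1 : ℝ) ≤ 2 ^ #𝓕 := one_le_pow₀ one_le_two
    calc #Λ * p ^ #𝓕 ≤ N ^ b * (1 * (1 * (N ^ b * p ^ (2 * #𝓕) / Φ))) := by
          rw [one_mul, one_mul]
          gcongr
      _ ≤ D := by rw [hD]; gcongr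
  have hD0 : 0 < D := by positivity
  refine (randExpect_avoidInd_le_exp_sq hp0.le hp1 hX hD0
    (overlapSum_copyEdges_le hp0.le hΦ0 hΦ hΛ) (by rw [hμ]; linarith)).trans ?_
  rw [hμ, Real.exp_le_exp, neg_le_neg_iff]
  calc jansonRate 𝓕 c * Φ
      = (c * N ^ b * p ^ #𝓕) ^ 2 / (4 * D) := by rw [jansonRate, hD]; field_simp; ring
    _ ≤ (#Λ * p ^ #𝓕) ^ 2 / (4 * D) := by gcongr

end Copies

section Potential

variable {ι κ : Type*} [DecidableEq ι]

/-- The weight of a constraint `W` for the selection `Λ`: it is halved by every member of `Λ`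
that serves `W`, i.e. that lies in `L W`. -/
noncomputable def missWeight (L : κ → Finset ι) (Λ : Finset ι) (W : κ) : ℝ :=
  (1 / 2) ^ #(Λ ∩ L W)

/-- The total weight of the constraints in `𝒲` for the selection `Λ`. -/
noncomputable def potential (𝒲 : Finset κ) (L : κ → Finset ι) (Λ : Finset ι) : ℝ :=
  ∑ W ∈ 𝒲, missWeight L Λ W

/-- The elements serving at least a `θ`-fraction of the weight of `𝒲` with respect to `Λ`. -/
noncomputable def heavyElements [Fintype ι] (𝒲 : Finset κ) (L : κ → Finset ι) (θ : ℝ)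
    (Λ : Finset ι) : Finset ι :=
  {w | θ * potential 𝒲 L Λ ≤ ∑ W ∈ 𝒲 with w ∈ L W, missWeight L Λ W}

lemma missWeight_pos (L : κ → Finset ι) (Λ : Finset ι) (W : κ) : 0 < missWeight L Λ W := by
  unfold missWeight
  positivity

lemma potential_pos {𝒲 : Finset κ} (h𝒲 : 𝒲.Nonempty) (L : κ → Finset ι) (Λ : Finset ι) :
    0 < potential 𝒲 L Λ :=
  sum_pos (fun W _ => missWeight_pos L Λ W) h𝒲

lemma le_card_heavyElements [Fintype ι] {𝒲 : Finset κ} (h𝒲 : 𝒲.Nonempty) {L : κ → Finset ι}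
    {θ : ℝ} (hθ : 0 ≤ θ) (hL : ∀ W ∈ 𝒲, 2 * θ * Fintype.card ι ≤ #(L W)) (Λ : Finset ι) :
    θ * Fintype.card ι ≤ #(heavyElements 𝒲 L θ Λ) := by
  have hΨ := potential_pos h𝒲 L Λ
  set Ψ := potential 𝒲 L Λ with hΨdef
  set s : ι → ℝ := fun w => ∑ W ∈ 𝒲 with w ∈ L W, missWeight L Λ W with hs
  have hlower : 2 * θ * Fintype.card ι * Ψ ≤ ∑ w, s w := by
    simp only [hs, sum_filter]
    rw [sum_comm, hΨdef, potential, mul_sum]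
    refine sum_le_sum fun W hW => ?_
    rw [sum_ite_mem, univ_inter, sum_const, nsmul_eq_mul]
    exact mul_le_mul_of_nonneg_right (hL W hW) (missWeight_pos L Λ W).le
  have hheavy : ∑ w ∈ heavyElements 𝒲 L θ Λ, s w ≤ #(heavyElements 𝒲 L θ Λ) * Ψ := by
    rw [← nsmul_eq_mul]
    exact sum_le_card_nsmul _ _ _ fun w _ => sum_le_sum_of_subset_of_nonneg (filter_subset _ _)
      fun W _ _ => (missWeight_pos L Λ W).le
  have hlight : ∑ w with ¬ θ * Ψ ≤ s w, s w ≤ Fintype.card ι * (θ * Ψ) := by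
    refine (sum_le_card_nsmul _ _ _ fun w hw => (not_le.1 (mem_filter.1 hw).2).le).trans ?_
    rw [nsmul_eq_mul]
    gcongr
    exact card_le_univ _
  have hsplit := sum_filter_add_sum_filter_not univ (fun w => θ * Ψ ≤ s w) s
  change ∑ w ∈ heavyElements 𝒲 L θ Λ, s w + _ = _ at hsplit
  exact le_of_mul_le_mul_right (by linarith) hΨ

lemma exists_mem_of_mem_heavyElements [Fintype ι] {𝒲 : Finset κ} (h𝒲 : 𝒲.Nonempty)
    {L : κ → Finset ι} {θ : ℝ} (hθ : 0 < θ) {Λ : Finset ι} {w : ι}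
    (hw : w ∈ heavyElements 𝒲 L θ Λ) : ∃ W ∈ 𝒲, w ∈ L W := by
  by_contra! h
  have hle := (mem_filter.1 hw).2
  rw [filter_false_of_mem h, sum_empty] at hle
  exact absurd (mul_pos hθ (potential_pos h𝒲 L Λ)) hle.not_gt

lemma potential_insert_le [Fintype ι] {𝒲 : Finset κ} {L : κ → Finset ι} {θ : ℝ} {Λ : Finset ι}
    {w : ι} (hw : w ∈ heavyElements 𝒲 L θ Λ) (hwΛ : w ∉ Λ) :
    potential 𝒲 L (insert w Λ) ≤ (1 - θ / 2) * potential 𝒲 L Λ := by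
  have hhalf : ∀ W ∈ 𝒲, missWeight L (insert w Λ) W =
      missWeight L Λ W - 1 / 2 * if w ∈ L W then missWeight L Λ W else 0 := fun W _ => by
    unfold missWeight
    split_ifs with h
    · rw [insert_inter_of_mem h, card_insert_of_notMem (by simp [hwΛ]), pow_succ]
      ring
    · rw [insert_inter_of_notMem h]
      ring
  have hle := (mem_filter.1 hw).2
  unfold potential at *
  rw [sum_filter] at hle
  rw [sum_congr rfl hhalf, sum_sub_distrib, ← mul_sum]
  linarith

lemma le_card_inter_of_potential_le {𝒲 : Finset κ} {L : κ → Finset ι} {Λ : Finset ι} {θ x : ℝ}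
    (hθ2 : θ ≤ 2) {r : ℕ} (h𝒲 : (#𝒲 : ℝ) ≤ Real.exp x) (hr : 4 * x ≤ θ * r)
    (h : potential 𝒲 L Λ ≤ (1 - θ / 2) ^ r * #𝒲) {W : κ} (hW : W ∈ 𝒲) :
    θ * r / 4 ≤ #(Λ ∩ L W) := by
  set q := #(Λ ∩ L W) with hq
  have hdecay : (1 - θ / 2) ^ r ≤ Real.exp (r * -(θ / 2)) := by
    rw [Real.exp_nat_mul]
    refine pow_le_pow_left₀ (by linarith) ?_ r
    linarith [Real.add_one_le_exp (-(θ / 2))]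
  have hweight : Real.exp (q * -1) ≤ missWeight L Λ W := by
    rw [Real.exp_nat_mul, missWeight, ← hq, Real.exp_neg, one_div]
    gcongr
    linarith [Real.add_one_le_exp (1 : ℝ)]
  have hexp : Real.exp (q * -1) ≤ Real.exp (r * -(θ / 2) + x) := by
    calc Real.exp (q * -1) ≤ missWeight L Λ W := hweight
      _ ≤ potential 𝒲 L Λ :=
          single_le_sum (f := missWeight L Λ) (fun W _ => (missWeight_pos L Λ W).le) hW
      _ ≤ (1 - θ / 2) ^ r * #𝒲 := h
      _ ≤ Real.exp (r * -(θ / 2)) * Real.exp x := by gcongr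
      _ = Real.exp (r * -(θ / 2) + x) := (Real.exp_add _ _).symm
  linarith [Real.exp_le_exp.1 hexp]

end Potential

section DisjointTuples

variable {β V κ : Type*}

/-- The tuples `w` and `w'` have no vertex in common. -/
def VertexDisjoint (w w' : β → V) : Prop := ∀ m m', w m ≠ w' m'

lemma VertexDisjoint.symm {w w' : β → V} (h : VertexDisjoint w w') : VertexDisjoint w' w :=
  fun m m' => (h m' m).symm

instance : Std.Symm (VertexDisjoint (β := β) (V := V)) := ⟨fun _ _ => VertexDisjoint.symm⟩

variable [Fintype β] [DecidableEq V]

/-- The set of all vertices used by the tuples in `Λ`. -/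
def vertexSet (Λ : Finset (β → V)) : Finset V := Λ.biUnion (univ.image ·)

lemma mem_vertexSet {Λ : Finset (β → V)} {w : β → V} (hw : w ∈ Λ) (m : β) : w m ∈ vertexSet Λ :=
  mem_biUnion.2 ⟨w, hw, mem_image_of_mem _ (mem_univ m)⟩

lemma card_vertexSet_le (Λ : Finset (β → V)) : #(vertexSet Λ) ≤ #Λ * Fintype.card β :=
  card_biUnion_le_card_mul _ _ _ fun _ _ => card_image_le

lemma notMem_of_forall_notMem_vertexSet [Nonempty β] {Λ : Finset (β → V)} {w : β → V}
    (h : ∀ m, w m ∉ vertexSet Λ) : w ∉ Λ :=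
  fun hw => h (Classical.arbitrary β) (mem_vertexSet hw _)

lemma vertexDisjoint_of_forall_notMem_vertexSet {Λ : Finset (β → V)} {w w' : β → V}
    (h : ∀ m, w m ∉ vertexSet Λ) (hw' : w' ∈ Λ) : VertexDisjoint w w' :=
  fun m m' heq => h m (heq ▸ mem_vertexSet hw' m')

variable [DecidableEq β] [Fintype V] [Nonempty β] {𝒲 : Finset κ} {L : κ → Finset (β → V)}
  {θ γ : ℝ} {r : ℕ} {P : (β → V) → Prop}

lemma exists_pairwise_vertexDisjoint_potential_le (hθ2 : θ ≤ 2)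
    (hP : ∀ T : Finset V, (#T : ℝ) ≤ γ → ∀ Λ : Finset (β → V), #Λ < r →
      ∃ w ∈ heavyElements 𝒲 L θ Λ, P w ∧ ∀ m, w m ∉ T)
    {T : Finset V} (hT : (#T : ℝ) + r * Fintype.card β ≤ γ) {s : ℕ} (hs : s ≤ r) :
    ∃ Λ : Finset (β → V), #Λ = s ∧ (Λ : Set (β → V)).Pairwise VertexDisjoint ∧
      (∀ w ∈ Λ, P w ∧ ∀ m, w m ∉ T) ∧ potential 𝒲 L Λ ≤ (1 - θ / 2) ^ s * #𝒲 := by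
  induction s with
  | zero => exact ⟨∅, by simp, by simp, by simp, by simp [potential, missWeight]⟩
  | succ s ih =>
    obtain ⟨Λ, hcard, hdisj, hΛ, hpot⟩ := ih (by omega)
    have hunion : (#(T ∪ vertexSet Λ) : ℝ) ≤ γ := by
      have hV : #(vertexSet Λ) ≤ r * Fintype.card β :=
        (card_vertexSet_le Λ).trans (Nat.mul_le_mul_right _ (by omega))
      have := (card_union_le T (vertexSet Λ)).trans (Nat.add_le_add_left hV _)
      exact le_trans (mod_cast this) hT
    obtain ⟨w, hw, hPw, hwT⟩ := hP _ hunion Λ (by omega)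
    simp only [mem_union, not_or, forall_and] at hwT
    have hwΛ := notMem_of_forall_notMem_vertexSet hwT.2
    refine ⟨insert w Λ, by rw [card_insert_of_notMem hwΛ, hcard], ?_,
      forall_mem_insert _ _ _ |>.2 ⟨⟨hPw, hwT.1⟩, hΛ⟩, ?_⟩
    · rw [coe_insert, Set.pairwise_insert_of_symm]
      exact ⟨hdisj, fun w' hw' _ => vertexDisjoint_of_forall_notMem_vertexSet hwT.2 hw'⟩
    · refine (potential_insert_le hw hwΛ).trans ?_
      rw [pow_succ', mul_assoc]
      exact mul_le_mul_of_nonneg_left hpot (by linarith)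

/-- Selecting `s` groups of `r` tuples; the potential is reset at the beginning of each group, so
that each of them serves every constraint. -/
lemma exists_pairwise_vertexDisjoint_le_card_inter (hθ2 : θ ≤ 2)
    (hP : ∀ T : Finset V, (#T : ℝ) ≤ γ → ∀ Λ : Finset (β → V), #Λ < r →
      ∃ w ∈ heavyElements 𝒲 L θ Λ, P w ∧ ∀ m, w m ∉ T)
    {x : ℝ} (h𝒲 : (#𝒲 : ℝ) ≤ Real.exp x) (hr : 4 * x ≤ θ * r)
    {s : ℕ} (hs : (s : ℝ) * r * Fintype.card β ≤ γ) :
    ∃ Λ : Finset (β → V), #Λ = s * r ∧ (Λ : Set (β → V)).Pairwise VertexDisjoint ∧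
      (∀ w ∈ Λ, P w) ∧ ∀ W ∈ 𝒲, s * (θ * r / 4) ≤ #(Λ ∩ L W) := by
  induction s with
  | zero => exact ⟨∅, by simp⟩
  | succ s ih =>
    push_cast at hs
    have hrb : (0 : ℝ) ≤ r * Fintype.card β := by positivity
    obtain ⟨Λ, hcard, hdisj, hΛ, hcount⟩ := ih (by linarith)
    have hV : (#(vertexSet Λ) : ℝ) ≤ s * r * Fintype.card β :=
      mod_cast hcard ▸ card_vertexSet_le Λ
    obtain ⟨Λ', hcard', hdisj', hΛ', hpot⟩ :=
      exists_pairwise_vertexDisjoint_potential_le hθ2 hP (T := vertexSet Λ) (by linarith) le_rfl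
    have hΛΛ' : Disjoint Λ Λ' := disjoint_right.2 fun w hw =>
      notMem_of_forall_notMem_vertexSet (hΛ' w hw).2
    refine ⟨Λ ∪ Λ', ?_, ?_, fun w hw => ?_, fun W hW => ?_⟩
    · rw [card_union_of_disjoint hΛΛ', hcard, hcard', Nat.succ_mul]
    · rw [coe_union, Set.pairwise_union_of_symm]
      exact ⟨hdisj, hdisj', fun w hw w' hw' _ =>
        (vertexDisjoint_of_forall_notMem_vertexSet (hΛ' w' hw').2 hw).symm⟩
    · exact (mem_union.1 hw).elim (hΛ w) fun h => (hΛ' w h).1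
    · rw [union_inter_distrib_right, card_union_of_disjoint
        (hΛΛ'.mono inter_subset_left inter_subset_left)]
      push_cast
      linarith [hcount W hW, le_card_inter_of_potential_le hθ2 h𝒲 hr hpot hW]

end DisjointTuples

lemma image_filter_val_mem {V : Type*} [DecidableEq V] {b : ℕ} {w : Fin b → V} {f : ℕ → V}
    {s : Finset ℕ} (hs : ∀ y ∈ s, y < b) (hw : ∀ y, w y = f y) :
    (univ.filter fun y : Fin b => (y : ℕ) ∈ s).image w = s.image f := by
  ext v
  simp only [mem_image, mem_filter, mem_univ, true_and, hw]
  exact ⟨fun ⟨y, hy, hv⟩ => ⟨y, hy, hv⟩, fun ⟨y, hy, hv⟩ => ⟨⟨y, hs y hy⟩, hy, hv⟩⟩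

/-- The layout of the absorbing paths, as paths on the positions `0, 1, 2, …` with edges
`[J d, J d + k)`, where `k = d + l`. The extended path has `T = t d` edges, arranged in `d` blocks
of `t` edges, so that the `i`-th block starts at position `i T`. In each of them the vertex at
position `i T + (m d - 1)`, which lies in the first `m` edges of the block, is exchanged for a
vertex of the absorbed set; the exchanged vertices are reinserted behind the first `g` edges of the
last block. -/
structure AbsorberShape where
  (d l m κ g : ℕ)
  d_pos : 0 < d
  l_pos : 0 < l
  m_mul_d_le : m * d ≤ d + l
  lt_m_mul_d_add : d + l < m * d + d
  le_κ_mul_d : d + l ≤ κ * d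
  m_le_g_or : m ≤ g ∨ d = 1 ∧ g + 1 = m

namespace AbsorberShape

variable (A : AbsorberShape)

/-- The uniformity of the hypergraph. -/
def k : ℕ := A.d + A.l

/-- The number of edges of a block. -/
def t : ℕ := A.g + A.κ

/-- The number of edges of the extended path, which is also the number of positions between the
beginnings of two consecutive blocks. -/
def T : ℕ := A.t * A.d

/-- The first edge of the last block. -/
def lastBlock : ℕ := (A.d - 1) * A.t

/-- The edge of the extended path that contains all the reinserted vertices in its final
segment. -/
def gapEdge : ℕ := A.lastBlock + A.g

/-- The position at which the exchanged vertices are reinserted. -/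
def gapPos : ℕ := A.gapEdge * A.d + A.l

/-- The number of vertices of the absorbing path, before the extension. -/
def order : ℕ := (A.T - 1) * A.d + A.l

/-- The position of the vertex of the `i`-th block that is exchanged. -/
def pivot (i : ℕ) : ℕ := i * A.T + (A.m * A.d - 1)

/-- The positions of the `J`-th edge. -/
def window (J : ℕ) : Finset ℕ := Ico (J * A.d) (J * A.d + A.k)

lemma k_eq : A.k = A.d + A.l := rfl

lemma t_eq : A.t = A.g + A.κ := rfl

lemma gapEdge_eq : A.gapEdge = A.lastBlock + A.g := rfl

lemma gapPos_eq : A.gapPos = A.gapEdge * A.d + A.l := rfl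

lemma order_eq : A.order = (A.T - 1) * A.d + A.l := rfl

lemma m_pos : 0 < A.m := by
  by_contra h
  have := A.lt_m_mul_d_add
  rw [Nat.eq_zero_of_not_pos h, zero_mul] at this
  omega

lemma m_mul_d_pos : 0 < A.m * A.d := Nat.mul_pos A.m_pos A.d_pos

lemma two_le_κ : 2 ≤ A.κ := by
  by_contra h
  have := A.le_κ_mul_d.trans (Nat.mul_le_mul_right A.d (show A.κ ≤ 1 by omega))
  have := A.l_pos
  omega

lemma two_le_t : 2 ≤ A.t := by
  have := A.two_le_κ
  have := A.t_eq
  omega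

lemma T_eq : A.T = A.g * A.d + A.κ * A.d := add_mul _ _ _

lemma lastBlock_add_t : A.lastBlock + A.t = A.T := by
  rw [lastBlock, T, ← Nat.succ_mul, Nat.succ_eq_add_one, Nat.sub_add_cancel A.d_pos, mul_comm]

lemma gapEdge_add_κ : A.gapEdge + A.κ = A.T := by
  rw [← lastBlock_add_t, gapEdge, t, add_assoc]

lemma two_le_T : 2 ≤ A.T := by
  have := A.lastBlock_add_t
  have := A.two_le_t
  omega

lemma order_pos : 0 < A.order := Nat.add_pos_right _ A.l_pos

instance : NeZero A.order := ⟨A.order_pos.ne'⟩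

lemma gapEdge_mul_d : A.gapEdge * A.d = (A.d - 1) * A.T + A.g * A.d := by
  rw [gapEdge, lastBlock, T]
  ring

lemma k_le_T : A.k ≤ A.T := by
  rw [T_eq]
  exact A.le_κ_mul_d.trans (Nat.le_add_left _ _)

lemma m_mul_d_le_T : A.m * A.d ≤ A.T := A.m_mul_d_le.trans A.k_le_T

lemma gapEdge_lt : A.gapEdge < A.T - 1 := by
  have := A.gapEdge_add_κ
  have := A.two_le_κ
  omega

lemma T_sub_one_mul_d : (A.T - 1) * A.d + A.d = A.T * A.d := by
  have := A.two_le_T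
  rw [← Nat.succ_mul, Nat.succ_eq_add_one, Nat.sub_add_cancel (by omega)]

lemma gapPos_le : A.gapPos ≤ (A.T - 1) * A.d := by
  have hκ := A.le_κ_mul_d
  have hT : A.gapEdge * A.d + A.κ * A.d = A.T * A.d := by rw [← add_mul, gapEdge_add_κ]
  have := A.T_sub_one_mul_d
  have := A.gapPos_eq
  omega

lemma window_le_order {J : ℕ} (hJ : J < A.T - 1) : J * A.d + A.k ≤ A.order := by
  have h := Nat.mul_le_mul_right A.d (Nat.succ_le_of_lt hJ)
  rw [Nat.succ_mul] at h
  have := A.k_eq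
  have := A.order_eq
  omega

lemma window_T_sub_two : (A.T - 2) * A.d + A.k = A.order := by
  have := A.two_le_T
  rw [k, order, ← add_assoc, ← Nat.succ_mul]
  congr
  omega

lemma l_le_pivot (i : ℕ) : A.l ≤ A.pivot i := by
  have := A.lt_m_mul_d_add
  rw [pivot]
  omega

lemma pivot_lt {i : ℕ} (hi : i < A.d) :
    A.pivot i < A.gapPos ∧ A.pivot i < A.gapEdge * A.d + A.d := by
  have hm : A.m * A.d ≤ A.g * A.d + A.l ∧ A.m * A.d ≤ A.g * A.d + A.d := by
    have := A.l_pos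
    rcases A.m_le_g_or with hmg | ⟨hd, hmg⟩
    · have := Nat.mul_le_mul_right A.d hmg
      omega
    · rw [← hmg, hd]
      omega
  have := Nat.mul_le_mul_right A.T (show i ≤ A.d - 1 by omega)
  have := A.m_mul_d_pos
  have := A.gapEdge_mul_d
  have := A.gapPos_eq
  rw [pivot]
  omega

lemma pivot_lt_order {i : ℕ} (hi : i < A.d) : A.pivot i < A.order :=
  (A.pivot_lt hi).1.trans_le <| A.gapPos_le.trans <| Nat.le_add_right _ _

lemma pivot_mod (i : ℕ) : A.pivot i % A.T = A.m * A.d - 1 := by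
  have := A.m_mul_d_le_T
  have := A.m_mul_d_pos
  rw [pivot, Nat.mul_add_mod_self_right, Nat.mod_eq_of_lt (by omega)]

lemma pivot_div (i : ℕ) : A.pivot i / A.T = i := by
  have := A.m_mul_d_le_T
  have := A.m_mul_d_pos
  rw [pivot, add_comm, Nat.add_mul_div_right _ _ (by omega), Nat.div_eq_of_lt (by omega), zero_add]

lemma pivot_injective : Function.Injective A.pivot := fun i j h => by
  rw [← A.pivot_div i, h, pivot_div]

lemma mul_d_eq (J : ℕ) : J * A.d = J / A.t * A.T + J % A.t * A.d := by
  conv_lhs => rw [← Nat.div_add_mod J A.t]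
  rw [T]
  ring

lemma div_t_and_mod_t_lt_of_pivot_mem_window {i J : ℕ} (h : A.pivot i ∈ A.window J) :
    J / A.t = i ∧ J % A.t < A.m := by
  rw [window, pivot, mem_Ico, A.mul_d_eq J] at h
  have hblock : (J % A.t + 1) * A.d ≤ A.T :=
    Nat.mul_le_mul_right _ (Nat.mod_lt J (by have := A.two_le_t; omega))
  rw [Nat.succ_mul] at hblock
  have := A.m_mul_d_le
  have := A.lt_m_mul_d_add
  have := A.m_mul_d_pos
  have := A.m_mul_d_le_T
  have := A.k_eq
  rcases lt_trichotomy i (J / A.t) with hi | hi | hi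
  · have := Nat.mul_le_mul_right A.T (Nat.succ_le_of_lt hi)
    rw [Nat.succ_mul] at this
    omega
  · refine ⟨hi.symm, not_le.1 fun hm => ?_⟩
    have := Nat.mul_le_mul_right A.d hm
    rw [hi] at h
    omega
  · have := Nat.mul_le_mul_right A.T (Nat.succ_le_of_lt hi)
    rw [Nat.succ_mul] at this
    omega

lemma eq_lastBlock_add_mod {J : ℕ} (hJ : A.lastBlock ≤ J) (hJT : J < A.T) :
    J = A.lastBlock + J % A.t := by
  have hBT := A.lastBlock_add_t
  obtain ⟨j, rfl⟩ := Nat.exists_eq_add_of_le hJ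
  rw [lastBlock, Nat.mul_add_mod_self_right, Nat.mod_eq_of_lt (by omega)]

section Exchange

variable {V : Type*}

/-- The sequence `f` with the vertices at the exchanged positions replaced by `u`. -/
def exchange (f u : ℕ → V) (y : ℕ) : V :=
  if y % A.T = A.m * A.d - 1 ∧ y / A.T < A.d then u (y / A.T) else f y

lemma exchange_pivot (f u : ℕ → V) {i : ℕ} (hi : i < A.d) : A.exchange f u (A.pivot i) = u i := by
  rw [exchange, pivot_mod, pivot_div, if_pos ⟨rfl, hi⟩]

lemma exchange_of_ne {f u : ℕ → V} {y : ℕ} (h : ∀ i < A.d, y ≠ A.pivot i) :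
    A.exchange f u y = f y := by
  refine if_neg fun ⟨hmod, hdiv⟩ => h _ hdiv ?_
  rw [pivot, ← hmod, mul_comm, Nat.div_add_mod]

lemma exchange_of_lt {f u : ℕ → V} {y : ℕ} (h : y < A.l) : A.exchange f u y = f y :=
  A.exchange_of_ne fun i _ hy => absurd (A.l_le_pivot i) (by omega)

lemma exchange_of_gapPos_le {f u : ℕ → V} {y : ℕ} (h : A.gapPos ≤ y) : A.exchange f u y = f y :=
  A.exchange_of_ne fun _ hi hy => absurd (A.pivot_lt hi).1 (by omega)

lemma exchange_of_gapEdge_le {f u : ℕ → V} {y : ℕ} (h : A.gapEdge * A.d + A.d ≤ y) :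
    A.exchange f u y = f y :=
  A.exchange_of_ne fun _ hi hy => absurd (A.pivot_lt hi).2 (by omega)

lemma image_exchange_window [DecidableEq V] (f u : ℕ → V) {J : ℕ} (h : A.m ≤ J % A.t) :
    (A.window J).image (A.exchange f u) = (A.window J).image f :=
  image_congr fun _ hy => A.exchange_of_ne fun _ _ hyi =>
    h.not_gt (A.div_t_and_mod_t_lt_of_pivot_mem_window (hyi ▸ hy)).2

end Exchange

section Template

/-- The position, in the original path, of the vertex at position `y` of the extended path, as long
as this vertex is not one of the absorbed ones. -/
def source (y : ℕ) : ℕ :=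
  if y < A.gapPos then y
  else if y < A.gapPos + A.d then A.pivot (y - A.gapPos)
  else y - A.d

lemma source_lt {J y : ℕ} (hJ : A.gapEdge ≤ J) (hy : y ∈ A.window (J + 1)) :
    A.source y < J * A.d + A.k := by
  rw [window, mem_Ico, add_mul] at hy
  have := Nat.mul_le_mul_right A.d hJ
  have := A.k_eq
  have := A.gapPos_eq
  unfold source
  split_ifs with h₁ h₂
  · omega
  · have := (A.pivot_lt (i := y - A.gapPos) (by omega)).1
    omega
  · omega

lemma source_injOn : Set.InjOn A.source {y | A.gapEdge * A.d + A.d ≤ y} := by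
  intro y (hy : _ ≤ y) z (hz : _ ≤ z) h
  have hpivot : ∀ x, x < A.gapPos + A.d → A.gapPos ≤ x →
      A.pivot (x - A.gapPos) < A.gapPos ∧ A.pivot (x - A.gapPos) < A.gapEdge * A.d + A.d :=
    fun x _ _ => A.pivot_lt (by omega)
  have := hpivot y
  have := hpivot z
  unfold source at h
  split_ifs at h with hy₁ hz₁ hz₂ hy₂ hz₁ hz₂ hz₁ hz₂ <;> try omega
  have := A.pivot_injective h
  omega

/-- The positions of the edge with index `J` that the random hypergraph has to provide: in front of
the gap an edge of the original path, behind it an edge of the extended path. -/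
def randomEdge (J : ℕ) : Finset ℕ :=
  if A.gapEdge ≤ J then (A.window (J + 1)).image A.source else A.window J

lemma card_randomEdge (J : ℕ) : #(A.randomEdge J) = A.k := by
  have hwindow : ∀ J, #(A.window J) = A.k := fun J => by simp [window]
  unfold randomEdge
  split_ifs with h
  · rw [card_image_of_injOn, hwindow]
    refine A.source_injOn.mono fun y hy => le_trans ?_ (mem_Ico.1 hy).1
    rw [← Nat.succ_mul]
    exact Nat.mul_le_mul_right _ (Nat.succ_le_succ h)
  · exact hwindow J

lemma lt_of_mem_randomEdge {J y : ℕ} (hy : y ∈ A.randomEdge J) : y < J * A.d + A.k := by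
  unfold randomEdge at hy
  split_ifs at hy with h
  · obtain ⟨z, hz, rfl⟩ := mem_image.1 hy
    exact A.source_lt h hz
  · exact (mem_Ico.1 hy).2

lemma mem_randomEdge {J y : ℕ} (hy : J * A.d + A.l ≤ y) (hy' : y < J * A.d + A.k) :
    y ∈ A.randomEdge J := by
  unfold randomEdge
  have := A.k_eq
  split_ifs with h
  · refine mem_image.2 ⟨y + A.d, mem_Ico.2 (by rw [add_mul]; omega), ?_⟩
    have := Nat.mul_le_mul_right A.d h
    have := A.gapPos_eq
    rw [source, if_neg (by omega), if_neg (by omega), Nat.add_sub_cancel]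
  · exact mem_Ico.2 (by omega)

/-- Each edge contributes `d` new positions behind those of the preceding edges. -/
lemma card_mul_d_add_l_le_card_biUnion_randomEdge {S : Finset ℕ} (hS : S.Nonempty) :
    #S * A.d + A.l ≤ #(S.biUnion A.randomEdge) := by
  have := A.k_eq
  induction S using Finset.induction_on_max with
  | empty => exact absurd hS not_nonempty_empty
  | insert a S hS_lt ih =>
    rw [card_insert_of_notMem fun h => (hS_lt a h).false, biUnion_insert]
    rcases S.eq_empty_or_nonempty with rfl | hS
    · rw [biUnion_empty, union_empty, card_randomEdge]
      simp only [card_empty, zero_add, one_mul, k_eq, le_refl]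
    have hnew : Ico (a * A.d + A.l) (a * A.d + A.k) ⊆ A.randomEdge a := fun y hy =>
      A.mem_randomEdge (mem_Ico.1 hy).1 (mem_Ico.1 hy).2
    have hdisj : Disjoint (Ico (a * A.d + A.l) (a * A.d + A.k)) (S.biUnion A.randomEdge) := by
      refine disjoint_left.2 fun y hy hy' => ?_
      obtain ⟨J, hJ, hyJ⟩ := mem_biUnion.1 hy'
      have hlt := A.lt_of_mem_randomEdge hyJ
      have hJa := Nat.mul_le_mul_right A.d (Nat.succ_le_of_lt (hS_lt J hJ))
      rw [Nat.succ_mul] at hJa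
      rw [mem_Ico] at hy
      omega
    have hcard := card_le_card (union_subset_union_left (t := S.biUnion A.randomEdge) hnew)
    rw [card_union_of_disjoint hdisj, Nat.card_Ico] at hcard
    have := ih hS
    rw [add_mul]
    omega

/-- If `m = g + 1`, then `d = 1`, and the edge at the gap differs from the window only in the order
of its vertices. -/
lemma randomEdge_eq_window {J : ℕ} (hJ : J < A.T - 1) (hm : J % A.t < A.m) :
    A.randomEdge J = A.window J := by
  rcases lt_or_ge J A.gapEdge with h | h
  · exact if_neg h.not_ge
  have hG := A.gapEdge_eq
  have hJmod := A.eq_lastBlock_add_mod (J := J) (by omega) (by omega)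
  rcases A.m_le_g_or with hmg | ⟨hd, hmg⟩
  · omega
  have hJG : J = A.gapEdge := by omega
  have hB : A.lastBlock = 0 := by rw [lastBlock, hd, Nat.sub_self, zero_mul]
  have hmul : ∀ i, i * A.d = i := fun i => by rw [hd, mul_one]
  have hgap := A.gapPos_eq
  have hk := A.k_eq
  rw [hmul] at hgap
  refine (eq_of_subset_of_card_le (fun y hy => ?_) ?_).symm
  · rw [window, mem_Ico, hmul] at hy
    rcases lt_or_ge y (J + A.l) with hyl | hyl
    · rw [randomEdge, if_pos h]
      rcases eq_or_ne y J with rfl | hyJ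
      · refine mem_image.2 ⟨A.gapPos, mem_Ico.2 (by rw [hmul]; omega), ?_⟩
        rw [source, if_neg (lt_irrefl _), if_pos (by omega), Nat.sub_self, pivot, hmul]
        omega
      · refine mem_image.2 ⟨y, mem_Ico.2 (by rw [hmul]; omega), ?_⟩
        rw [source, if_pos (by omega)]
    · exact A.mem_randomEdge (by rwa [hmul]) (by rw [hmul]; exact hy.2)
  · rw [card_randomEdge, window, Nat.card_Ico, Nat.add_sub_cancel_left]

/-- The edges of the path, with the exchanged vertices in place, that are required to lie in the
given hypergraph, as opposed to the random one. -/
def IsHostEdge (J : ℕ) : Prop := J % A.t ≤ A.g ∨ A.lastBlock ≤ J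

/-- The indices of the edges that the random hypergraph has to provide. -/
noncomputable def randomIdx : Finset ℕ :=
  {J ∈ range (A.T - 1) | A.gapEdge ≤ J ∨ J % A.t < A.m ∨ ¬ A.IsHostEdge J}

/-- The hypergraph on the positions of the absorbing path whose copies are looked for in the random
hypergraph. -/
noncomputable def template : Finset (Finset (Fin A.order)) :=
  A.randomIdx.image fun J => univ.filter fun y : Fin A.order => (y : ℕ) ∈ A.randomEdge J

variable {A}

lemma lt_of_mem_randomIdx {J : ℕ} (hJ : J ∈ A.randomIdx) : J < A.T - 1 :=
  mem_range.1 (mem_filter.1 hJ).1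

lemma lt_order_of_mem_randomEdge {J y : ℕ} (hJ : J < A.T - 1) (hy : y ∈ A.randomEdge J) :
    y < A.order :=
  (A.lt_of_mem_randomEdge hy).trans_le (A.window_le_order hJ)

lemma card_of_mem_template {e : Finset (Fin A.order)} (he : e ∈ A.template) : #e = A.k := by
  obtain ⟨J, hJ, rfl⟩ := mem_image.1 he
  rw [← A.card_randomEdge J, ← card_image_of_injective _ Fin.val_injective,
    image_filter_val_mem (w := Fin.val) (f := id) (fun y => lt_order_of_mem_randomEdge
      (lt_of_mem_randomIdx hJ)) fun _ => rfl, image_id]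

variable (A)

lemma template_nonempty : A.template.Nonempty := by
  have := A.two_le_T
  have := A.m_pos
  exact (show A.randomIdx.Nonempty from ⟨0, mem_filter.2 ⟨mem_range.2 (by omega),
    Or.inr (Or.inl (by rwa [Nat.zero_mod]))⟩⟩).image _

lemma card_template_le : #A.template ≤ A.T - 1 :=
  card_image_le.trans <| (card_filter_le _ _).trans_eq (card_range _)

lemma card_mul_d_add_l_le_card_biUnion {K : Finset (Finset (Fin A.order))} (hK : K ⊆ A.template)
    (hK₀ : K.Nonempty) : #K * A.d + A.l ≤ #(K.biUnion id) := by
  obtain ⟨S, hS, rfl⟩ := subset_image_iff.1 hK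
  have himage : (S.biUnion fun J => univ.filter fun y : Fin A.order =>
      (y : ℕ) ∈ A.randomEdge J).image Fin.val = S.biUnion A.randomEdge := by
    rw [biUnion_image]
    refine biUnion_congr rfl fun J hJ => ?_
    rw [image_filter_val_mem (w := Fin.val) (f := id) (fun y => lt_order_of_mem_randomEdge
      (lt_of_mem_randomIdx (hS hJ))) fun _ => rfl, image_id]
  rw [image_biUnion, ← card_image_of_injective _ Fin.val_injective]
  simp only [id]
  rw [himage]
  exact (Nat.add_le_add_right (Nat.mul_le_mul_right _ card_image_le) _).trans
    (A.card_mul_d_add_l_le_card_biUnion_randomEdge (by simpa using hK₀))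

end Template

end AbsorberShape

section Tuples

lemma image_univ_eq_image_range {V : Type*} [DecidableEq V] {b : ℕ} {w : Fin b → V} {f : ℕ → V}
    (hw : ∀ y, w y = f y) : univ.image w = (range b).image f := by
  rw [← image_filter_val_mem (fun _ => mem_range.1) hw]
  simp only [mem_range, Fin.is_lt, filter_true]

lemma card_image_of_injective_tuple {V : Type*} [DecidableEq V] {b : ℕ} {w : Fin b → V}
    {f : ℕ → V} {s : Finset ℕ} (hs : ∀ y ∈ s, y < b) (hw : ∀ y, w y = f y)
    (hinj : Function.Injective w) : #(s.image f) = #s := by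
  refine card_image_of_injOn fun y hy z hz hyz => ?_
  have := @hinj ⟨y, hs y hy⟩ ⟨z, hs z hz⟩ (by rw [hw, hw]; exact hyz)
  simpa using this

variable {n b l : ℕ} {w : Fin b → Fin n} {f : ℕ → Fin n}

lemma firstEnd_eq_image_range (hw : ∀ y, w y = f y) (hl : l ≤ b) :
    firstEnd l w = (range l).image f := by
  rw [← image_filter_val_mem (fun _ hy => (mem_range.1 hy).trans_le hl) hw]
  simp only [firstEnd, mem_range]

lemma lastEnd_eq_image_Ico (hw : ∀ y, w y = f y) : lastEnd l w = (Ico (b - l) b).image f := by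
  rw [← image_filter_val_mem (fun _ hy => (mem_Ico.1 hy).2) hw]
  simp only [lastEnd, mem_Ico, Fin.is_lt, and_true]

lemma image_mem_shadowL {H : Finset (Finset (Fin n))} {g : ℕ → Fin n} {s s' : Finset ℕ}
    (hs : ∀ y ∈ s, y < b) (hl : #s = l) (hw : ∀ y, w y = f y) (hinj : Function.Injective w)
    (hss' : s ⊆ s') (hg : ∀ y ∈ s, g y = f y) (hH : s'.image g ∈ H) : s.image f ∈ shadowL l H := by
  refine mem_filter.2 ⟨mem_powersetCard.2 ⟨subset_univ _, ?_⟩, _, hH, ?_⟩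
  · rw [card_image_of_injective_tuple hs hw hinj, hl]
  · exact (image_congr fun y hy => (hg y hy).symm).trans_subset (image_subset_image hss')

end Tuples

namespace AbsorberShape

variable (A : AbsorberShape) {V : Type*}

lemma edgeIdx_eq_window (J : ℕ) : edgeIdx A.k (A.k - A.l) 0 J = A.window J := by
  have hd : A.k - A.l = A.d := Nat.add_sub_cancel _ _
  ext y
  rw [edgeIdx, window, hd, mem_image, mem_Ico]
  exact ⟨fun ⟨j, hj, hy⟩ => by rw [mem_range] at hj; omega,
    fun hy => ⟨y - J * A.d, mem_range.2 (by omega), by omega⟩⟩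

variable {A} in
lemma spansPath_of_forall_image_window_mem {n b a : ℕ} {E : Finset (Finset (Fin n))}
    {w : Fin b → Fin n} {f : ℕ → Fin n} (hw : ∀ y, w y = f y) (hinj : Function.Injective w)
    (hb : ∀ J < a, J * A.d + A.k ≤ b) (hE : ∀ J < a, (A.window J).image f ∈ E) :
    SpansPath A.k A.l a E w := by
  refine ⟨hinj, fun J hJ => ?_⟩
  rw [edgeIdx_eq_window,
    image_filter_val_mem (s := A.window J) (fun y hy => (mem_Ico.1 hy).2.trans_le (hb J hJ)) hw]
  exact hE J hJ

/-- The values of a tuple as a sequence, so that positions can be computed in `ℕ`; only the values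
at the positions below `A.order` matter. -/
def toSeq (w : Fin A.order → V) (y : ℕ) : V := w (Fin.ofNat A.order y)

variable {A} in
lemma toSeq_val (w : Fin A.order → V) (y : Fin A.order) : A.toSeq w y = w y :=
  congrArg w (Fin.ofNat_val_eq_self y)

variable {A} in
lemma eq_toSeq_val (w : Fin A.order → V) (y : Fin A.order) : w y = A.toSeq w y :=
  (toSeq_val w y).symm

/-- The sequence `f` of vertices with `u` inserted at the exchanged positions and the exchanged
vertices reinserted at the gap. -/
def absorb (f u : ℕ → V) (y : ℕ) : V :=
  if y < A.gapPos then A.exchange f u y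
  else if y < A.gapPos + A.d then f (A.pivot (y - A.gapPos))
  else f (y - A.d)

variable {A} {f u : ℕ → V}

lemma absorb_of_lt {y : ℕ} (hy : y < A.gapPos) : A.absorb f u y = A.exchange f u y := if_pos hy

lemma absorb_gapPos_add {i : ℕ} (hi : i < A.d) : A.absorb f u (A.gapPos + i) = f (A.pivot i) := by
  rw [absorb, if_neg (by omega), if_pos (by omega), Nat.add_sub_cancel_left]

lemma absorb_add_d {y : ℕ} (hy : A.gapPos ≤ y) : A.absorb f u (y + A.d) = f y := by
  rw [absorb, if_neg (by omega), if_neg (by omega), Nat.add_sub_cancel]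

lemma absorb_eq_source {y : ℕ} (hy : A.gapEdge * A.d + A.d ≤ y) :
    A.absorb f u y = f (A.source y) := by
  unfold absorb source
  split_ifs with h₁ h₂
  exacts [A.exchange_of_gapEdge_le hy, rfl, rfl]

section Image

variable [DecidableEq V]

lemma image_absorb_range_subset : (range (A.order + A.d)).image (A.absorb f u) ⊆
    (range A.order).image f ∪ (range A.d).image u := by
  have hgap := A.gapPos_le
  have hb := A.order_eq
  refine image_subset_iff.2 fun y hy => ?_
  have hf : ∀ z < A.order, f z ∈ (range A.order).image f ∪ (range A.d).image u := fun z hz =>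
    mem_union_left _ (mem_image_of_mem f (mem_range.2 hz))
  rw [mem_range] at hy
  unfold absorb
  split_ifs with h₁ h₂
  · by_cases hpivot : ∃ i < A.d, y = A.pivot i
    · obtain ⟨i, hi, rfl⟩ := hpivot
      rw [exchange_pivot A f u hi]
      exact mem_union_right _ (mem_image_of_mem u (mem_range.2 hi))
    · push Not at hpivot
      rw [A.exchange_of_ne hpivot]
      exact hf y (by omega)
  · exact hf _ (A.pivot_lt_order (by omega))
  · exact hf _ (by omega)

lemma subset_image_absorb_range : (range A.order).image f ∪ (range A.d).image u ⊆
    (range (A.order + A.d)).image (A.absorb f u) := by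
  have hgap := A.gapPos_le
  have hb := A.order_eq
  refine union_subset (image_subset_iff.2 fun y hy => ?_) (image_subset_iff.2 fun i hi => ?_)
  · rw [mem_range] at hy
    rcases le_or_gt A.gapPos y with hy' | hy'
    · exact mem_image.2 ⟨y + A.d, mem_range.2 (by omega), absorb_add_d hy'⟩
    · by_cases hpivot : ∃ i < A.d, y = A.pivot i
      · obtain ⟨i, hi, rfl⟩ := hpivot
        exact mem_image.2 ⟨A.gapPos + i, mem_range.2 (by omega), absorb_gapPos_add hi⟩
      · push Not at hpivot
        refine mem_image.2 ⟨y, mem_range.2 (by omega), ?_⟩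
        rw [absorb_of_lt hy', A.exchange_of_ne hpivot]
  · rw [mem_range] at hi
    refine mem_image.2 ⟨A.pivot i, mem_range.2 ((A.pivot_lt_order hi).trans_le le_self_add), ?_⟩
    rw [absorb_of_lt (A.pivot_lt hi).1, A.exchange_pivot f u hi]

lemma image_absorb_range : (range (A.order + A.d)).image (A.absorb f u) =
    (range A.order).image f ∪ (range A.d).image u :=
  image_absorb_range_subset.antisymm subset_image_absorb_range

lemma image_absorb_range_l : (range A.l).image (A.absorb f u) = (range A.l).image f := by
  refine image_congr fun y hy => ?_
  have := A.gapPos_eq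
  rw [mem_coe, mem_range] at hy
  rw [absorb_of_lt (by omega), A.exchange_of_lt hy]

lemma image_absorb_Ico_order_add_d :
    (Ico (A.order + A.d - A.l) (A.order + A.d)).image (A.absorb f u) =
      (Ico (A.order - A.l) A.order).image f := by
  have := A.gapPos_le
  have := A.order_eq
  rw [Nat.sub_add_comm (show A.l ≤ A.order by omega), ← image_add_right_Ico, image_image]
  refine image_congr fun y hy => ?_
  rw [mem_coe, mem_Ico] at hy
  exact absorb_add_d (by omega)

lemma image_absorb_window_of_lt {J : ℕ} (hJ : J < A.gapEdge) :
    (A.window J).image (A.absorb f u) = (A.window J).image (A.exchange f u) := by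
  refine image_congr fun y hy => absorb_of_lt ?_
  have := Nat.mul_le_mul_right A.d (Nat.succ_le_of_lt hJ)
  rw [Nat.succ_mul] at this
  rw [mem_coe, window, mem_Ico] at hy
  have := A.k_eq
  have := A.gapPos_eq
  omega

lemma image_absorb_window_gapEdge : (A.window A.gapEdge).image (A.absorb f u) =
    (Ico (A.gapEdge * A.d) A.gapPos).image (A.exchange f u) ∪
      (range A.d).image (f ∘ A.pivot) := by
  have hsplit : A.window A.gapEdge =
      Ico (A.gapEdge * A.d) A.gapPos ∪ (range A.d).image (A.gapPos + ·) := by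
    rw [range_eq_Ico, image_add_left_Ico, add_zero, Ico_union_Ico_eq_Ico (by rw [gapPos]; omega)
      (by omega), window, gapPos, k, add_comm A.d, add_assoc]
  rw [hsplit, image_union, image_image]
  congr 1
  · exact image_congr fun y hy => absorb_of_lt (mem_Ico.1 hy).2
  · exact image_congr fun i hi => absorb_gapPos_add (mem_range.1 hi)

lemma image_absorb_window_succ {J : ℕ} (hJ : A.gapEdge ≤ J) :
    (A.window (J + 1)).image (A.absorb f u) = (A.randomEdge J).image f := by
  rw [randomEdge, if_pos hJ, image_image]
  refine image_congr fun y hy => absorb_eq_source ?_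
  rw [← Nat.succ_mul]
  exact (Nat.mul_le_mul_right _ (Nat.succ_le_succ hJ)).trans (mem_Ico.1 hy).1

variable (A) in
/-- The sequence `f` of vertices, with `u` exchanged into it, has all the edges that an absorber is
required to have in the hypergraph `H`. -/
structure IsHostLayout (H : Finset (Finset V)) (f u : ℕ → V) : Prop where
  image_window_mem : ∀ J < A.T - 1, A.IsHostEdge J → (A.window J).image (A.exchange f u) ∈ H
  image_gap_mem : (Ico (A.gapEdge * A.d) A.gapPos).image (A.exchange f u) ∪
    (range A.d).image (f ∘ A.pivot) ∈ H

lemma image_randomEdge_mem {E : Finset (Finset V)} {w : Fin A.order → V}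
    (hE : copyEdges A.template w ⊆ E) {J : ℕ} (hJ : J ∈ A.randomIdx) :
    (A.randomEdge J).image (A.toSeq w) ∈ E := by
  rw [← image_filter_val_mem (fun y => lt_order_of_mem_randomEdge (lt_of_mem_randomIdx hJ))
    (eq_toSeq_val w)]
  exact hE (mem_image_of_mem _ (mem_image_of_mem _ hJ))

variable {H E : Finset (Finset V)} {w : Fin A.order → V}

lemma image_window_mem_union (hH : A.IsHostLayout H (A.toSeq w) u)
    (hE : copyEdges A.template w ⊆ E) {J : ℕ} (hJ : J < A.T - 1) :
    (A.window J).image (A.toSeq w) ∈ H ∪ E := by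
  rcases lt_or_ge (J % A.t) A.m with hm | hm
  · rw [← A.randomEdge_eq_window hJ hm]
    exact mem_union_right _ <| image_randomEdge_mem hE <|
      mem_filter.2 ⟨mem_range.2 hJ, Or.inr (Or.inl hm)⟩
  by_cases hhost : A.IsHostEdge J
  · rw [← A.image_exchange_window (A.toSeq w) u hm]
    exact mem_union_left _ (hH.image_window_mem J hJ hhost)
  · have hwindow : A.randomEdge J = A.window J :=
      if_neg fun h => hhost (Or.inr (le_self_add.trans h))
    rw [← hwindow]
    exact mem_union_right _ <| image_randomEdge_mem hE <|
      mem_filter.2 ⟨mem_range.2 hJ, Or.inr (Or.inr hhost)⟩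

lemma image_absorb_window_mem_union (hH : A.IsHostLayout H (A.toSeq w) u)
    (hE : copyEdges A.template w ⊆ E) {J : ℕ} (hJ : J < A.T) :
    (A.window J).image (A.absorb (A.toSeq w) u) ∈ H ∪ E := by
  have hgap := A.gapEdge_lt
  rcases lt_trichotomy J A.gapEdge with hlt | rfl | hgt
  · rw [image_absorb_window_of_lt hlt]
    by_cases hhost : A.IsHostEdge J
    · exact mem_union_left _ (hH.image_window_mem J (by omega) hhost)
    · have hg : A.g < J % A.t := not_le.1 fun h => hhost (Or.inl h)
      rw [A.image_exchange_window _ u (by rcases A.m_le_g_or with h | h <;> omega)]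
      exact image_window_mem_union hH hE (by omega)
  · rw [image_absorb_window_gapEdge]
    exact mem_union_left _ hH.image_gap_mem
  · obtain ⟨J, rfl⟩ := Nat.exists_eq_add_one_of_ne_zero (Nat.ne_zero_of_lt hgt)
    rw [image_absorb_window_succ (Nat.le_of_lt_succ hgt)]
    exact mem_union_right _ <| image_randomEdge_mem hE <|
      mem_filter.2 ⟨mem_range.2 (by omega), Or.inl (Nat.le_of_lt_succ hgt)⟩

variable (A) in
/-- The tuples outside of `U` that become absorbers for the vertex set `W` as soon as the random
hypergraph contains the corresponding copy of the template. -/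
noncomputable def absorberCandidates [Fintype V] (H : Finset (Finset V)) (U W : Finset V) :
    Finset (Fin A.order → V) :=
  {w | Function.Injective w ∧ (∀ y, w y ∉ U) ∧ (∀ y, w y ∉ W) ∧
    ∃ u : ℕ → V, (range A.d).image u = W ∧ A.IsHostLayout H (A.toSeq w) u}

end Image

variable {n : ℕ} {H E : Finset (Finset (Fin n))} {U W : Finset (Fin n)}
  {w : Fin A.order → Fin n}

lemma spansPath_of_mem_absorberCandidates (hw : w ∈ A.absorberCandidates H U W)
    (hE : copyEdges A.template w ⊆ E) : SpansPath A.k A.l (A.T - 1) (H ∪ E) w := by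
  obtain ⟨hinj, -, -, u, -, hH⟩ := (mem_filter.1 hw).2
  exact spansPath_of_forall_image_window_mem (eq_toSeq_val w) hinj
    (fun J hJ => A.window_le_order hJ) fun J hJ => image_window_mem_union hH hE hJ

lemma firstEnd_mem_shadowL (hw : w ∈ A.absorberCandidates H U W) :
    firstEnd A.l w ∈ shadowL A.l H := by
  obtain ⟨hinj, -, -, u, -, hH⟩ := (mem_filter.1 hw).2
  have hlb : A.l ≤ A.order := Nat.le_add_left _ _
  have hmem := hH.image_window_mem 0 (by have := A.two_le_T; omega)
    (Or.inl (by rw [Nat.zero_mod]; exact Nat.zero_le _))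
  rw [firstEnd_eq_image_range (eq_toSeq_val w) hlb]
  refine image_mem_shadowL (fun y hy => (mem_range.1 hy).trans_le hlb) (card_range _)
    (eq_toSeq_val w) hinj (fun y hy => ?_) (fun y hy => A.exchange_of_lt (mem_range.1 hy)) hmem
  have := A.k_eq
  rw [mem_range] at hy
  exact mem_Ico.2 (by omega)

lemma lastEnd_mem_shadowL (hw : w ∈ A.absorberCandidates H U W) :
    lastEnd A.l w ∈ shadowL A.l H := by
  obtain ⟨hinj, -, -, u, -, hH⟩ := (mem_filter.1 hw).2
  have := A.two_le_T
  have := A.two_le_t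
  have := A.lastBlock_add_t
  have := A.k_eq
  have := A.order_eq
  have := A.gapPos_le
  have hwindow := A.window_T_sub_two
  have hmem := hH.image_window_mem (A.T - 2) (by omega) (Or.inr (by omega))
  rw [lastEnd_eq_image_Ico (eq_toSeq_val w)]
  have hcard : #(Ico (A.order - A.l) A.order) = A.l := by rw [Nat.card_Ico]; omega
  refine image_mem_shadowL (fun y hy => (mem_Ico.1 hy).2) hcard (eq_toSeq_val w) hinj
    (fun y hy => ?_) (fun y hy => A.exchange_of_gapPos_le ?_) hmem
  · rw [mem_Ico] at hy
    exact mem_Ico.2 (by omega)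
  · rw [mem_Ico] at hy
    omega

lemma isAbsorber_of_mem_absorberCandidates (hW : #W = A.d)
    (hw : w ∈ A.absorberCandidates H U W) (hE : copyEdges A.template w ⊆ E) :
    IsAbsorber A.k A.l (A.T - 1) (H ∪ E) w W := by
  obtain ⟨hinj, -, hwW, u, huW, hH⟩ := (mem_filter.1 hw).2
  have hT := A.two_le_T
  have hlb : A.l ≤ A.order := Nat.le_add_left _ _
  set w' : Fin (A.order + #W) → Fin n := fun y => A.absorb (A.toSeq w) u y
  have hw'_val : ∀ y, w' y = A.absorb (A.toSeq w) u y := fun _ => rfl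
  have himage : univ.image w' = univ.image w ∪ W := by
    rw [image_univ_eq_image_range hw'_val, image_univ_eq_image_range (eq_toSeq_val w), hW,
      image_absorb_range, huW]
  have hinj' : Function.Injective w' := by
    rw [← Set.injOn_univ, ← coe_univ, ← card_image_iff, himage, card_union_of_disjoint,
      card_image_of_injective _ hinj, card_univ, card_univ, Fintype.card_fin, Fintype.card_fin]
    exact disjoint_left.2 fun v hv => by
      obtain ⟨y, -, rfl⟩ := mem_image.1 hv
      exact hwW y
  refine ⟨hwW, w', spansPath_of_forall_image_window_mem hw'_val hinj' (fun J hJ => ?_)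
    (fun J hJ => image_absorb_window_mem_union hH hE (by omega)), himage, ?_, ?_⟩
  · have := A.window_T_sub_two
    have := Nat.mul_le_mul_right A.d (show J ≤ A.T - 2 + 1 by omega)
    rw [add_mul] at this
    omega
  · rw [firstEnd_eq_image_range hw'_val (by omega), image_absorb_range_l,
      firstEnd_eq_image_range (eq_toSeq_val w) hlb]
  · rw [lastEnd_eq_image_Ico hw'_val, hW, image_absorb_Ico_order_add_d,
      lastEnd_eq_image_Ico (eq_toSeq_val w)]

end AbsorberShape

section CleanEdges

variable {V : Type*} [DecidableEq V] {H : Finset (Finset V)} {U : Finset V} {d l : ℕ}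

/-- The edges of `H` containing `S` that have no further vertices in `U`. -/
noncomputable def cleanEdges (H : Finset (Finset V)) (U S : Finset V) : Finset (Finset V) :=
  {e ∈ H | S ⊆ e ∧ Disjoint (e \ S) U}

/-- The edges of `H` containing `v` that have at most `j` further vertices in `U`. -/
noncomputable def nearlyCleanEdges (H : Finset (Finset V)) (U : Finset V) (v : V) (j : ℕ) :
    Finset (Finset V) :=
  {e ∈ H | v ∈ e ∧ #(e.erase v ∩ U) ≤ j}

lemma nearlyCleanEdges_zero_subset (v : V) :
    nearlyCleanEdges H U v 0 ⊆ cleanEdges H U {v} := fun e he => by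
  obtain ⟨he, hv, hU⟩ := mem_filter.1 he
  refine mem_filter.2 ⟨he, singleton_subset_iff.2 hv, ?_⟩
  rwa [sdiff_singleton_eq_erase, disjoint_iff_inter_eq_empty, ← card_eq_zero, ← Nat.le_zero]

lemma filter_mem_subset_nearlyCleanEdges {k : ℕ} (hk : ∀ e ∈ H, #e = k) (v : V) :
    {e ∈ H | v ∈ e} ⊆ nearlyCleanEdges H U v k := fun e he => by
  obtain ⟨he, hv⟩ := mem_filter.1 he
  refine mem_filter.2 ⟨he, hv, ?_⟩
  rw [← hk e he]
  exact card_le_card (inter_subset_left.trans (erase_subset _ _))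

lemma exists_subset_card_eq_card_erase_inter_le {e : Finset V} {v : V} {j : ℕ} (hd : 0 < d)
    (hl : 0 < l) (hcard : #e = d + l) (hv : v ∈ e) (he : #(e.erase v ∩ U) ≤ j + 1) :
    ∃ S ⊆ e, v ∈ S ∧ #S = l ∧ #(S.erase v ∩ U) ≤ j := by
  obtain ⟨x, hx, hxj⟩ : ∃ x ∈ e.erase v, #((e.erase v ∩ U).erase x) ≤ j := by
    rcases (e.erase v ∩ U).eq_empty_or_nonempty with hempty | ⟨x, hx⟩
    · obtain ⟨x, hx⟩ : (e.erase v).Nonempty := by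
        rw [← card_pos, card_erase_of_mem hv]
        omega
      exact ⟨x, hx, by simp [hempty]⟩
    · exact ⟨x, (mem_inter.1 hx).1, by rw [card_erase_of_mem hx]; omega⟩
  obtain ⟨hxv, hxe⟩ := mem_erase.1 hx
  obtain ⟨S, hvS, hSe, hS⟩ := exists_subsuperset_card_eq
    (singleton_subset_iff.2 (mem_erase.2 ⟨hxv.symm, hv⟩))
    (show #{v} ≤ l by rwa [card_singleton])
    (show l ≤ #(e.erase x) by rw [card_erase_of_mem hxe]; omega)
  refine ⟨S, hSe.trans (erase_subset _ _), singleton_subset_iff.1 hvS, hS,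
    (card_le_card fun y hy => ?_).trans hxj⟩
  simp only [mem_inter, mem_erase] at hy ⊢
  have := mem_erase.1 (hSe hy.1.2)
  exact ⟨this.1, ⟨hy.1.1, this.2⟩, hy.2⟩

lemma cleanEdges_subset_nearlyCleanEdges {S : Finset V} {v : V} {j : ℕ} (hv : v ∈ S)
    (hS : #(S.erase v ∩ U) ≤ j) : cleanEdges H U S ⊆ nearlyCleanEdges H U v j := fun e he => by
  obtain ⟨he, hSe, hU⟩ := mem_filter.1 he
  refine mem_filter.2 ⟨he, hSe hv, (card_le_card fun y hy => ?_).trans hS⟩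
  simp only [mem_inter, mem_erase] at hy ⊢
  exact ⟨⟨hy.1.1, by_contra fun hyS => disjoint_left.1 hU (mem_sdiff.2 ⟨hy.1.2, hyS⟩) hy.2⟩, hy.2⟩

variable [Fintype V]

lemma card_filter_subset_le {k : ℕ} (hk : ∀ e ∈ H, #e = k) (S : Finset V) :
    #{e ∈ H | S ⊆ e} ≤ Fintype.card V ^ (k - #S) := by
  have hmaps : ∀ e ∈ {e ∈ H | S ⊆ e}, e \ S ∈ powersetCard (k - #S) univ := fun e he => by
    obtain ⟨he, hS⟩ := mem_filter.1 he
    exact mem_powersetCard.2 ⟨subset_univ _, by rw [card_sdiff_of_subset hS, hk e he]⟩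
  have hinj : Set.InjOn (· \ S) ({e ∈ H | S ⊆ e} : Finset (Finset V)) := fun e he e' he' h => by
    rw [← sdiff_union_of_subset (mem_filter.1 he).2, ← sdiff_union_of_subset (mem_filter.1 he').2]
    exact congrArg (· ∪ S) h
  calc #{e ∈ H | S ⊆ e} ≤ #(powersetCard (k - #S) (univ : Finset V)) :=
        card_le_card_of_injOn _ hmaps hinj
    _ ≤ Fintype.card V ^ (k - #S) := by
        rw [card_powersetCard, card_univ]
        exact Nat.choose_le_pow _ _

lemma le_card_cleanEdges {η : ℝ} {S : Finset V} (hH : ∀ e ∈ H, #e = d + l) (hd : 0 < d)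
    (hS : #S = l) (hU : (#U : ℝ) ≤ η * Fintype.card V / 3)
    (hη : η * (Fintype.card V : ℝ) ^ d ≤ #{e ∈ H | S ⊆ e}) :
    2 * η / 3 * (Fintype.card V : ℝ) ^ d ≤ #(cleanEdges H U S) := by
  have hcover : {e ∈ H | S ⊆ e} ⊆
      cleanEdges H U S ∪ (U \ S).biUnion fun x => {e ∈ H | insert x S ⊆ e} := fun e he => by
    obtain ⟨he, hSe⟩ := mem_filter.1 he
    by_cases h : Disjoint (e \ S) U
    · exact mem_union_left _ (mem_filter.2 ⟨he, hSe, h⟩)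
    obtain ⟨x, hx, hxU⟩ := not_disjoint_iff.1 h
    obtain ⟨hxe, hxS⟩ := mem_sdiff.1 hx
    exact mem_union_right _ <| mem_biUnion.2
      ⟨x, mem_sdiff.2 ⟨hxU, hxS⟩, mem_filter.2 ⟨he, insert_subset hxe hSe⟩⟩
  have hdirty : #((U \ S).biUnion fun x => {e ∈ H | insert x S ⊆ e}) ≤
      #U * Fintype.card V ^ (d - 1) := by
    refine (card_biUnion_le_card_mul _ _ _ fun x hx => ?_).trans
      (Nat.mul_le_mul_right _ (card_le_card sdiff_subset))
    have := card_filter_subset_le hH (insert x S)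
    rwa [card_insert_of_notMem (mem_sdiff.1 hx).2, hS, add_comm l, Nat.add_sub_add_right] at this
  have hle : (#{e ∈ H | S ⊆ e} : ℝ) ≤
      #(cleanEdges H U S) + #U * (Fintype.card V : ℝ) ^ (d - 1) := by
    exact_mod_cast (card_le_card hcover).trans <|
      (card_union_le _ _).trans (Nat.add_le_add_left hdirty _)
  have hpow : (Fintype.card V : ℝ) ^ d = Fintype.card V * (Fintype.card V : ℝ) ^ (d - 1) := by
    rw [← pow_succ', Nat.sub_add_cancel hd]
  have := mul_le_mul_of_nonneg_right hU (pow_nonneg (Nat.cast_nonneg (Fintype.card V)) (d - 1))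
  rw [hpow] at hη ⊢
  linarith

lemma mul_card_nearlyCleanEdges_succ_le {δ : ℝ} (hH : ∀ e ∈ H, #e = d + l)
    (hδ : ∀ S, #S = l → ∀ e ∈ H, S ⊆ e → δ * (Fintype.card V : ℝ) ^ d ≤ #(cleanEdges H U S))
    (hd : 0 < d) (hl : 0 < l) (v : V) (j : ℕ) :
    δ / (d + l).choose l * #(nearlyCleanEdges H U v (j + 1)) ≤ #(nearlyCleanEdges H U v j) := by
  have hV : (0 : ℝ) < (Fintype.card V : ℝ) ^ d :=
    pow_pos (Nat.cast_pos.2 (Fintype.card_pos_iff.2 ⟨v⟩)) d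
  have hchoose : (0 : ℝ) < (d + l).choose l := Nat.cast_pos.2 (Nat.choose_pos (by omega))
  set r : Finset V → Finset V → Prop := fun e e' => ∃ S, #S = l ∧ S ⊆ e ∧ S ⊆ e'
  have habove : ∀ e ∈ nearlyCleanEdges H U v (j + 1), δ * (Fintype.card V : ℝ) ^ d ≤
      #((nearlyCleanEdges H U v j).bipartiteAbove r e) := fun e he => by
    obtain ⟨he, hve, hj⟩ := mem_filter.1 he
    obtain ⟨S, hSe, hvS, hS, hSj⟩ :=
      exists_subset_card_eq_card_erase_inter_le hd hl (hH e he) hve hj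
    refine (hδ S hS e he hSe).trans (Nat.cast_le.2 (card_le_card fun e' he' => ?_))
    exact mem_filter.2 ⟨cleanEdges_subset_nearlyCleanEdges hvS hSj he', S, hS, hSe,
      (mem_filter.1 he').2.1⟩
  have hbelow : ∀ e' ∈ nearlyCleanEdges H U v j,
      (#((nearlyCleanEdges H U v (j + 1)).bipartiteBelow r e') : ℝ) ≤
        (d + l).choose l * (Fintype.card V : ℝ) ^ d := fun e' he' => by
    have hsub : (nearlyCleanEdges H U v (j + 1)).bipartiteBelow r e' ⊆
        (e'.powersetCard l).biUnion fun S => {e ∈ H | S ⊆ e} := fun e he => by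
      obtain ⟨he, S, hS, hSe, hSe'⟩ := mem_filter.1 he
      exact mem_biUnion.2 ⟨S, mem_powersetCard.2 ⟨hSe', hS⟩,
        mem_filter.2 ⟨(mem_filter.1 he).1, hSe⟩⟩
    have hcard := (card_le_card hsub).trans <| card_biUnion_le_card_mul _ _
      (Fintype.card V ^ d) fun S hS => by
        simpa [(mem_powersetCard.1 hS).2] using card_filter_subset_le hH S
    rw [card_powersetCard, hH e' (mem_filter.1 he').1] at hcard
    exact_mod_cast hcard
  have hdouble := card_nsmul_le_card_nsmul r habove hbelow
  rw [nsmul_eq_mul, nsmul_eq_mul, ← mul_assoc, ← mul_assoc, mul_le_mul_iff_left₀ hV] at hdouble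
  rwa [div_mul_eq_mul_div, div_le_iff₀ hchoose, mul_comm δ]

lemma mul_card_filter_mem_le_card_cleanEdges {δ : ℝ} (hH : ∀ e ∈ H, #e = d + l)
    (hδ : ∀ S, #S = l → ∀ e ∈ H, S ⊆ e → δ * (Fintype.card V : ℝ) ^ d ≤ #(cleanEdges H U S))
    (hd : 0 < d) (hl : 0 < l) (hδ₀ : 0 ≤ δ) (v : V) :
    (δ / (d + l).choose l) ^ (d + l) * #{e ∈ H | v ∈ e} ≤ #(cleanEdges H U {v}) := by
  have hpow : ∀ j, (δ / (d + l).choose l) ^ j * #(nearlyCleanEdges H U v j) ≤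
      #(nearlyCleanEdges H U v 0) := fun j => by
    induction j with
    | zero => rw [pow_zero, one_mul]
    | succ j ih =>
      rw [pow_succ, mul_assoc]
      exact (mul_le_mul_of_nonneg_left (mul_card_nearlyCleanEdges_succ_le hH hδ hd hl v j)
        (by positivity)).trans ih
  calc (δ / (d + l).choose l) ^ (d + l) * #{e ∈ H | v ∈ e}
      ≤ (δ / (d + l).choose l) ^ (d + l) * #(nearlyCleanEdges H U v (d + l)) := by
        gcongr
        exact filter_mem_subset_nearlyCleanEdges hH v
    _ ≤ #(nearlyCleanEdges H U v 0) := hpow _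
    _ ≤ #(cleanEdges H U {v}) := Nat.cast_le.2 (card_le_card (nearlyCleanEdges_zero_subset v))

end CleanEdges

section TupleCounting

variable {β V : Type*} [Fintype β] [DecidableEq β] [Fintype V]

lemma card_filter_exists_mem_le (A : Finset V) [DecidablePred fun w : β → V => ∃ y, w y ∈ A] :
    #{w : β → V | ∃ y, w y ∈ A} ≤
      Fintype.card β * (#A * Fintype.card V ^ (Fintype.card β - 1)) := by
  classical
  have hsub : ({w : β → V | ∃ y, w y ∈ A} : Finset (β → V)) ⊆
      univ.biUnion fun y => {w : β → V | ∀ z ∈ ({y} : Finset β), w z ∈ A} := fun w hw => by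
    obtain ⟨y, hy⟩ := (mem_filter.1 hw).2
    exact mem_biUnion.2 ⟨y, mem_univ _, mem_filter.2
      ⟨mem_univ _, fun z hz => (mem_singleton.1 hz).symm ▸ hy⟩⟩
  refine (card_le_card hsub).trans (card_biUnion_le_card_mul _ _ _ fun y _ => ?_)
  rw [card_filter_forall_mem, card_singleton, pow_one]

lemma card_filter_apply_eq_apply_le [DecidableEq V] {y z : β} (hyz : y ≠ z) :
    #{w : β → V | w y = w z} ≤ Fintype.card V ^ (Fintype.card β - 1) := by
  have hcard : #(univ : Finset ({x // x ≠ y} → V)) = Fintype.card V ^ (Fintype.card β - 1) := by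
    rw [card_univ, Fintype.card_fun, Fintype.card_subtype_compl, Fintype.card_subtype_eq]
  rw [← hcard]
  refine card_le_card_of_injOn (fun w x => w x) (fun _ _ => mem_univ _) fun w hw w' hw' h => ?_
  have hoff : ∀ x ≠ y, w x = w' x := fun x hx => congrFun h ⟨x, hx⟩
  funext x
  rcases eq_or_ne x y with rfl | hx
  · exact (mem_filter.1 hw).2.trans ((hoff z hyz.symm).trans (mem_filter.1 hw').2.symm)
  · exact hoff x hx

variable (β V) in
lemma card_filter_not_injective_le [DecidablePred fun w : β → V => ¬ Function.Injective w] :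
    #{w : β → V | ¬ Function.Injective w} ≤
      Fintype.card β ^ 2 * Fintype.card V ^ (Fintype.card β - 1) := by
  classical
  have hsub : ({w : β → V | ¬ Function.Injective w} : Finset (β → V)) ⊆
      (univ : Finset β).offDiag.biUnion fun p => {w : β → V | w p.1 = w p.2} := fun w hw => by
    obtain ⟨y, z, h, hyz⟩ := Function.not_injective_iff.1 (mem_filter.1 hw).2
    exact mem_biUnion.2 ⟨(y, z), mem_offDiag.2 ⟨mem_univ _, mem_univ _, hyz⟩,
      mem_filter.2 ⟨mem_univ _, h⟩⟩
  refine (card_le_card hsub).trans <| (card_biUnion_le_card_mul _ _ _ fun p hp =>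
    card_filter_apply_eq_apply_le (mem_offDiag.1 hp).2.2).trans (Nat.mul_le_mul_right _ ?_)
  rw [offDiag_card, card_univ, sq]
  exact Nat.sub_le _ _

variable [DecidableEq V]

/-- The tuples that agree with `w` outside of the index set `Q`. -/
noncomputable def agreeing (Q : Finset β) (w : β → V) : Finset (β → V) := {w' | ∀ y ∉ Q, w' y = w y}

lemma mem_agreeing {Q : Finset β} {w w' : β → V} : w' ∈ agreeing Q w ↔ ∀ y ∉ Q, w' y = w y := by
  rw [agreeing, mem_filter, and_iff_right (mem_univ _)]

lemma mem_agreeing_comm {Q : Finset β} {w w' : β → V} : w' ∈ agreeing Q w ↔ w ∈ agreeing Q w' := by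
  simp only [mem_agreeing, eq_comm]

lemma card_agreeing (Q : Finset β) (w : β → V) : #(agreeing Q w) = Fintype.card V ^ #Q := by
  have hpi : agreeing Q w = Fintype.piFinset fun y => if y ∈ Q then univ else {w y} := by
    ext w'
    rw [mem_agreeing, Fintype.mem_piFinset]
    refine forall_congr' fun y => ?_
    split_ifs with hy <;> simp [hy]
  rw [hpi, Fintype.card_piFinset]
  simp only [apply_ite card, card_singleton, prod_ite, prod_const, one_pow, mul_one, card_univ,
    filter_mem_eq_inter, univ_inter]

/-- Here `B s` is a condition that can be met by a choice of the entries in `Pos s`, and that is not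
affected by the later choices. -/
lemma pow_mul_card_le_card_filter_forall_lt [Nonempty V] {c : ℝ} (hc : 0 ≤ c) {S : ℕ}
    {Pos : ℕ → Finset β} {B : ℕ → (β → V) → Prop} {X : Finset (β → V)}
    (hX : ∀ s < S, ∀ w ∈ X, agreeing (Pos s) w ⊆ X)
    (hB : ∀ s < S, ∀ r < s, ∀ w, ∀ w' ∈ agreeing (Pos s) w, B r w → B r w')
    (hstep : ∀ s < S, ∀ w, (∀ r < s, B r w) →
      c * (Fintype.card V : ℝ) ^ #(Pos s) ≤ #{w' ∈ agreeing (Pos s) w | B s w'}) :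
    c ^ S * #X ≤ #{w ∈ X | ∀ s < S, B s w} := by
  induction S with
  | zero => simp
  | succ S ih =>
    have hN : (0 : ℝ) < (Fintype.card V : ℝ) ^ #(Pos S) :=
      pow_pos (Nat.cast_pos.2 Fintype.card_pos) _
    set Y : Finset (β → V) := {w ∈ X | ∀ s < S, B s w}
    set Z : Finset (β → V) := {w ∈ X | ∀ s < S + 1, B s w}
    have habove : ∀ w ∈ Y, c * (Fintype.card V : ℝ) ^ #(Pos S) ≤
        #(Z.bipartiteAbove (fun w w' => w' ∈ agreeing (Pos S) w) w) := fun w hw => by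
      obtain ⟨hwX, hw⟩ := mem_filter.1 hw
      refine (hstep S S.lt_succ_self w hw).trans (Nat.cast_le.2 (card_le_card fun w' hw' => ?_))
      obtain ⟨hagree, hw'⟩ := mem_filter.1 hw'
      refine mem_filter.2 ⟨mem_filter.2 ⟨hX S S.lt_succ_self w hwX hagree, fun s hs => ?_⟩, hagree⟩
      rcases Nat.lt_succ_iff_lt_or_eq.1 hs with h | rfl
      exacts [hB S S.lt_succ_self s h w w' hagree (hw s h), hw']
    have hbelow : ∀ w' ∈ Z, (#(Y.bipartiteBelow (fun w w' => w' ∈ agreeing (Pos S) w) w') : ℝ) ≤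
        (Fintype.card V : ℝ) ^ #(Pos S) := fun w' _ => by
      have hsub : Y.bipartiteBelow (fun w w' => w' ∈ agreeing (Pos S) w) w' ⊆
          agreeing (Pos S) w' := fun w hw => mem_agreeing_comm.1 (mem_filter.1 hw).2
      exact_mod_cast (card_le_card hsub).trans_eq (card_agreeing _ _)
    have hdouble := card_nsmul_le_card_nsmul _ habove hbelow
    rw [nsmul_eq_mul, nsmul_eq_mul, ← mul_assoc, mul_le_mul_iff_left₀ hN, mul_comm] at hdouble
    refine le_trans ?_ hdouble
    rw [pow_succ', mul_assoc]
    exact mul_le_mul_of_nonneg_left (ih (fun s hs => hX s (by omega))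
      (fun s hs => hB s (by omega)) fun s hs => hstep s (by omega)) hc

lemma card_le_card_filter_agreeing_image_mem (Q : Finset β) (w : β → V) {𝒟 : Finset (Finset V)}
    (h𝒟 : ∀ D ∈ 𝒟, #D = #Q) : #𝒟 ≤ #{w' ∈ agreeing Q w | Q.image w' ∈ 𝒟} := by
  refine card_le_card_of_surjOn (fun w' => Q.image w') fun D hD => ?_
  let e : Q ≃ D := equivOfCardEq (h𝒟 D hD).symm
  let w' : β → V := fun y => if h : y ∈ Q then e ⟨y, h⟩ else w y
  have hw' : ∀ y (hy : y ∈ Q), w' y = e ⟨y, hy⟩ := fun y hy => dif_pos hy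
  have himage : Q.image w' = D := by
    ext x
    refine mem_image.trans ⟨fun ⟨y, hy, hyx⟩ => ?_, fun hx => ?_⟩
    · rw [← hyx, hw' y hy]
      exact (e ⟨y, hy⟩).2
    · refine ⟨e.symm ⟨x, hx⟩, (e.symm ⟨x, hx⟩).2, ?_⟩
      rw [hw' _ (e.symm ⟨x, hx⟩).2, Subtype.coe_eta, Equiv.apply_symm_apply]
  exact ⟨w', mem_filter.2 ⟨mem_agreeing.2 fun y hy => dif_neg hy, himage.symm ▸ hD⟩, himage⟩

end TupleCounting

namespace AbsorberShape

variable (A : AbsorberShape)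

section Positions

/-- The positions whose vertices are already determined when the `s`-th host edge is chosen. The
index `T - 1`, beyond the edges of the path, stands for the edge of the extended path at the gap. In
the first edge of a block only the vertex of the absorbed set is determined. -/
def fixedPos (s : ℕ) : Finset ℕ :=
  if s = A.T - 1 then Ico (A.gapEdge * A.d) A.gapPos
  else if s % A.t = 0 then {A.pivot (s / A.t)}
  else Ico (s * A.d) (s * A.d + A.l)

/-- The positions whose vertices are chosen together with the `s`-th host edge. -/
noncomputable def newPos (s : ℕ) : Finset ℕ :=
  if s = A.T - 1 then (range A.d).image A.pivot
  else if A.IsHostEdge s then A.window s \ A.fixedPos s else ∅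

/-- The set `A.newPos s` as a set of indices of tuples. -/
noncomputable def newIdx (s : ℕ) : Finset (Fin A.order) :=
  univ.filter fun y : Fin A.order => (y : ℕ) ∈ A.newPos s

lemma isHostEdge_T_sub_one : A.IsHostEdge (A.T - 1) := by
  have := A.lastBlock_add_t
  have := A.two_le_t
  exact Or.inr (by omega)

variable {A} {s : ℕ}

lemma fixedPos_T_sub_one : A.fixedPos (A.T - 1) = Ico (A.gapEdge * A.d) A.gapPos := if_pos rfl

lemma fixedPos_of_mod_eq_zero (hs : s < A.T - 1) (hmod : s % A.t = 0) :
    A.fixedPos s = {A.pivot (s / A.t)} := by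
  rw [fixedPos, if_neg hs.ne, if_pos hmod]

lemma fixedPos_of_mod_ne_zero (hs : s < A.T - 1) (hmod : s % A.t ≠ 0) :
    A.fixedPos s = Ico (s * A.d) (s * A.d + A.l) := by
  rw [fixedPos, if_neg hs.ne, if_neg hmod]

lemma newPos_T_sub_one : A.newPos (A.T - 1) = (range A.d).image A.pivot := if_pos rfl

lemma newPos_of_isHostEdge (hs : s < A.T - 1) (h : A.IsHostEdge s) :
    A.newPos s = A.window s \ A.fixedPos s := by
  rw [newPos, if_neg hs.ne, if_pos h]

lemma newPos_of_not_isHostEdge (h : ¬ A.IsHostEdge s) : A.newPos s = ∅ := by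
  have hs : s ≠ A.T - 1 := fun hs => h (hs ▸ A.isHostEdge_T_sub_one)
  rw [newPos, if_neg hs, if_neg h]

lemma div_t_lt_d (hs : s < A.T) : s / A.t < A.d := Nat.div_lt_of_lt_mul hs

lemma pivot_mem_window (hmod : s % A.t = 0) : A.pivot (s / A.t) ∈ A.window s := by
  have := A.m_mul_d_le
  have := A.m_mul_d_pos
  have := A.k_eq
  rw [window, mem_Ico, A.mul_d_eq s, hmod, zero_mul, add_zero, pivot]
  omega

lemma fixedPos_subset_window (hs : s < A.T - 1) : A.fixedPos s ⊆ A.window s := by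
  by_cases hmod : s % A.t = 0
  · rw [fixedPos_of_mod_eq_zero hs hmod, singleton_subset_iff]
    exact pivot_mem_window hmod
  · rw [fixedPos_of_mod_ne_zero hs hmod]
    exact Ico_subset_Ico_right (by rw [k]; omega)

lemma pivot_mem_fixedPos {i : ℕ} (hs : s < A.T - 1) (hi : A.pivot i ∈ A.window s) :
    A.pivot i ∈ A.fixedPos s := by
  obtain ⟨hdiv, -⟩ := A.div_t_and_mod_t_lt_of_pivot_mem_window hi
  by_cases hmod : s % A.t = 0
  · rw [fixedPos_of_mod_eq_zero hs hmod, hdiv, mem_singleton]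
  · rw [fixedPos_of_mod_ne_zero hs hmod, mem_Ico]
    refine ⟨(mem_Ico.1 hi).1, ?_⟩
    have := Nat.mul_le_mul_right A.d (Nat.one_le_iff_ne_zero.2 hmod)
    have := A.m_mul_d_le
    have := A.m_mul_d_pos
    rw [A.mul_d_eq s, pivot, hdiv]
    omega

lemma pivot_notMem_newPos {i : ℕ} (hs : s < A.T - 1) : A.pivot i ∉ A.newPos s := fun hi => by
  by_cases h : A.IsHostEdge s
  · rw [newPos_of_isHostEdge hs h, mem_sdiff] at hi
    exact hi.2 (pivot_mem_fixedPos hs hi.1)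
  · exact notMem_empty _ (newPos_of_not_isHostEdge h ▸ hi)

lemma lt_order_of_mem_window {y : ℕ} (hs : s < A.T - 1) (hy : y ∈ A.window s) : y < A.order :=
  (mem_Ico.1 hy).2.trans_le (A.window_le_order hs)

lemma fixedPos_T_sub_one_subset_window : A.fixedPos (A.T - 1) ⊆ A.window A.gapEdge := by
  rw [fixedPos_T_sub_one]
  exact Ico_subset_Ico_right (by rw [gapPos, k]; omega)

lemma lt_order_of_mem_fixedPos {y : ℕ} (hs : s < A.T) (hy : y ∈ A.fixedPos s) : y < A.order := by
  rcases eq_or_lt_of_le (Nat.le_sub_one_of_lt hs) with rfl | hs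
  · exact lt_order_of_mem_window A.gapEdge_lt (fixedPos_T_sub_one_subset_window hy)
  · exact lt_order_of_mem_window hs (fixedPos_subset_window hs hy)

lemma lt_order_of_mem_newPos {y : ℕ} (hs : s < A.T) (hy : y ∈ A.newPos s) : y < A.order := by
  rcases eq_or_lt_of_le (Nat.le_sub_one_of_lt hs) with rfl | hs
  · rw [newPos_T_sub_one] at hy
    obtain ⟨i, hi, rfl⟩ := mem_image.1 hy
    exact A.pivot_lt_order (mem_range.1 hi)
  · by_cases h : A.IsHostEdge s
    · rw [newPos_of_isHostEdge hs h] at hy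
      exact lt_order_of_mem_window hs (mem_sdiff.1 hy).1
    · exact absurd hy (newPos_of_not_isHostEdge h ▸ notMem_empty _)

lemma card_newIdx (hs : s < A.T) : #(A.newIdx s) = #(A.newPos s) := by
  rw [newIdx, ← card_image_of_injective _ Fin.val_injective,
    image_filter_val_mem (w := Fin.val) (f := id) (fun y => lt_order_of_mem_newPos hs) fun _ => rfl,
    image_id]

lemma card_fixedPos_add_card_newPos (hs : s < A.T) (h : A.IsHostEdge s) :
    #(A.fixedPos s) + #(A.newPos s) = A.k := by
  rcases eq_or_lt_of_le (Nat.le_sub_one_of_lt hs) with rfl | hs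
  · rw [fixedPos_T_sub_one, newPos_T_sub_one, card_image_of_injective _ A.pivot_injective,
      card_range, Nat.card_Ico, gapPos, Nat.add_sub_cancel_left, k, add_comm]
  · rw [newPos_of_isHostEdge hs h, add_comm,
      card_sdiff_add_card_eq_card (fixedPos_subset_window hs),
      window, Nat.card_Ico, Nat.add_sub_cancel_left]

lemma notMem_newPos_of_mem_fixedPos {y : ℕ} (hs : s < A.T) (hy : y ∈ A.fixedPos s)
    (hpivot : ∀ i < A.d, y ≠ A.pivot i) : y ∉ A.newPos s := fun hy' => by
  rcases eq_or_lt_of_le (Nat.le_sub_one_of_lt hs) with rfl | hs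
  · rw [newPos_T_sub_one] at hy'
    obtain ⟨i, hi, rfl⟩ := mem_image.1 hy'
    exact hpivot i (mem_range.1 hi) rfl
  · by_cases h : A.IsHostEdge s
    · rw [newPos_of_isHostEdge hs h] at hy'
      exact (mem_sdiff.1 hy').2 hy
    · exact notMem_empty _ (newPos_of_not_isHostEdge h ▸ hy')

lemma window_le_of_mod_eq_zero {r : ℕ} (hrs : r < s) (hs : s < A.T - 1) (hr : A.IsHostEdge r)
    (hmod : s % A.t = 0) : r * A.d + A.k ≤ s * A.d := by
  have hrg : r % A.t ≤ A.g := hr.resolve_right fun hB => by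
    have := A.eq_lastBlock_add_mod (J := s) (by omega) (by omega)
    omega
  have hdiv : r / A.t < s / A.t := by
    refine lt_of_le_of_ne (Nat.div_le_div_right hrs.le) fun h => ?_
    have := Nat.div_add_mod r A.t
    have := Nat.div_add_mod s A.t
    rw [h] at *
    omega
  have hblock := Nat.mul_le_mul_right A.T (Nat.succ_le_of_lt hdiv)
  have := Nat.mul_le_mul_right A.d hrg
  have := A.le_κ_mul_d
  have := A.T_eq
  rw [Nat.succ_mul] at hblock
  rw [A.mul_d_eq r, A.mul_d_eq s, hmod, zero_mul, k]
  omega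

lemma notMem_newPos_of_mem_window {r y : ℕ} (hrs : r < s) (hs : s < A.T) (hr : A.IsHostEdge r)
    (hy : y ∈ A.window r) (hpivot : ∀ i < A.d, y ≠ A.pivot i) : y ∉ A.newPos s := fun hy' => by
  rcases eq_or_lt_of_le (Nat.le_sub_one_of_lt hs) with rfl | hs
  · rw [newPos_T_sub_one] at hy'
    obtain ⟨i, hi, rfl⟩ := mem_image.1 hy'
    exact hpivot i (mem_range.1 hi) rfl
  by_cases h : A.IsHostEdge s
  swap
  · exact notMem_empty _ (newPos_of_not_isHostEdge h ▸ hy')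
  rw [newPos_of_isHostEdge hs h, mem_sdiff, window, mem_Ico] at hy'
  rw [window, mem_Ico] at hy
  by_cases hmod : s % A.t = 0
  · have := window_le_of_mod_eq_zero hrs hs hr hmod
    omega
  · rw [fixedPos_of_mod_ne_zero hs hmod, mem_Ico] at hy'
    have := Nat.mul_le_mul_right A.d (Nat.succ_le_of_lt hrs)
    rw [Nat.succ_mul] at this
    have := A.k_eq
    omega

lemma exists_fixedPos_subset_window (hs : s < A.T) (h : A.IsHostEdge s)
    (hmod : s = A.T - 1 ∨ s % A.t ≠ 0) :
    ∃ r < s, r < A.T - 1 ∧ A.IsHostEdge r ∧ A.fixedPos s ⊆ A.window r ∧ #(A.fixedPos s) = A.l := by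
  rcases eq_or_lt_of_le (Nat.le_sub_one_of_lt hs) with rfl | hs
  · refine ⟨A.gapEdge, A.gapEdge_lt, A.gapEdge_lt, Or.inr le_self_add,
      fixedPos_T_sub_one_subset_window, ?_⟩
    rw [fixedPos_T_sub_one, Nat.card_Ico, gapPos, Nat.add_sub_cancel_left]
  replace hmod := hmod.resolve_left hs.ne
  obtain ⟨r, rfl⟩ : ∃ r, s = r + 1 :=
    Nat.exists_eq_add_one_of_ne_zero fun h => hmod (by rw [h, Nat.zero_mod])
  have hrmod : (r + 1) % A.t = r % A.t + 1 := by
    have := Nat.mod_lt r (show 0 < A.t by have := A.two_le_t; omega)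
    rw [Nat.add_mod, Nat.mod_eq_of_lt A.two_le_t] at hmod ⊢
    rcases eq_or_ne (r % A.t + 1) A.t with heq | hne
    · exact absurd (by rw [heq, Nat.mod_self]) hmod
    · exact Nat.mod_eq_of_lt (by omega)
  rw [fixedPos_of_mod_ne_zero hs hmod]
  refine ⟨r, r.lt_succ_self, by omega, h.imp (fun h => by omega) fun h => ?_, ?_, ?_⟩
  · have := A.eq_lastBlock_add_mod h (by omega)
    omega
  · have := A.k_eq
    exact Ico_subset_Ico (by rw [add_mul]; omega) (by rw [add_mul]; omega)
  · rw [Nat.card_Ico, Nat.add_sub_cancel_left]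

end Positions

section Placing

variable {V : Type*} [DecidableEq V]

/-- The `s`-th host edge is present, and its newly chosen vertices lie outside of `U`. -/
def IsPlaced (H : Finset (Finset V)) (U : Finset V) (f u : ℕ → V) (s : ℕ) : Prop :=
  (A.IsHostEdge s → (A.fixedPos s).image (A.exchange f u) ∪ (A.newPos s).image f ∈ H) ∧
    ∀ y ∈ A.newPos s, f y ∉ U

variable {A} {H : Finset (Finset V)} {U : Finset V} {u : ℕ → V} {s : ℕ}

lemma fixedPos_image_union_newPos_image (f : ℕ → V) (hs : s < A.T - 1) (h : A.IsHostEdge s) :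
    (A.fixedPos s).image (A.exchange f u) ∪ (A.newPos s).image f =
      (A.window s).image (A.exchange f u) := by
  have hnew : (A.newPos s).image f = (A.newPos s).image (A.exchange f u) :=
    image_congr fun y hy => (A.exchange_of_ne fun i _ hyi =>
      pivot_notMem_newPos hs (hyi ▸ mem_coe.1 hy)).symm
  rw [hnew, ← image_union, newPos_of_isHostEdge hs h,
    union_sdiff_of_subset (fixedPos_subset_window hs)]

lemma isHostLayout_of_isPlaced {f : ℕ → V} (h : ∀ s < A.T, A.IsPlaced H U f u s) :
    A.IsHostLayout H f u where
  image_window_mem J hJ hhost := by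
    rw [← fixedPos_image_union_newPos_image f hJ hhost]
    exact (h J (by omega)).1 hhost
  image_gap_mem := by
    have := (h (A.T - 1) (by have := A.two_le_T; omega)).1 A.isHostEdge_T_sub_one
    rwa [fixedPos_T_sub_one, newPos_T_sub_one, image_image] at this

lemma card_image_fixedPos (hH : ∀ e ∈ H, #e = A.k) {r : ℕ} (hr : r < A.T - 1)
    (hhost : A.IsHostEdge r) (hsub : A.fixedPos s ⊆ A.window r) {f : ℕ → V}
    (h : A.IsPlaced H U f u r) :
    (A.window r).image (A.exchange f u) ∈ H ∧
      #((A.fixedPos s).image (A.exchange f u)) = #(A.fixedPos s) := by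
  have hmem := h.1 hhost
  rw [fixedPos_image_union_newPos_image f hr hhost] at hmem
  refine ⟨hmem, card_image_of_injOn (Set.InjOn.mono (coe_subset.2 hsub) (card_image_iff.1 ?_))⟩
  rw [hH _ hmem, window, Nat.card_Ico, Nat.add_sub_cancel_left]

variable {w w' : Fin A.order → V}

lemma toSeq_eq_of_mem_agreeing {y : ℕ} [Fintype V] (hw : w' ∈ agreeing (A.newIdx s) w)
    (hy : y < A.order) (hys : y ∉ A.newPos s) : A.toSeq w' y = A.toSeq w y := by
  refine mem_agreeing.1 hw _ fun h => hys ?_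
  rw [newIdx, mem_filter, Fin.val_ofNat, Nat.mod_eq_of_lt hy] at h
  exact h.2

lemma exchange_eq_of_mem_agreeing {y : ℕ} [Fintype V] (hw : w' ∈ agreeing (A.newIdx s) w)
    (hy : y < A.order) (hys : (∀ i < A.d, y ≠ A.pivot i) → y ∉ A.newPos s) :
    A.exchange (A.toSeq w') u y = A.exchange (A.toSeq w) u y := by
  by_cases h : ∀ i < A.d, y ≠ A.pivot i
  · rw [A.exchange_of_ne h, A.exchange_of_ne h, toSeq_eq_of_mem_agreeing hw hy (hys h)]
  · push Not at h
    obtain ⟨i, hi, rfl⟩ := h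
    rw [A.exchange_pivot _ _ hi, A.exchange_pivot _ _ hi]

lemma IsPlaced.of_mem_agreeing [Fintype V] {r : ℕ} (hrs : r < s) (hs : s < A.T)
    (hw : w' ∈ agreeing (A.newIdx s) w) (h : A.IsPlaced H U (A.toSeq w) u r) :
    A.IsPlaced H U (A.toSeq w') u r := by
  have hr : r < A.T - 1 := by omega
  by_cases hhost : A.IsHostEdge r
  swap
  · refine ⟨fun h => absurd h hhost, ?_⟩
    simp only [newPos_of_not_isHostEdge hhost, notMem_empty, false_imp_iff, implies_true]
  have hmem : ∀ y ∈ A.window r, (∀ i < A.d, y ≠ A.pivot i) → y ∉ A.newPos s := fun y =>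
    notMem_newPos_of_mem_window hrs hs hhost
  have hnew : ∀ y ∈ A.newPos r, A.toSeq w' y = A.toSeq w y := fun y hy =>
    toSeq_eq_of_mem_agreeing hw (lt_order_of_mem_newPos (by omega) hy) <| hmem y
      (mem_sdiff.1 (newPos_of_isHostEdge hr hhost ▸ hy)).1
      fun i _ hyi => pivot_notMem_newPos hr (hyi ▸ hy)
  have hwindow : (A.window r).image (A.exchange (A.toSeq w') u) =
      (A.window r).image (A.exchange (A.toSeq w) u) := image_congr fun y hy =>
    exchange_eq_of_mem_agreeing hw (lt_order_of_mem_window hr hy) (hmem y hy)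
  refine ⟨fun _ => ?_, fun y hy => hnew y hy ▸ h.2 y hy⟩
  rw [fixedPos_image_union_newPos_image _ hr hhost, hwindow,
    ← fixedPos_image_union_newPos_image _ hr hhost]
  exact h.1 hhost

variable [Fintype V]

lemma card_cleanEdges_le_card_filter_isPlaced (hH : ∀ e ∈ H, #e = A.k) (hs : s < A.T)
    (hhost : A.IsHostEdge s)
    (hcard : #((A.fixedPos s).image (A.exchange (A.toSeq w) u)) = #(A.fixedPos s)) :
    #(cleanEdges H U ((A.fixedPos s).image (A.exchange (A.toSeq w) u))) ≤
      #{w' ∈ agreeing (A.newIdx s) w | A.IsPlaced H U (A.toSeq w') u s} := by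
  set S := (A.fixedPos s).image (A.exchange (A.toSeq w) u)
  have hinj : Set.InjOn (· \ S) (cleanEdges H U S : Set (Finset V)) := fun e he e' he' h => by
    rw [← sdiff_union_of_subset (mem_filter.1 he).2.1, ← sdiff_union_of_subset
      (mem_filter.1 he').2.1]
    exact congrArg (· ∪ S) h
  have hsize : ∀ D ∈ (cleanEdges H U S).image (· \ S), #D = #(A.newIdx s) := fun D hD => by
    obtain ⟨e, he, rfl⟩ := mem_image.1 hD
    obtain ⟨he, hSe, -⟩ := mem_filter.1 he
    have := card_fixedPos_add_card_newPos hs hhost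
    rw [card_sdiff_of_subset hSe, hH e he, hcard, card_newIdx hs]
    omega
  rw [← card_image_of_injOn hinj]
  refine (card_le_card_filter_agreeing_image_mem _ w hsize).trans (card_le_card fun w' hw' => ?_)
  obtain ⟨hagree, hw'⟩ := mem_filter.1 hw'
  obtain ⟨e, he, hew'⟩ := mem_image.1 hw'
  obtain ⟨he, hSe, hU⟩ := mem_filter.1 he
  rw [newIdx, image_filter_val_mem (fun y => lt_order_of_mem_newPos hs) (eq_toSeq_val w')] at hew'
  have hfixed : (A.fixedPos s).image (A.exchange (A.toSeq w') u) = S := image_congr fun y hy =>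
    exchange_eq_of_mem_agreeing hagree (lt_order_of_mem_fixedPos hs hy)
      (notMem_newPos_of_mem_fixedPos hs hy)
  refine mem_filter.2 ⟨hagree, fun _ => ?_, fun y hy => ?_⟩
  · rwa [hfixed, ← hew', union_sdiff_of_subset hSe]
  · exact disjoint_left.1 hU (hew' ▸ mem_image_of_mem _ hy)

variable {c : ℝ}

lemma mul_pow_le_card_filter_isPlaced (hH : ∀ e ∈ H, #e = A.k) (hc : c ≤ 1)
    (hδ : ∀ S, #S = A.l → ∀ e ∈ H, S ⊆ e →
      c * (Fintype.card V : ℝ) ^ A.d ≤ #(cleanEdges H U S))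
    (hu : ∀ i < A.d, c * (Fintype.card V : ℝ) ^ (A.k - 1) ≤ #(cleanEdges H U {u i}))
    (hs : s < A.T) (hw : ∀ r < s, A.IsPlaced H U (A.toSeq w) u r) :
    c * (Fintype.card V : ℝ) ^ #(A.newIdx s) ≤
      #{w' ∈ agreeing (A.newIdx s) w | A.IsPlaced H U (A.toSeq w') u s} := by
  by_cases hhost : A.IsHostEdge s
  swap
  · have hnew := newPos_of_not_isHostEdge hhost
    rw [filter_true_of_mem fun w' _ => ⟨fun h => absurd h hhost, fun y hy =>
      absurd hy (hnew ▸ notMem_empty y)⟩, card_agreeing, Nat.cast_pow]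
    exact mul_le_of_le_one_left (by positivity) hc
  have hcard := card_fixedPos_add_card_newPos hs hhost
  rw [card_newIdx hs]
  by_cases hmod : s = A.T - 1 ∨ s % A.t ≠ 0
  · obtain ⟨r, hrs, hr, hr_host, hsub, hl⟩ := exists_fixedPos_subset_window hs hhost hmod
    obtain ⟨hmem, hS⟩ := card_image_fixedPos hH hr hr_host hsub (hw r hrs)
    rw [show #(A.newPos s) = A.d by have := A.k_eq; omega]
    exact (hδ _ (hS.trans hl) _ hmem (image_subset_image hsub)).trans <|
      Nat.cast_le.2 (card_cleanEdges_le_card_filter_isPlaced hH hs hhost hS)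
  · push Not at hmod
    have hfixed := fixedPos_of_mod_eq_zero (show s < A.T - 1 by omega) hmod.2
    have hS := card_cleanEdges_le_card_filter_isPlaced (U := U) (u := u) (w := w) hH hs hhost
      (by rw [hfixed, image_singleton, card_singleton, card_singleton])
    rw [hfixed, card_singleton] at hcard
    rw [hfixed, image_singleton, A.exchange_pivot _ _ (div_t_lt_d hs)] at hS
    rw [show #(A.newPos s) = A.k - 1 by omega]
    exact (hu _ (div_t_lt_d hs)).trans (Nat.cast_le.2 hS)

end Placing

end AbsorberShape

namespace AbsorberShape

section CandidateCounting

lemma exists_image_range_eq {V : Type*} [DecidableEq V] {d : ℕ} (hd : 0 < d) {W : Finset V}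
    (hW : #W = d) : ∃ u : ℕ → V, (range d).image u = W := by
  have : NeZero d := ⟨hd.ne'⟩
  refine ⟨fun i => (W.equivFinOfCardEq hW).symm (Fin.ofNat d i), ?_⟩
  ext v
  refine mem_image.trans ⟨fun ⟨i, _, hi⟩ => hi ▸ Subtype.prop _, fun hv => ?_⟩
  refine ⟨W.equivFinOfCardEq hW ⟨v, hv⟩, mem_range.2 (Fin.is_lt _), ?_⟩
  rw [Fin.ofNat_val_eq_self, Equiv.symm_apply_apply]

variable {A : AbsorberShape} {V : Type*} [Fintype V] [DecidableEq V] {H : Finset (Finset V)}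
  {U : Finset V}

lemma pow_mul_pow_le_card_filter_isHostLayout [Nonempty V] {u : ℕ → V} {c : ℝ} (hc₀ : 0 ≤ c)
    (hc₁ : c ≤ 1) (hH : ∀ e ∈ H, #e = A.k) (hU : 2 * #U ≤ Fintype.card V)
    (hδ : ∀ S, #S = A.l → ∀ e ∈ H, S ⊆ e →
      c * (Fintype.card V : ℝ) ^ A.d ≤ #(cleanEdges H U S))
    (hu : ∀ i < A.d, c * (Fintype.card V : ℝ) ^ (A.k - 1) ≤ #(cleanEdges H U {u i})) :
    c ^ A.T * ((Fintype.card V : ℝ) / 2) ^ A.order ≤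
      #{w : Fin A.order → V | (∀ y, w y ∉ U) ∧ A.IsHostLayout H (A.toSeq w) u} := by
  set Y : Finset (Fin A.order) := {y | ∀ s < A.T, y ∉ A.newIdx s}
  set X : Finset (Fin A.order → V) := {w | ∀ y ∈ Y, w y ∈ Uᶜ}
  have hX : ((Fintype.card V : ℝ) / 2) ^ A.order ≤ #X := by
    have hUc : (Fintype.card V : ℝ) / 2 ≤ #Uᶜ := by
      have h := card_compl_add_card U
      rw [div_le_iff₀ two_pos]
      exact_mod_cast (show Fintype.card V ≤ #Uᶜ * 2 by omega)
    have hY : #Y ≤ A.order := (card_le_univ Y).trans_eq (Fintype.card_fin _)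
    calc ((Fintype.card V : ℝ) / 2) ^ A.order
        = ((Fintype.card V : ℝ) / 2) ^ #Y * ((Fintype.card V : ℝ) / 2) ^ (A.order - #Y) := by
          rw [← pow_add, Nat.add_sub_cancel' hY]
      _ ≤ (#Uᶜ : ℝ) ^ #Y * (Fintype.card V : ℝ) ^ (A.order - #Y) := by
          gcongr
          exact half_le_self (Nat.cast_nonneg _)
      _ = #X := by
          simp only [X, card_filter_forall_mem, Fintype.card_fin, Nat.cast_mul, Nat.cast_pow]
  have hXagree : ∀ s < A.T, ∀ w ∈ X, agreeing (A.newIdx s) w ⊆ X := fun s hs w hw w' hw' => by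
    refine mem_filter.2 ⟨mem_univ _, fun y hy => ?_⟩
    rw [mem_agreeing.1 hw' y ((mem_filter.1 hy).2 s hs)]
    exact (mem_filter.1 hw).2 y hy
  refine (mul_le_mul_of_nonneg_left hX (by positivity)).trans <|
    (pow_mul_card_le_card_filter_forall_lt (B := fun s w => A.IsPlaced H U (A.toSeq w) u s) hc₀
      hXagree (fun s hs r hrs w w' hw' => IsPlaced.of_mem_agreeing hrs hs hw')
      fun s hs w hw => mul_pow_le_card_filter_isPlaced hH hc₁ hδ hu hs hw).trans <|
    Nat.cast_le.2 <| card_le_card fun w hw => ?_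
  obtain ⟨hwX, hw⟩ := mem_filter.1 hw
  refine mem_filter.2 ⟨mem_univ _, fun y => ?_, isHostLayout_of_isPlaced hw⟩
  by_cases hy : ∀ s < A.T, y ∉ A.newIdx s
  · exact mem_compl.1 ((mem_filter.1 hwX).2 y (mem_filter.2 ⟨mem_univ _, hy⟩))
  · push Not at hy
    obtain ⟨s, hs, hy⟩ := hy
    rw [eq_toSeq_val w]
    exact (hw s hs).2 y (mem_filter.1 hy).2

lemma le_one_of_degree_dichotomy {d l : ℕ} {η : ℝ} (hH : ∀ e ∈ H, #e = d + l)
    (hdeg : ∀ S, #S = l →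
      #{e ∈ H | S ⊆ e} = 0 ∨ η * (Fintype.card V : ℝ) ^ d ≤ #{e ∈ H | S ⊆ e})
    [Nonempty V] (hne : H.Nonempty) : η ≤ 1 := by
  obtain ⟨e, he⟩ := hne
  obtain ⟨S, hSe, hS⟩ := exists_subset_card_eq (show l ≤ #e by rw [hH e he]; omega)
  have hη := (hdeg S hS).resolve_left (card_pos.2 ⟨e, mem_filter.2 ⟨he, hSe⟩⟩).ne'
  have hle := card_filter_subset_le hH S
  rw [hS, Nat.add_sub_cancel] at hle
  have hN : (0 : ℝ) < (Fintype.card V : ℝ) ^ d :=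
    pow_pos (Nat.cast_pos.2 Fintype.card_pos) _
  exact (mul_le_iff_le_one_left hN).1 (hη.trans (by exact_mod_cast hle))

variable (A) in
/-- A lower bound for the proportion of the choices that are admissible in each step of the
construction of an absorber candidate. -/
noncomputable def stepDensity (η α : ℝ) : ℝ :=
  min 1 (min (2 * η / 3) ((2 * η / 3 / A.k.choose A.l) ^ A.k * α))

variable (A) in
/-- A lower bound for the density of the absorber candidates, before the tuples that are not
injective or that meet the absorbed set are removed. -/
noncomputable def density (η α : ℝ) : ℝ := A.stepDensity η α ^ A.T / 2 ^ A.order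

variable {η α : ℝ}

lemma stepDensity_pos (hη : 0 < η) (hα : 0 < α) : 0 < A.stepDensity η α := by
  have : 0 < A.k.choose A.l := Nat.choose_pos (by rw [k]; omega)
  unfold stepDensity
  positivity

lemma density_pos (hη : 0 < η) (hα : 0 < α) : 0 < A.density η α :=
  div_pos (pow_pos (stepDensity_pos hη hα) _) (by positivity)

lemma density_le_one (hη : 0 < η) (hα : 0 < α) : A.density η α ≤ 1 :=
  div_le_one_of_le₀ ((pow_le_one₀ (stepDensity_pos hη hα).le (min_le_left _ _)).trans
    (one_le_pow₀ one_le_two)) (by positivity)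

lemma density_mul_pow_le_card_filter_isHostLayout [Nonempty V] {u : ℕ → V} (hη : 0 < η)
    (hα : 0 < α) (hH : ∀ e ∈ H, #e = A.k) (hU : (#U : ℝ) ≤ η * Fintype.card V / 3)
    (hdeg : ∀ S, #S = A.l →
      #{e ∈ H | S ⊆ e} = 0 ∨ η * (Fintype.card V : ℝ) ^ A.d ≤ #{e ∈ H | S ⊆ e})
    (hu : ∀ i < A.d, α * (Fintype.card V : ℝ) ^ (A.k - 1) ≤ #{e ∈ H | u i ∈ e}) :
    A.density η α * (Fintype.card V : ℝ) ^ A.order ≤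
      #{w : Fin A.order → V | (∀ y, w y ∉ U) ∧ A.IsHostLayout H (A.toSeq w) u} := by
  have hclean : ∀ S, #S = A.l → ∀ e ∈ H, S ⊆ e →
      2 * η / 3 * (Fintype.card V : ℝ) ^ A.d ≤ #(cleanEdges H U S) := fun S hS e he hSe =>
    le_card_cleanEdges hH A.d_pos hS hU <| (hdeg S hS).resolve_left
      (card_pos.2 ⟨e, mem_filter.2 ⟨he, hSe⟩⟩).ne'
  have hN : (0 : ℝ) < Fintype.card V := Nat.cast_pos.2 Fintype.card_pos
  have hne : H.Nonempty := by
    have hpos : 0 < #{e ∈ H | u 0 ∈ e} :=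
      Nat.cast_pos.1 ((mul_pos hα (pow_pos hN _)).trans_le (hu 0 A.d_pos))
    exact (card_pos.1 hpos).mono (filter_subset _ _)
  have hU' : 2 * #U ≤ Fintype.card V := by
    have := mul_le_mul_of_nonneg_right (le_one_of_degree_dichotomy hH hdeg hne) hN.le
    have : 2 * (#U : ℝ) ≤ Fintype.card V := by linarith
    exact_mod_cast this
  have hu' : ∀ i < A.d,
      A.stepDensity η α * (Fintype.card V : ℝ) ^ (A.k - 1) ≤ #(cleanEdges H U {u i}) :=
    fun i hi => calc
      A.stepDensity η α * (Fintype.card V : ℝ) ^ (A.k - 1)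
        ≤ (2 * η / 3 / A.k.choose A.l) ^ A.k * α * (Fintype.card V : ℝ) ^ (A.k - 1) := by
          gcongr
          exact (min_le_right _ _).trans (min_le_right _ _)
      _ ≤ (2 * η / 3 / A.k.choose A.l) ^ A.k * #{e ∈ H | u i ∈ e} := by
          rw [mul_assoc]
          gcongr
          exact hu i hi
      _ ≤ #(cleanEdges H U {u i}) :=
          mul_card_filter_mem_le_card_cleanEdges hH hclean A.d_pos A.l_pos (by positivity) _
  have hclean' : ∀ S, #S = A.l → ∀ e ∈ H, S ⊆ e →
      A.stepDensity η α * (Fintype.card V : ℝ) ^ A.d ≤ #(cleanEdges H U S) :=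
    fun S hS e he hSe => (mul_le_mul_of_nonneg_right
      ((min_le_right _ _).trans (min_le_left _ _)) (by positivity)).trans (hclean S hS e he hSe)
  have hcount := pow_mul_pow_le_card_filter_isHostLayout (stepDensity_pos hη hα).le
    (min_le_left _ _) hH hU' hclean' hu'
  rwa [div_pow, mul_div_left_comm, mul_comm, ← density] at hcount

lemma card_le_card_absorberCandidates_add {W : Finset V} {u : ℕ → V}
    (hu : (range A.d).image u = W) :
    #{w : Fin A.order → V | (∀ y, w y ∉ U) ∧ A.IsHostLayout H (A.toSeq w) u} ≤
      #(A.absorberCandidates H U W) +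
        (A.order ^ 2 + A.order * #W) * Fintype.card V ^ (A.order - 1) := by
  have hsub : ({w : Fin A.order → V | (∀ y, w y ∉ U) ∧ A.IsHostLayout H (A.toSeq w) u} :
      Finset (Fin A.order → V)) ⊆ A.absorberCandidates H U W ∪
        ((univ.filter fun w : Fin A.order → V => ¬ Function.Injective w) ∪
          univ.filter fun w : Fin A.order → V => ∃ y, w y ∈ W) := fun w hw => by
    obtain ⟨hwU, hw⟩ := (mem_filter.1 hw).2
    simp only [mem_union, mem_filter, mem_univ, true_and, absorberCandidates]
    by_cases hinj : Function.Injective w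
    · by_cases hwW : ∃ y, w y ∈ W
      · exact Or.inr (Or.inr hwW)
      · exact Or.inl ⟨hinj, hwU, not_exists.1 hwW, u, hu, hw⟩
    · exact Or.inr (Or.inl hinj)
  have hinj := card_filter_not_injective_le (Fin A.order) V
  have hW := card_filter_exists_mem_le (β := Fin A.order) W
  rw [Fintype.card_fin] at hinj hW
  refine (card_le_card hsub).trans <| (card_union_le _ _).trans <|
    Nat.add_le_add_left ((card_union_le _ _).trans ((add_le_add hinj hW).trans_eq ?_)) _
  ring

lemma half_density_mul_pow_le_card_absorberCandidates [Nonempty V] {W : Finset V} (hη : 0 < η)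
    (hα : 0 < α) (hN : 2 * ((A.order : ℝ) ^ 2 + A.order * A.d) ≤ A.density η α * Fintype.card V)
    (hH : ∀ e ∈ H, #e = A.k) (hU : (#U : ℝ) ≤ η * Fintype.card V / 3)
    (hdeg : ∀ S, #S = A.l →
      #{e ∈ H | S ⊆ e} = 0 ∨ η * (Fintype.card V : ℝ) ^ A.d ≤ #{e ∈ H | S ⊆ e})
    (hW : #W = A.d) (hWdeg : ∀ v ∈ W, α * (Fintype.card V : ℝ) ^ (A.k - 1) ≤ #{e ∈ H | v ∈ e}) :
    A.density η α / 2 * (Fintype.card V : ℝ) ^ A.order ≤ #(A.absorberCandidates H U W) := by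
  obtain ⟨u, hu⟩ := exists_image_range_eq A.d_pos hW
  have hcount := density_mul_pow_le_card_filter_isHostLayout hη hα hH hU hdeg fun i hi =>
    hWdeg (u i) (hu ▸ mem_image_of_mem u (mem_range.2 hi))
  have hle := Nat.cast_le (α := ℝ).2 (card_le_card_absorberCandidates_add (A := A) (U := U)
    (H := H) hu)
  push_cast at hle
  rw [hW] at hle
  have hpow : (Fintype.card V : ℝ) ^ A.order =
      Fintype.card V * (Fintype.card V : ℝ) ^ (A.order - 1) := by
    rw [← pow_succ', Nat.sub_add_cancel A.order_pos]
  have := mul_le_mul_of_nonneg_right hN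
    (pow_nonneg (Nat.cast_nonneg (Fintype.card V)) (A.order - 1))
  rw [hpow] at hcount ⊢
  linarith

end CandidateCounting

end AbsorberShape

section RandomHypergraph

variable {n k : ℕ} {p : ℝ}

lemma gProb_eq_randExpect (n k : ℕ) (p : ℝ) (A : Finset (Finset (Fin n)) → Prop) :
    gProb n k p A = randExpect (kSets n k) p (fun E => if A E then 1 else 0) := by
  rw [gProb, randExpect_apply, sum_filter]
  exact sum_congr rfl fun E _ => by rw [mul_ite, mul_one, mul_zero]

lemma gProb_mono (hp0 : 0 ≤ p) (hp1 : p ≤ 1) {A B : Finset (Finset (Fin n)) → Prop}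
    (hAB : ∀ E ⊆ kSets n k, A E → B E) : gProb n k p A ≤ gProb n k p B := by
  rw [gProb_eq_randExpect, gProb_eq_randExpect]
  refine randExpect_mono hp0 hp1 fun E hE => ?_
  by_cases hA : A E
  · rw [if_pos hA, if_pos (hAB E hE hA)]
  · rw [if_neg hA]
    split_ifs <;> norm_num

lemma gProb_eq_one (p : ℝ) {A : Finset (Finset (Fin n)) → Prop} (hA : ∀ E, A E) :
    gProb n k p A = 1 := by
  simp only [gProb_eq_randExpect, hA, if_true, randExpect_const]

lemma one_sub_le_gProb (hp0 : 0 ≤ p) (hp1 : p ≤ 1) {A : Finset (Finset (Fin n)) → Prop}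
    {f : Finset (Finset (Fin n)) → ℝ} (hf0 : ∀ E, 0 ≤ f E) (hf : ∀ E, ¬ A E → 1 ≤ f E) :
    1 - randExpect (kSets n k) p f ≤ gProb n k p A := by
  rw [gProb_eq_randExpect, sub_le_iff_le_add, ← map_add]
  refine (randExpect_const (kSets n k) p 1).ge.trans (randExpect_mono hp0 hp1 fun E _ => ?_)
  by_cases hA : A E
  · simpa [hA] using hf0 E
  · simpa [hA] using hf E hA

lemma one_sub_card_mul_le_gProb_forall_exists {ι J : Type*} (hp0 : 0 ≤ p) (hp1 : p ≤ 1)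
    {I : Finset J} {Λ : J → Finset ι} {R : ι → Finset (Finset (Fin n))} {z : ℝ}
    (hz : ∀ i ∈ I, randExpect (kSets n k) p (avoidInd R (Λ i)) ≤ z) :
    1 - #I * z ≤ gProb n k p fun E => ∀ i ∈ I, ∃ w ∈ Λ i, R w ⊆ E := by
  have hsum : randExpect (kSets n k) p (∑ i ∈ I, avoidInd R (Λ i)) ≤ #I * z := by
    rw [map_sum, ← nsmul_eq_mul]
    exact sum_le_card_nsmul _ _ _ hz
  refine (sub_le_sub_left hsum 1).trans (one_sub_le_gProb hp0 hp1 (fun E => ?_) fun E hE => ?_)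
  · rw [Finset.sum_apply]
    exact sum_nonneg fun i _ => avoidInd_nonneg R _ E
  · push Not at hE
    obtain ⟨i, hi, hE⟩ := hE
    rw [Finset.sum_apply, ← avoidInd_eq_one R hE]
    exact single_le_sum (f := fun i => avoidInd R (Λ i) E) (fun i _ => avoidInd_nonneg R _ E) hi

lemma card_filter_card_lt_le (ι : Type*) [Fintype ι] [Nonempty ι] (r : ℕ) :
    #{Λ : Finset ι | #Λ < r} ≤ r * Fintype.card ι ^ r := by
  have hsub : ({Λ : Finset ι | #Λ < r} : Finset (Finset ι)) ⊆
      (range r).biUnion fun j => univ.powersetCard j := fun Λ hΛ =>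
    mem_biUnion.2 ⟨#Λ, mem_range.2 (mem_filter.1 hΛ).2,
      mem_powersetCard.2 ⟨subset_univ _, rfl⟩⟩
  refine (card_le_card hsub).trans <| (card_biUnion_le_card_mul _ _ (Fintype.card ι ^ r)
    fun j hj => ?_).trans_eq (by rw [card_range])
  rw [card_powersetCard, card_univ]
  exact (Nat.choose_le_pow _ _).trans (Nat.pow_le_pow_right Fintype.card_pos (mem_range.1 hj).le)

variable {β κ : Type*} [DecidableEq β] [Fintype β]

lemma half_mul_pow_le_card_heavyElements_filter_notMem {V : Type*} [DecidableEq V]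
    [Fintype V] [Nonempty β] {𝒲 : Finset κ} (h𝒲 : 𝒲.Nonempty) {L : κ → Finset (β → V)} {θ : ℝ}
    (hθ : 0 ≤ θ)
    (hL : ∀ W ∈ 𝒲, 2 * θ * (Fintype.card V : ℝ) ^ Fintype.card β ≤ #(L W)) (Λ : Finset (β → V))
    {T : Finset V} (hT : (#T : ℝ) ≤ θ * Fintype.card V / (2 * Fintype.card β)) :
    θ / 2 * (Fintype.card V : ℝ) ^ Fintype.card β ≤
      #{w ∈ heavyElements 𝒲 L θ Λ | ∀ m, w m ∉ T} := by
  have hb : 0 < Fintype.card β := Fintype.card_pos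
  have hheavy : θ * (Fintype.card V : ℝ) ^ Fintype.card β ≤ #(heavyElements 𝒲 L θ Λ) := by
    have hcard : (Fintype.card (β → V) : ℝ) = (Fintype.card V : ℝ) ^ Fintype.card β := by
      rw [Fintype.card_fun, Nat.cast_pow]
    rw [← hcard] at hL ⊢
    exact le_card_heavyElements h𝒲 hθ hL Λ
  have hmeet : (#{w : β → V | ∃ y, w y ∈ T} : ℝ) ≤
      θ / 2 * (Fintype.card V : ℝ) ^ Fintype.card β := by
    calc (#{w : β → V | ∃ y, w y ∈ T} : ℝ)
        ≤ Fintype.card β * (#T * (Fintype.card V : ℝ) ^ (Fintype.card β - 1)) :=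
          mod_cast card_filter_exists_mem_le T
      _ ≤ Fintype.card β * (θ * Fintype.card V / (2 * Fintype.card β) *
            (Fintype.card V : ℝ) ^ (Fintype.card β - 1)) := by gcongr
      _ = θ / 2 * (Fintype.card V : ℝ) ^ Fintype.card β := by
          rw [← mul_pow_sub_one hb.ne' (Fintype.card V : ℝ)]
          field_simp
  have hsub : heavyElements 𝒲 L θ Λ ⊆ {w ∈ heavyElements 𝒲 L θ Λ | ∀ m, w m ∉ T} ∪
      univ.filter fun w : β → V => ∃ y, w y ∈ T := fun w hw => by
    by_cases h : ∃ y, w y ∈ T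
    · exact mem_union_right _ (mem_filter.2 ⟨mem_univ _, h⟩)
    · exact mem_union_left _ (mem_filter.2 ⟨hw, not_exists.1 h⟩)
  have hcard : (#(heavyElements 𝒲 L θ Λ) : ℝ) ≤
      #{w ∈ heavyElements 𝒲 L θ Λ | ∀ m, w m ∉ T} + #{w : β → V | ∃ y, w y ∈ T} :=
    mod_cast (card_le_card hsub).trans (card_union_le _ _)
  linarith

/-- Union bound over the set `T` of forbidden vertices and the previous selection `Λ`. -/
lemma one_sub_le_gProb_forall_exists_mem_heavyElements [NeZero n] [Nonempty β]
    {𝓕 : Finset (Finset β)} (h𝓕 : 𝓕.Nonempty) (hk : ∀ f ∈ 𝓕, #f = k) (hp0 : 0 < p) (hp1 : p ≤ 1)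
    {Φ : ℝ} (hΦ0 : 0 < Φ) (hΦ : ∀ K ⊆ 𝓕, K.Nonempty → Φ ≤ (n : ℝ) ^ #(K.biUnion id) * p ^ #K)
    {𝒲 : Finset κ} (h𝒲 : 𝒲.Nonempty) {L : κ → Finset (β → Fin n)} {θ : ℝ} (hθ : 0 < θ)
    (hinj : ∀ W ∈ 𝒲, ∀ w ∈ L W, Function.Injective w)
    (hL : ∀ W ∈ 𝒲, 2 * θ * (n : ℝ) ^ Fintype.card β ≤ #(L W)) (r : ℕ) :
    1 - 2 ^ n * (r * ((n : ℝ) ^ Fintype.card β) ^ r) * Real.exp (-(jansonRate 𝓕 (θ / 2) * Φ)) ≤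
      gProb n k p fun E => ∀ T : Finset (Fin n), (#T : ℝ) ≤ θ * n / (2 * Fintype.card β) →
        ∀ Λ : Finset (β → Fin n), #Λ < r →
          ∃ w ∈ heavyElements 𝒲 L θ Λ, copyEdges 𝓕 w ⊆ E ∧ ∀ m, w m ∉ T := by
  set I : Finset (Finset (Fin n) × Finset (β → Fin n)) :=
    univ.filter (fun T => (#T : ℝ) ≤ θ * n / (2 * Fintype.card β)) ×ˢ univ.filter (#· < r)
  have hI : (#I : ℝ) ≤ 2 ^ n * (r * ((n : ℝ) ^ Fintype.card β) ^ r) := by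
    have hT := (card_filter_le univ fun T : Finset (Fin n) =>
      (#T : ℝ) ≤ θ * n / (2 * Fintype.card β)).trans_eq (by simp : _ = 2 ^ n)
    have hΛ := card_filter_card_lt_le (β → Fin n) r
    simp only [Fintype.card_fun, Fintype.card_fin] at hΛ
    rw [card_product]
    exact_mod_cast Nat.mul_le_mul hT hΛ
  have hjanson : ∀ i ∈ I, randExpect (kSets n k) p (avoidInd (copyEdges 𝓕)
      {w ∈ heavyElements 𝒲 L θ i.2 | ∀ m, w m ∉ i.1}) ≤
        Real.exp (-(jansonRate 𝓕 (θ / 2) * Φ)) := fun i hi => by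
    have hT := (mem_filter.1 (mem_product.1 hi).1).2
    have hwinj : ∀ w ∈ heavyElements 𝒲 L θ i.2 |>.filter fun w => ∀ m, w m ∉ i.1,
        Function.Injective w := fun w hw => by
      obtain ⟨W, hW, hwW⟩ := exists_mem_of_mem_heavyElements h𝒲 hθ (mem_filter.1 hw).1
      exact hinj W hW w hwW
    refine randExpect_avoidInd_copyEdges_le_exp h𝓕 hp0 hp1 hΦ0 (by simpa using hΦ) hwinj
      (fun w hw e he => ?_) (half_pos hθ) ?_
    · obtain ⟨f, hf, rfl⟩ := mem_image.1 he
      exact mem_powersetCard.2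
        ⟨subset_univ _, (card_image_of_injective _ (hwinj w hw)).trans (hk f hf)⟩
    · exact half_mul_pow_le_card_heavyElements_filter_notMem h𝒲 hθ.le (by simpa using hL) i.2
        (by simpa using hT)
  refine le_trans ?_ ((one_sub_card_mul_le_gProb_forall_exists hp0.le hp1 hjanson).trans
    (gProb_mono hp0.le hp1 fun E _ hE T hT Λ hΛ => ?_))
  · gcongr
  · obtain ⟨w, hw, hwE⟩ := hE (T, Λ)
      (mem_product.2 ⟨mem_filter.2 ⟨mem_univ _, hT⟩, mem_filter.2 ⟨mem_univ _, hΛ⟩⟩)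
    exact ⟨w, (mem_filter.1 hw).1, hwE, (mem_filter.1 hw).2⟩

end RandomHypergraph

section Asymptotics

open Filter Real

lemma eventually_mul_log_add_mul_le (K b : ℝ) {a : ℝ} (ha : 0 < a) :
    ∀ᶠ n : ℕ in atTop, (K * log n + 2) * (1 + b * log n) ≤ a * n := by
  have hlog (i : ℕ) : (fun x => log x ^ i) =o[atTop] id := isLittleO_pow_log_id_atTop
  have hprod : (fun x => (K * log x + 2) * (1 + b * log x)) =o[atTop] id :=
    (((hlog 2).const_mul_left (K * b)).add
      (((hlog 1).const_mul_left (K + 2 * b)).add ((hlog 0).const_mul_left 2))).congr_left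
        fun x => by ring
  filter_upwards [(hprod.comp_tendsto tendsto_natCast_atTop_atTop).def ha] with n hn
  simpa using (le_abs_self _).trans hn

lemma eventually_exists_mul_log_le {K b a : ℝ} (hK : 0 ≤ K) (hb : 0 ≤ b) (ha : 0 < a) :
    ∀ᶠ n : ℕ in atTop, ∃ r : ℕ, 0 < r ∧ K * log n ≤ r ∧ r * (1 + b * log n) ≤ a * n := by
  filter_upwards [eventually_mul_log_add_mul_le K b ha] with n hn
  have hlog : 0 ≤ log n := log_natCast_nonneg n
  refine ⟨⌈K * log n⌉₊ + 1, Nat.succ_pos _, ?_, le_trans ?_ hn⟩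
  · push_cast
    linarith [Nat.le_ceil (K * log n)]
  · gcongr
    push_cast
    linarith [Nat.ceil_lt_add_one (mul_nonneg hK hlog)]

lemma two_pow_mul_mul_exp_neg_le {n b r : ℕ} {x : ℝ} (hn : 0 < n)
    (hr : r * (1 + b * log n) ≤ n / 2) (hx : 2 * n ≤ x) :
    2 ^ n * (r * ((n : ℝ) ^ b) ^ r) * exp (-x) ≤ 2 / n := by
  have hn' : (0 : ℝ) < n := Nat.cast_pos.2 hn
  have htwo : (2 : ℝ) ^ n ≤ exp n := by
    rw [← exp_one_pow]
    exact pow_le_pow_left₀ zero_le_two exp_one_gt_two.le n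
  have hr' : (r : ℝ) ≤ exp r := by linarith [add_one_le_exp (r : ℝ)]
  have hpow : ((n : ℝ) ^ b) ^ r = exp (r * (b * log n)) := by
    rw [exp_nat_mul, exp_nat_mul, exp_log hn']
  calc 2 ^ n * (r * ((n : ℝ) ^ b) ^ r) * exp (-x)
      ≤ exp n * (exp r * exp (r * (b * log n))) * exp (-(2 * n)) := by
        rw [hpow]
        gcongr
    _ = exp (r * (1 + b * log n) - n) := by
        rw [← exp_add, ← exp_add, ← exp_add]
        ring_nf
    _ ≤ exp (-(n / 2)) := exp_le_exp.2 (by linarith)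
    _ ≤ ((n : ℝ) / 2)⁻¹ := by
        rw [exp_neg]
        gcongr
        linarith [add_one_le_exp ((n : ℝ) / 2)]
    _ = 2 / n := inv_div _ _

variable {N C p : ℝ} {d l j : ℕ}

lemma mul_le_pow_mul_pow_of_rpow_le {ε : ℝ} (hN : 1 ≤ N) (hC : C ^ 3 ≤ N) (hl : 2 ≤ l)
    (hj : j * ε ≤ l / 3) (hp : N ^ (-(d : ℝ) - ε) ≤ p) :
    C * N ≤ N ^ (j * d + l) * p ^ j := by
  have hN₀ : 0 < N := zero_lt_one.trans_le hN
  have hl' : (2 : ℝ) ≤ l := mod_cast hl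
  have hC' : C ≤ N ^ (1 / 3 : ℝ) := by
    refine le_of_pow_le_pow_left₀ three_ne_zero (by positivity) (hC.trans_eq ?_)
    rw [← rpow_natCast, ← rpow_mul hN₀.le]
    norm_num
  calc C * N ≤ N ^ (1 / 3 : ℝ) * N := by gcongr
    _ = N ^ (4 / 3 : ℝ) := by
        rw [← rpow_add_one hN₀.ne']
        norm_num
    _ ≤ N ^ (((j * d + l : ℕ) : ℝ) + (-(d : ℝ) - ε) * j) := by
        refine rpow_le_rpow_of_exponent_le hN ?_
        push_cast
        linarith
    _ = N ^ (j * d + l) * (N ^ (-(d : ℝ) - ε)) ^ j := by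
        rw [rpow_add hN₀, rpow_natCast, rpow_mul hN₀.le, rpow_natCast]
    _ ≤ N ^ (j * d + l) * p ^ j := by gcongr

lemma mul_le_pow_mul_pow_of_mul_rpow_le (hN : 0 < N) (hC : 1 ≤ C) (hj : j ≠ 0)
    (hp : C * N ^ (-(d : ℝ)) ≤ p) : C * N ≤ N ^ (j * d + 1) * p ^ j := by
  have hp' : C ≤ N ^ d * p := by
    rw [rpow_neg hN.le, rpow_natCast, ← div_eq_mul_inv, div_le_iff₀ (by positivity)] at hp
    rwa [mul_comm]
  calc C * N ≤ C ^ j * N := by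
        gcongr
        exact le_self_pow₀ hC hj
    _ ≤ (N ^ d * p) ^ j * N := by gcongr
    _ = N ^ (j * d + 1) * p ^ j := by ring

end Asymptotics

lemma exists_absorberShape {d l t : ℕ} (hd : 0 < d) (hl : 0 < l)
    (ht : 3 * (d + l) - l - 2 ≤ t * d) :
    ∃ A : AbsorberShape, A.d = d ∧ A.l = l ∧ A.t = t := by
  set m := (d + l) / d
  set κ := (d + l + d - 1) / d
  have hm : m * d ≤ d + l := Nat.div_mul_le_self _ _
  have hm' : d + l < m * d + d := Nat.lt_div_mul_add hd
  have hκ : κ * d ≤ d + l + d - 1 := Nat.div_mul_le_self _ _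
  have hκ' : d + l + d - 1 < κ * d + d := Nat.lt_div_mul_add hd
  clear_value m κ
  have hκt : κ ≤ t ∧ (m ≤ t - κ ∨ d = 1 ∧ t - κ + 1 = m) := by
    rcases (show 1 ≤ d from hd).eq_or_lt with rfl | hd'
    · omega
    · have hlt : (κ + m) * d < (t + 1) * d := by
        rw [add_mul, add_mul]
        omega
      have := lt_of_mul_lt_mul_right hlt (Nat.zero_le d)
      omega
  exact ⟨⟨d, l, m, κ, t - κ, hd, hl, hm, hm', by omega, hκt.2⟩, rfl, rfl,
    Nat.sub_add_cancel hκt.1⟩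

/-- The family `𝒜` of ordered tuples consists of few vertex-disjoint `ℓ`-paths of length `a` of the
`k`-graph `G` outside of `U`, with ends in the shadow of `H`, and contains many absorbers of each
`(k - ℓ)`-subset of `V'`. -/
structure IsAbsorbingFamily {n b : ℕ} (k ℓ a : ℕ) (H G : Finset (Finset (Fin n)))
    (V' U : Finset (Fin n)) (β : ℝ) (𝒜 : Finset (Fin b → Fin n)) : Prop where
  card_le : (#𝒜 : ℝ) ≤ β * n
  spansPath : ∀ w ∈ 𝒜, SpansPath k ℓ a G w
  ends_mem : ∀ w ∈ 𝒜, firstEnd ℓ w ∈ shadowL ℓ H ∧ lastEnd ℓ w ∈ shadowL ℓ H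
  notMem : ∀ w ∈ 𝒜, ∀ m, w m ∉ U
  vertexDisjoint : ∀ w ∈ 𝒜, ∀ w' ∈ 𝒜, w ≠ w' → VertexDisjoint w w'
  le_card : ∀ W ⊆ V', #W = k - ℓ → β ^ 3 * n ≤ #{w ∈ 𝒜 | IsAbsorber k ℓ a G w W}

namespace AbsorberShape

variable {A : AbsorberShape} {n : ℕ}

section Selection

variable {H E : Finset (Finset (Fin n))} {V' U : Finset (Fin n)} {β : ℝ}

lemma isAbsorbingFamily_of_subset_absorberCandidates {𝒜 : Finset (Fin A.order → Fin n)}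
    (hcard : (#𝒜 : ℝ) ≤ β * n) (hdisj : (𝒜 : Set (Fin A.order → Fin n)).Pairwise VertexDisjoint)
    (h𝒜 : ∀ w ∈ 𝒜, (∃ W, w ∈ A.absorberCandidates H U W) ∧ copyEdges A.template w ⊆ E)
    (hcount : ∀ W ∈ V'.powersetCard A.d, β ^ 3 * n ≤ #(𝒜 ∩ A.absorberCandidates H U W)) :
    IsAbsorbingFamily A.k A.l (A.T - 1) H (H ∪ E) V' U β 𝒜 where
  card_le := hcard
  spansPath w hw :=
    let ⟨⟨_, hwW⟩, hE⟩ := h𝒜 w hw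
    spansPath_of_mem_absorberCandidates hwW hE
  ends_mem w hw :=
    let ⟨_, hwW⟩ := (h𝒜 w hw).1
    ⟨firstEnd_mem_shadowL hwW, lastEnd_mem_shadowL hwW⟩
  notMem w hw :=
    let ⟨_, hwW⟩ := (h𝒜 w hw).1
    (mem_filter.1 hwW).2.2.1
  vertexDisjoint w hw w' hw' := hdisj hw hw'
  le_card W hW hWcard := by
    rw [k_eq, Nat.add_sub_cancel] at hWcard
    refine (hcount W (mem_powersetCard.2 ⟨hW, hWcard⟩)).trans
      (Nat.cast_le.2 (card_le_card fun w hw => ?_))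
    obtain ⟨hw𝒜, hwW⟩ := mem_inter.1 hw
    exact mem_filter.2
      ⟨hw𝒜, isAbsorber_of_mem_absorberCandidates hWcard hwW (h𝒜 w hw𝒜).2⟩

lemma card_powersetCard_le_exp_mul_log (hn : 0 < n) (V' : Finset (Fin n)) (d : ℕ) :
    (#(V'.powersetCard d) : ℝ) ≤ Real.exp (d * Real.log n) := by
  rw [Real.exp_nat_mul, Real.exp_log (Nat.cast_pos.2 hn), card_powersetCard]
  exact_mod_cast (Nat.choose_le_pow _ _).trans
    (Nat.pow_le_pow_left ((card_le_univ V').trans_eq (Fintype.card_fin n)) d)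

lemma exists_isAbsorbingFamily {θ γ : ℝ} {r : ℕ} (hn : 0 < n) (hθ₀ : 0 < θ) (hθ₂ : θ ≤ 2)
    (hβ₀ : 0 < β) (hβθ : β ^ 2 ≤ θ / 8) (hβγ : β * n * A.order ≤ γ) (hr₀ : 0 < r)
    (hrlog : 4 * (A.d * Real.log n) ≤ θ * r) (hrβ : r ≤ β * n / 2)
    (h𝒲 : (V'.powersetCard A.d).Nonempty)
    (hE : ∀ T : Finset (Fin n), (#T : ℝ) ≤ γ → ∀ Λ : Finset (Fin A.order → Fin n), #Λ < r →
      ∃ w ∈ heavyElements (V'.powersetCard A.d) (A.absorberCandidates H U) θ Λ,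
        copyEdges A.template w ⊆ E ∧ ∀ m, w m ∉ T) :
    ∃ 𝒜 : Finset (Fin A.order → Fin n),
      IsAbsorbingFamily A.k A.l (A.T - 1) H (H ∪ E) V' U β 𝒜 := by
  have hr₀' : (0 : ℝ) < r := Nat.cast_pos.2 hr₀
  have hE' : ∀ T : Finset (Fin n), (#T : ℝ) ≤ γ → ∀ Λ : Finset (Fin A.order → Fin n), #Λ < r →
      ∃ w ∈ heavyElements (V'.powersetCard A.d) (A.absorberCandidates H U) θ Λ,
        ((∃ W, w ∈ A.absorberCandidates H U W) ∧ copyEdges A.template w ⊆ E) ∧ ∀ m, w m ∉ T :=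
    fun T hT Λ hΛ => by
      obtain ⟨w, hw, hwE, hwT⟩ := hE T hT Λ hΛ
      obtain ⟨W, -, hwW⟩ := exists_mem_of_mem_heavyElements h𝒲 hθ₀ hw
      exact ⟨w, hw, ⟨⟨W, hwW⟩, hwE⟩, hwT⟩
  set s := ⌊β * n / r⌋₊
  have hs : s * r ≤ β * n := (le_div_iff₀ hr₀').1 (Nat.floor_le (by positivity))
  have hs' : β * n / 2 ≤ s * r := by
    have := (div_lt_iff₀ hr₀').1 (Nat.lt_floor_add_one (β * n / r))
    linarith
  obtain ⟨𝒜, hcard, hdisj, h𝒜, hcount⟩ := exists_pairwise_vertexDisjoint_le_card_inter hθ₂ hE'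
    (card_powersetCard_le_exp_mul_log hn V' A.d) hrlog (s := s) <| by
      rw [Fintype.card_fin]
      exact (mul_le_mul_of_nonneg_right hs (Nat.cast_nonneg _)).trans hβγ
  refine ⟨𝒜, isAbsorbingFamily_of_subset_absorberCandidates ?_ hdisj h𝒜 fun W hW =>
    le_trans ?_ (hcount W hW)⟩
  · rw [hcard]
    exact_mod_cast hs
  · calc β ^ 3 * n = β ^ 2 * (β * n) := by ring
      _ ≤ θ / 8 * (β * n) := by gcongr
      _ = θ / 4 * (β * n / 2) := by ring
      _ ≤ θ / 4 * (s * r) := by gcongr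
      _ = s * (θ * r / 4) := by ring

lemma isAbsorbingFamily_empty {k ℓ a b : ℕ} {G : Finset (Finset (Fin n))} (hβ : 0 ≤ β)
    (hV' : ¬ (V'.powersetCard (k - ℓ)).Nonempty) :
    IsAbsorbingFamily k ℓ a H G V' U β (∅ : Finset (Fin b → Fin n)) where
  card_le := by
    rw [card_empty, Nat.cast_zero]
    positivity
  spansPath := by simp
  ends_mem := by simp
  notMem := by simp
  vertexDisjoint := by simp
  le_card W hW hWcard := (hV' ⟨W, mem_powersetCard.2 ⟨hW, hWcard⟩⟩).elim

end Selection

section Threshold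

variable {ε C p : ℝ}

variable (A) in
/-- The assumption on the edge probability `p` of the random `k`-graph on `n` vertices. -/
def AboveThreshold (ε C : ℝ) (n : ℕ) (p : ℝ) : Prop :=
  (2 ≤ A.l → (n : ℝ) ^ (-((A.k : ℝ) - A.l) - ε) ≤ p) ∧
    (A.l = 1 → C * (n : ℝ) ^ (-((A.k : ℝ) - 1)) ≤ p)

lemma AboveThreshold.pos (hp : A.AboveThreshold ε C n p) (hn : 0 < n) (hC : 0 < C) : 0 < p := by
  have hn' : (0 : ℝ) < n := Nat.cast_pos.2 hn
  rcases (show 1 ≤ A.l from A.l_pos).lt_or_eq with hl | hl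
  · exact (Real.rpow_pos_of_pos hn' _).trans_le (hp.1 hl)
  · exact (mul_pos hC (Real.rpow_pos_of_pos hn' _)).trans_le (hp.2 hl.symm)

lemma AboveThreshold.mul_le_pow_mul_pow (hp : A.AboveThreshold ε C n p) (hn : 0 < n) (hC : 1 ≤ C)
    (hCn : C ^ 3 ≤ n) (hε : 0 ≤ ε) (hεT : ε ≤ A.l / (3 * A.T)) {j : ℕ} (hj : j ≠ 0)
    (hjT : j ≤ A.T) : C * n ≤ (n : ℝ) ^ (j * A.d + A.l) * p ^ j := by
  have hk : (A.k : ℝ) = A.d + A.l := mod_cast A.k_eq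
  rcases (show 1 ≤ A.l from A.l_pos).lt_or_eq with hl | hl
  · have hT : (0 : ℝ) < A.T := Nat.cast_pos.2 (zero_lt_two.trans_le A.two_le_T)
    refine mul_le_pow_mul_pow_of_rpow_le (mod_cast hn) hCn hl ?_ (ε := ε) ?_
    · calc j * ε ≤ A.T * (A.l / (3 * A.T)) := by gcongr
        _ = A.l / 3 := by field_simp
    · simpa only [hk, add_sub_cancel_right] using hp.1 hl
  · have hp' := hp.2 hl.symm
    rw [hk, ← hl, Nat.cast_add_one, Nat.cast_zero, zero_add, add_sub_cancel_right] at hp'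
    rw [← hl]
    exact mul_le_pow_mul_pow_of_mul_rpow_le (Nat.cast_pos.2 hn) hC hj hp'

lemma AboveThreshold.mul_le_pow_card_biUnion_mul_pow (hp : A.AboveThreshold ε C n p)
    (hn : 0 < n) (hC : 1 ≤ C) (hCn : C ^ 3 ≤ n) (hε : 0 ≤ ε) (hεT : ε ≤ A.l / (3 * A.T)) :
    ∀ K ⊆ A.template, K.Nonempty → C * n ≤ (n : ℝ) ^ #(K.biUnion id) * p ^ #K :=
  fun K hK hK₀ => by
    have hp₀ := hp.pos hn (zero_lt_one.trans_le hC)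
    have hKT : #K ≤ A.T := (card_le_card hK).trans (A.card_template_le.trans (Nat.sub_le _ _))
    refine (hp.mul_le_pow_mul_pow hn hC hCn hε hεT (card_pos.2 hK₀).ne' hKT).trans ?_
    gcongr
    · exact mod_cast hn
    · exact A.card_mul_d_add_l_le_card_biUnion hK hK₀

end Threshold

section Conclusion

variable {η α β ε C p : ℝ}

variable (A) in
/-- The upper bound on the parameter `β` of an absorbing family. -/
noncomputable def betaBound (η α : ℝ) : ℝ :=
  min (A.density η α / (8 * (A.order : ℝ) ^ 2)) (min 1 (A.density η α / 32))

variable (A) in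
/-- The constant in the exponent of Janson's inequality for the heavy absorber candidates. -/
noncomputable def absorberRate (η α : ℝ) : ℝ := jansonRate A.template (A.density η α / 4 / 2)

lemma betaBound_pos (hη : 0 < η) (hα : 0 < α) : 0 < A.betaBound η α := by
  have hdensity := A.density_pos hη hα
  have horder := Nat.cast_pos (α := ℝ).2 A.order_pos
  unfold betaBound
  positivity

lemma absorberRate_pos (hη : 0 < η) (hα : 0 < α) : 0 < A.absorberRate η α :=
  jansonRate_pos _ (half_pos (div_pos (A.density_pos hη hα) four_pos))

lemma sq_le_of_le_betaBound (hβ₀ : 0 ≤ β) (hβ : β ≤ A.betaBound η α) :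
    β ^ 2 ≤ A.density η α / 4 / 8 := by
  obtain ⟨-, hβ₁, hβ₂⟩ := by simpa only [betaBound, le_min_iff] using hβ
  calc β ^ 2 ≤ β := pow_le_of_le_one hβ₀ hβ₁ two_ne_zero
    _ ≤ A.density η α / 4 / 8 := hβ₂.trans_eq (by ring)

lemma mul_order_le_of_le_betaBound (hβ : β ≤ A.betaBound η α) :
    β * n * A.order ≤ A.density η α / 4 * n / (2 * A.order) := by
  have horder := Nat.cast_pos (α := ℝ).2 A.order_pos
  calc β * n * A.order ≤ A.density η α / (8 * (A.order : ℝ) ^ 2) * n * A.order := by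
        gcongr
        exact hβ.trans (min_le_left _ _)
    _ = A.density η α / 4 * n / (2 * A.order) := by
        field_simp
        ring

variable {H : Finset (Finset (Fin n))} {V' U : Finset (Fin n)}

lemma one_sub_le_gProb_exists_isAbsorbingFamily (hη : 0 < η) (hα : 0 < α) (hβ₀ : 0 < β)
    (hβ : β ≤ A.betaBound η α) (hn : 0 < n)
    (hN : 2 * ((A.order : ℝ) ^ 2 + A.order * A.d) ≤ A.density η α * n)
    (hC : 1 ≤ C) (hCrate : 2 ≤ A.absorberRate η α * C) (hCn : C ^ 3 ≤ n)
    {r : ℕ} (hr₀ : 0 < r) (hrlog : 4 * (A.d * Real.log n) ≤ A.density η α / 4 * r)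
    (hrβ : r ≤ β * n / 2) (hrn : r * (1 + A.order * Real.log n) ≤ n / 2)
    (hε : 0 ≤ ε) (hεT : ε ≤ A.l / (3 * A.T)) (hU : (#U : ℝ) ≤ η * n / 3) (hH : H ⊆ kSets n A.k)
    (hV' : ∀ v ∈ V', α * (n : ℝ) ^ (A.k - 1) ≤ degOf H {v})
    (hdeg : ∀ S, #S = A.l → degOf H S = 0 ∨ η * (n : ℝ) ^ A.d ≤ degOf H S)
    (hp₁ : p ≤ 1) (hp : A.AboveThreshold ε C n p) :
    1 - 2 / n ≤ gProb n A.k p fun E => ∃ 𝒜 : Finset (Fin A.order → Fin n),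
      IsAbsorbingFamily A.k A.l (A.T - 1) H (H ∪ E) V' U β 𝒜 := by
  have hp₀ := hp.pos hn (zero_lt_one.trans_le hC)
  by_cases h𝒲 : (V'.powersetCard A.d).Nonempty
  swap
  · rw [gProb_eq_one p fun E => ⟨∅, isAbsorbingFamily_empty hβ₀.le
      (by rwa [k_eq, Nat.add_sub_cancel])⟩]
    exact sub_le_self 1 (by positivity)
  have : NeZero n := ⟨hn.ne'⟩
  have hθ : 0 < A.density η α / 4 := div_pos (A.density_pos hη hα) four_pos
  have hcount : ∀ W ∈ V'.powersetCard A.d,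
      2 * (A.density η α / 4) * (n : ℝ) ^ A.order ≤ #(A.absorberCandidates H U W) :=
    fun W hW => by
      obtain ⟨hWV', hWcard⟩ := mem_powersetCard.1 hW
      simp only [degOf, singleton_subset_iff] at hV' hdeg
      have := half_density_mul_pow_le_card_absorberCandidates (A := A) hη hα
        (by simpa using hN) (fun e he => (mem_powersetCard.1 (hH he)).2) (by simpa using hU)
        (by simpa using hdeg) hWcard (by simpa using fun v hv => hV' v (hWV' hv))
      rw [Fintype.card_fin] at this
      linarith
  have hprob := one_sub_le_gProb_forall_exists_mem_heavyElements
    (L := A.absorberCandidates H U) A.template_nonempty (fun _ => card_of_mem_template) hp₀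
    hp₁ (mul_pos (zero_lt_one.trans_le hC) (Nat.cast_pos.2 hn))
    (hp.mul_le_pow_card_biUnion_mul_pow hn hC hCn hε hεT) h𝒲 hθ
    (fun W _ w hw => (mem_filter.1 hw).2.1) (by simpa using hcount) r
  rw [Fintype.card_fin] at hprob
  have hfail := two_pow_mul_mul_exp_neg_le hn hrn (x := A.absorberRate η α * (C * n)) <| by
    rw [← mul_assoc]
    gcongr
  refine (sub_le_sub_left hfail 1).trans (hprob.trans (gProb_mono hp₀.le hp₁ fun E _ hE => ?_))
  exact exists_isAbsorbingFamily hn hθ (by linarith [A.density_le_one hη hα]) hβ₀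
    (sq_le_of_le_betaBound hβ₀.le hβ) (mul_order_le_of_le_betaBound hβ) hr₀ hrlog hrβ h𝒲 hE

lemma eventually_one_sub_le_gProb_exists_isAbsorbingFamily (hη : 0 < η) (hα : 0 < α)
    (hβ₀ : 0 < β) (hβ : β ≤ A.betaBound η α) (hC : 1 ≤ C) (hCrate : 2 / A.absorberRate η α ≤ C)
    (hε : 0 ≤ ε) (hεT : ε ≤ A.l / (3 * A.T)) {δ : ℝ} (hδ : 0 < δ) :
    ∀ᶠ n : ℕ in Filter.atTop, ∀ V' U : Finset (Fin n), (#U : ℝ) ≤ η * n / 3 →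
      ∀ H ⊆ kSets n A.k, (∀ v ∈ V', α * (n : ℝ) ^ (A.k - 1) ≤ degOf H {v}) →
      (∀ S, #S = A.l → degOf H S = 0 ∨ η * (n : ℝ) ^ A.d ≤ degOf H S) →
      ∀ p ≤ 1, A.AboveThreshold ε C n p →
        1 - δ ≤ gProb n A.k p fun E => ∃ 𝒜 : Finset (Fin A.order → Fin n),
          IsAbsorbingFamily A.k A.l (A.T - 1) H (H ∪ E) V' U β 𝒜 := by
  have hdensity := A.density_pos hη hα
  have hlarge (x : ℝ) : ∀ᶠ n : ℕ in Filter.atTop, x ≤ n :=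
    tendsto_natCast_atTop_atTop.eventually_ge_atTop x
  filter_upwards [Filter.eventually_gt_atTop 0, hlarge (2 / δ), hlarge (C ^ 3),
    hlarge (2 * ((A.order : ℝ) ^ 2 + A.order * A.d) / A.density η α),
    eventually_exists_mul_log_le (K := 4 * A.d / (A.density η α / 4)) (b := A.order)
      (a := min (1 / 2) (β / 2)) (by positivity) (by positivity) (by positivity)]
    with n hn hnδ hCn hN ⟨r, hr₀, hrlog, hrn⟩ V' U hU H hH hV' hdeg p hp₁ hp
  rw [div_mul_eq_mul_div, div_le_iff₀ (by positivity), mul_assoc, mul_comm (r : ℝ)] at hrlog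
  rw [min_mul_of_nonneg _ _ (Nat.cast_nonneg n), le_min_iff] at hrn
  have hr : (r : ℝ) ≤ r * (1 + A.order * Real.log n) := le_mul_of_one_le_right (Nat.cast_nonneg r)
    (le_add_of_nonneg_right (mul_nonneg (Nat.cast_nonneg _) (Real.log_natCast_nonneg n)))
  have hδn : 2 / (n : ℝ) ≤ δ := (div_le_comm₀ hδ (Nat.cast_pos.2 hn)).1 hnδ
  exact (sub_le_sub_left hδn 1).trans <| one_sub_le_gProb_exists_isAbsorbingFamily hη hα hβ₀ hβ hn
    ((div_le_iff₀' hdensity).1 hN) hC ((div_le_iff₀' (absorberRate_pos hη hα)).1 hCrate) hCn hr₀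
    hrlog (by linarith) (by linarith) hε hεT hU hH hV' hdeg hp₁ hp

end Conclusion

end AbsorberShape

/-- Lemma 3.4, the absorbing lemma. -/
theorem absorbing_lemma
    (k ℓ : ℕ) (hl1 : 1 ≤ ℓ) (hlk : ℓ < k)
    (t4 t5 : ℕ) (ht4 : t4 = ⌈((3 * k - ℓ - 2 : ℕ) : ℚ) / ((k : ℚ) - (ℓ : ℚ))⌉₊)
    (ht5 : t5 = t4 * (k - ℓ))
    (ε : ℝ) (hε0 : 0 < ε) (hε : ε ≤ (ℓ : ℝ) / (3 * (t5 : ℝ)))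
    (α η : ℝ) (hα : 0 < α) (hη : 0 < η) :
    ∃ β₀ : ℝ, 0 < β₀ ∧ ∀ β : ℝ, 0 < β → β ≤ β₀ →
    ∃ C₀ : ℕ, ∀ C : ℕ, C₀ ≤ C →
    ∀ δ : ℝ, 0 < δ → ∃ n₀ : ℕ, ∀ n : ℕ, n₀ ≤ n →
    ∀ V' U : Finset (Fin n), (U.card : ℝ) ≤ η * (n : ℝ) / 3 →
    ∀ H : Finset (Finset (Fin n)), H ⊆ kSets n k →
      (∀ v ∈ V', α * (n : ℝ) ^ (k - 1) ≤ (degOf H {v} : ℝ)) →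
      (∀ S : Finset (Fin n), S.card = ℓ →
        degOf H S = 0 ∨ η * (n : ℝ) ^ (k - ℓ) ≤ (degOf H S : ℝ)) →
    ∀ p : ℝ, 0 ≤ p → p ≤ 1 →
      ((2 ≤ ℓ → (n : ℝ) ^ (-((k : ℝ) - (ℓ : ℝ)) - ε) ≤ p) ∧
       (ℓ = 1 → (C : ℝ) * (n : ℝ) ^ (-((k : ℝ) - 1)) ≤ p)) →
      1 - δ ≤ gProb n k p (fun E =>
        ∃ 𝒜 : Finset (Fin ((t5 - 1) * (k - ℓ) + ℓ) → Fin n),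
          (𝒜.card : ℝ) ≤ β * (n : ℝ) ∧
          (∀ w ∈ 𝒜, SpansPath k ℓ (t5 - 1) (H ∪ E) w) ∧
          (∀ w ∈ 𝒜, firstEnd ℓ w ∈ shadowL ℓ H ∧ lastEnd ℓ w ∈ shadowL ℓ H) ∧
          (∀ w ∈ 𝒜, ∀ m, w m ∉ U) ∧
          (∀ w ∈ 𝒜, ∀ w' ∈ 𝒜, w ≠ w' → ∀ m m', w m ≠ w' m') ∧
          ∀ W : Finset (Fin n), W ⊆ V' → W.card = k - ℓ →
            β ^ 3 * (n : ℝ) ≤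
              ((𝒜.filter (fun w => IsAbsorber k ℓ (t5 - 1) (H ∪ E) w W)).card : ℝ)) := by
  obtain ⟨d, rfl⟩ := Nat.exists_eq_add_of_le' hlk.le
  have hd : 0 < d := Nat.pos_of_lt_add_left hlk
  have ht : 3 * (d + ℓ) - ℓ - 2 ≤ t4 * d := by
    rw [Nat.cast_add, add_sub_cancel_right] at ht4
    exact_mod_cast (div_le_iff₀ (Nat.cast_pos.2 hd)).1 (ht4 ▸ Nat.le_ceil _)
  rw [Nat.add_sub_cancel] at ht5 ⊢
  obtain ⟨A, rfl, rfl, rfl⟩ := exists_absorberShape hd hl1 ht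
  subst ht5
  refine ⟨A.betaBound η α, A.betaBound_pos hη hα, fun β hβ₀ hβ =>
    ⟨max 1 ⌈2 / A.absorberRate η α⌉₊, fun C hC δ hδ => ?_⟩⟩
  obtain ⟨hC₁, hCrate⟩ := max_le_iff.1 hC
  obtain ⟨n₀, hn₀⟩ := Filter.eventually_atTop.1 <|
    A.eventually_one_sub_le_gProb_exists_isAbsorbingFamily hη hα hβ₀ hβ (mod_cast hC₁)
      (Nat.ceil_le.1 hCrate) hε0.le hε hδ
  refine ⟨n₀, fun n hn V' U hU H hH hV' hdeg p hp₀ hp₁ hp =>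
    (hn₀ n hn V' U hU H hH hV' hdeg p hp₁ hp).trans
      (gProb_mono hp₀ hp₁ fun E _ ⟨𝒜, h𝒜⟩ => ⟨𝒜, h𝒜.card_le, h𝒜.spansPath, h𝒜.ends_mem,
        h𝒜.notMem, h𝒜.vertexDisjoint, fun W hW hWcard => ?_⟩)⟩
  exact h𝒜.le_card W hW (hWcard.trans (Nat.add_sub_cancel _ _).symm)
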